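/- Let α ∈ ℤ^{Q_0} and σ = ⟨α,·⟩. Then there are only finitely many isomorphism classes of σ-stable representations of Q if and only if α ∈ Cone(C) for some compatible subset C of Ψ(Q)_{≥−1}. -/

import Mathlib

set_option autoImplicit false

noncomputable section

open scoped BigOperators

/-! Basic setup for representations of a quiver with vertex set `V`, arrow set `A`,
tail map `t` and head map `h`, over a field `K`. -/

variable (K : Type) [Field K]
variable {V A : Type} [Fintype V] [DecidableEq V] [Fintype A]

/-- The Euler form of the quiver `(V, A, t, h)`. -/
def eulerForm {R : Type} [CommRing R] (t h : A → V) (x y : V → R) : R :=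
  ∑ i, x i * y i - ∑ a, x (t a) * y (h a)

def natZ (x : V → ℕ) : V → ℤ := fun i => (x i : ℤ)
def intQ (x : V → ℤ) : V → ℚ := fun i => (x i : ℚ)
def natQ (x : V → ℕ) : V → ℚ := fun i => (x i : ℚ)

/-- The weight `⟨α,·⟩`. -/
def weightL (t h : A → V) (α : V → ℤ) : V → ℤ :=
  fun i => eulerForm t h α (fun j => if j = i then 1 else 0)

/-- The weight `−⟨·,α⟩`. -/
def weightR (t h : A → V) (α : V → ℤ) : V → ℤ :=
  fun i => - eulerForm t h (fun j => if j = i then 1 else 0) α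

/-- `IsPathFrom t h i p j` : the list of arrows `p` is a path from `i` to `j`. -/
def IsPathFrom (t h : A → V) : V → List A → V → Prop
  | i, [], j => i = j
  | i, a :: p, j => t a = i ∧ IsPathFrom t h (h a) p j

/-- The quiver has no (nontrivial) oriented cycles. -/
def Acyclic (t h : A → V) : Prop := ∀ (i : V) (p : List A), IsPathFrom t h i p i → p = []

/-- The dimension vector `γ_i` of the projective indecomposable at `i`:
`γ_i(j)` is the number of paths from `i` to `j`. -/
def gammaRoot (t h : A → V) (i : V) : V → ℕ :=
  fun j => Set.ncard {p : List A | IsPathFrom t h i p j}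

/-- A finite-dimensional representation of the quiver `(V, A, t, h)` over `K`. -/
structure QuivRep (K : Type) [Field K] (V A : Type) (t h : A → V) : Type 1 where
  sp : V → Type
  [inst1 : ∀ i, AddCommGroup (sp i)]
  [inst2 : ∀ i, Module K (sp i)]
  [inst3 : ∀ i, FiniteDimensional K (sp i)]
  map : ∀ a : A, sp (t a) →ₗ[K] sp (h a)

attribute [instance] QuivRep.inst1 QuivRep.inst2 QuivRep.inst3

namespace QuivRep

variable {K} {t h : A → V}

/-- The dimension vector of a representation. -/
def dimVec (X : QuivRep K V A t h) : V → ℕ := fun i => Module.finrank K (X.sp i)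

/-- A subrepresentation. -/
structure Sub (X : QuivRep K V A t h) where
  sub : ∀ i, Submodule K (X.sp i)
  le : ∀ a : A, ∀ x ∈ sub (t a), X.map a x ∈ sub (h a)

/-- The dimension vector of a subrepresentation. -/
def Sub.dimVec {X : QuivRep K V A t h} (U : Sub X) : V → ℕ :=
  fun i => Module.finrank K (U.sub i)

/-- The space `Hom_Q(X,Y)` of morphisms of representations, as a submodule of
`Π i, Hom_K(X(i),Y(i))`. -/
def homS (X Y : QuivRep K V A t h) : Submodule K (∀ i, X.sp i →ₗ[K] Y.sp i) where
  carrier := {φ | ∀ a : A, (φ (h a)).comp (X.map a) = (Y.map a).comp (φ (t a))}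
  zero_mem' := by intro a; simp
  add_mem' := by
    intro f g hf hg a
    simp only [Pi.add_apply, LinearMap.add_comp, LinearMap.comp_add, hf a, hg a]
  smul_mem' := by
    intro c f hf a
    simp only [Pi.smul_apply, LinearMap.smul_comp, LinearMap.comp_smul, hf a]

/-- The dimension of `Hom_Q(X,Y)`. -/
def homDim (X Y : QuivRep K V A t h) : ℕ := Module.finrank K (homS X Y)

/-- The map `d^X_Y` from Ringel's canonical exact sequence. -/
def dmap (X Y : QuivRep K V A t h) :
    (∀ i, X.sp i →ₗ[K] Y.sp i) →ₗ[K] (∀ a : A, X.sp (t a) →ₗ[K] Y.sp (h a)) where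
  toFun φ := fun a => (φ (h a)).comp (X.map a) - (Y.map a).comp (φ (t a))
  map_add' f g := by
    funext a
    simp only [Pi.add_apply, LinearMap.add_comp, LinearMap.comp_add]
    abel
  map_smul' c f := by
    funext a
    simp only [Pi.smul_apply, LinearMap.smul_comp, LinearMap.comp_smul, smul_sub,
      RingHom.id_apply]

/-- The dimension of `Ext^1_Q(X,Y)`, i.e. of the cokernel of `d^X_Y`. -/
def extDim (X Y : QuivRep K V A t h) : ℕ :=
  Module.finrank K ((∀ a : A, X.sp (t a) →ₗ[K] Y.sp (h a)) ⧸ LinearMap.range (dmap X Y))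

/-- A rigid representation: `Ext^1_Q(X,X) = 0`. -/
def IsRigid (X : QuivRep K V A t h) : Prop := extDim X X = 0

/-- A Schur representation: `End_Q(X) = K·id`. -/
def IsSchur (X : QuivRep K V A t h) : Prop := homDim X X = 1

/-- An exceptional representation: rigid and Schur. -/
def IsExceptional (X : QuivRep K V A t h) : Prop := IsRigid X ∧ IsSchur X

end QuivRep

/-- `β` is a real Schur root: the dimension vector of an exceptional representation. -/
def isRealSchurRoot (t h : A → V) (β : V → ℕ) : Prop :=
  ∃ X : QuivRep K V A t h, X.dimVec = β ∧ X.IsExceptional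

/-- `ext_Q(α,β)` : the generic (minimal) value of `dim Ext^1_Q` on pairs of
representations of dimension vectors `α`, `β`. -/
def extMin (t h : A → V) (α β : V → ℕ) : ℕ :=
  sInf {n | ∃ X Y : QuivRep K V A t h, X.dimVec = α ∧ Y.dimVec = β ∧ QuivRep.extDim X Y = n}

/-- `hom_Q(α,β)` : the generic (minimal) value of `dim Hom_Q`. -/
def homMin (t h : A → V) (α β : V → ℕ) : ℕ :=
  sInf {n | ∃ X Y : QuivRep K V A t h, X.dimVec = α ∧ Y.dimVec = β ∧ QuivRep.homDim X Y = n}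

/-- `β' ↪ β` : every representation of dimension vector `β` has a subrepresentation of
dimension vector `β'`. -/
def Embeds (t h : A → V) (β' β : V → ℕ) : Prop :=
  ∀ X : QuivRep K V A t h, X.dimVec = β → ∃ U : QuivRep.Sub X, U.dimVec = β'

/-- `σ`-semi-stability of a representation. -/
def IsSemistable {t h : A → V} (σ : V → ℤ) (X : QuivRep K V A t h) : Prop :=
  (∑ i, σ i * (X.dimVec i : ℤ)) = 0 ∧
  ∀ U : QuivRep.Sub X, (∑ i, σ i * (U.dimVec i : ℤ)) ≤ 0

/-- `σ`-stability of a representation. -/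
def IsStable {t h : A → V} (σ : V → ℤ) (X : QuivRep K V A t h) : Prop :=
  (∑ i, σ i * (X.dimVec i : ℤ)) = 0 ∧ X.dimVec ≠ (fun _ => 0) ∧
  ∀ U : QuivRep.Sub X, U.dimVec ≠ (fun _ => 0) → U.dimVec ≠ X.dimVec →
    (∑ i, σ i * (U.dimVec i : ℤ)) < 0

/-- Isomorphism of representations. -/
def RepIso {t h : A → V} (X Y : QuivRep K V A t h) : Prop :=
  ∃ e : ∀ i, X.sp i ≃ₗ[K] Y.sp i,
    ∀ (a : A) (x : X.sp (t a)), e (h a) (X.map a x) = Y.map a (e (t a) x)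

/-- A quiver exceptional sequence of dimension vectors. -/
def IsQES (t h : A → V) {l : ℕ} (b : Fin l → V → ℕ) : Prop :=
  (∀ j, isRealSchurRoot K t h (b j)) ∧
  ∀ i j : Fin l, i < j →
    homMin K t h (b i) (b j) = 0 ∧ extMin K t h (b i) (b j) = 0 ∧
      eulerForm t h (natZ (b j)) (natZ (b i)) ≤ 0

/-- The cone of nonnegative rational linear combinations of a finite set of integral
vectors. -/
def coneOf (C : Finset (V → ℤ)) : Set (V → ℚ) :=
  {x | ∃ lam : (V → ℤ) → ℚ, (∀ c, 0 ≤ lam c) ∧ x = ∑ c ∈ C, lam c • intQ c}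

/-- A compatible subset of the set `Ψ(Q)_{≥ -1}` of almost positive real Schur roots. -/
def IsCompatible (t h : A → V) (C : Finset (V → ℤ)) : Prop :=
  (∀ x ∈ C, (∃ β : V → ℕ, isRealSchurRoot K t h β ∧ x = natZ β) ∨
      (∃ i : V, x = fun j => -(gammaRoot t h i j : ℤ))) ∧
  (∀ x ∈ C, ∀ y ∈ C, x ≠ y →
    (∀ β₁ β₂ : V → ℕ, isRealSchurRoot K t h β₁ → isRealSchurRoot K t h β₂ →
      x = natZ β₁ → y = natZ β₂ → extMin K t h β₁ β₂ = 0) ∧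
    (∀ (β : V → ℕ) (i : V), isRealSchurRoot K t h β →
      x = natZ β → y = (fun j => -(gammaRoot t h i j : ℤ)) → β i = 0))

/-- The domain of semi-invariants `D(β) ⊆ ℚ^{Q_0}`. -/
def Dom (t h : A → V) (β : V → ℕ) : Set (V → ℚ) :=
  {x | eulerForm t h x (natQ β) = 0 ∧
    ∀ β' : V → ℕ, Embeds K t h β' β → eulerForm t h x (natQ β') ≤ 0}

/-- A quiver exceptional set: a subset of `Ψ(Q)_{≥ -1}` of the form
`{β_1,…,β_l, −γ_{i_{l+1}},…,−γ_{i_m}}` with `β_j(i_k) = 0` and whose real-Schur-root part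
can be ordered into a quiver exceptional sequence. -/
def IsQExcSet (t h : A → V) (E : Finset (V → ℤ)) : Prop :=
  ∃ (l m : ℕ) (b : Fin l → V → ℕ) (g : Fin m → V),
    Function.Injective b ∧ Function.Injective g ∧ IsQES K t h b ∧
    (∀ j k, b j (g k) = 0) ∧
    (E : Set (V → ℤ)) =
      (Set.range fun j => natZ (b j)) ∪
      (Set.range fun k => (fun v => -(gammaRoot t h (g k) v : ℤ)))


/-- The underlying graph of the quiver is connected. -/
def IsConnectedQuiver (t h : A → V) : Prop :=
  ∀ i j : V,
    Relation.ReflTransGen (fun u v => ∃ a, (t a = u ∧ h a = v) ∨ (t a = v ∧ h a = u)) i j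

/-- Morphisms of representations. -/
structure RepHom {K : Type} [Field K] {V A : Type} {t h : A → V}
    (X Y : QuivRep K V A t h) : Type where
  app : ∀ i, X.sp i →ₗ[K] Y.sp i
  comm : ∀ a : A, (app (h a)).comp (X.map a) = (Y.map a).comp (app (t a))

namespace RepHom

variable {K₀ : Type} [Field K₀] {t h : A → V}

/-- The identity morphism. -/
def idHom (X : QuivRep K₀ V A t h) : RepHom X X :=
  ⟨fun _ => LinearMap.id, fun a => by ext x; simp⟩

/-- Composition of morphisms. -/
def comp {X Y Z : QuivRep K₀ V A t h} (f : RepHom X Y) (g : RepHom Y Z) : RepHom X Z :=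
  ⟨fun i => (g.app i).comp (f.app i), fun a => by
    ext x
    have hf := LinearMap.congr_fun (f.comm a) x
    have hg := LinearMap.congr_fun (g.comm a) (f.app (t a) x)
    simp only [LinearMap.comp_apply] at hf hg ⊢
    rw [hf, hg]⟩

/-- Sum of morphisms. -/
def add {X Y : QuivRep K₀ V A t h} (f g : RepHom X Y) : RepHom X Y :=
  ⟨fun i => f.app i + g.app i, fun a => by
    simp only [LinearMap.add_comp, LinearMap.comp_add, f.comm a, g.comm a]⟩

/-- Scalar multiple of a morphism. -/
def smul {X Y : QuivRep K₀ V A t h} (c : K₀) (f : RepHom X Y) : RepHom X Y :=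
  ⟨fun i => c • f.app i, fun a => by
    simp only [LinearMap.smul_comp, LinearMap.comp_smul, f.comm a]⟩

end RepHom

/-- The number of arrows `i → j` in the Ext-quiver `Q(𝓔)` of a sequence of dimension
vectors: `−⟨β_i, β_j⟩` for `i ≠ j`. -/
def extMult (t h : A → V) {l : ℕ} (b : Fin l → V → ℕ) (i j : Fin l) : ℕ :=
  if i = j then 0 else (-(eulerForm t h (natZ (b i)) (natZ (b j)))).toNat

/-- The arrow set of the Ext-quiver `Q(𝓔)`. -/
abbrev ExtArrow (t h : A → V) {l : ℕ} (b : Fin l → V → ℕ) : Type :=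
  (i : Fin l) × (j : Fin l) × Fin (extMult t h b i j)

/-- The representation space `rep(Q,β)` as a product of matrix spaces. -/
abbrev RepSpace (t h : A → V) (β : V → ℕ) : Type :=
  ∀ a : A, Matrix (Fin (β (h a))) (Fin (β (t a))) K

/-- The (base-change) action of `GL(β)` on `rep(Q,β)`. -/
def glAct (t h : A → V) {β : V → ℕ}
    (g : ∀ i, Matrix.GeneralLinearGroup (Fin (β i)) K) (W : RepSpace K t h β) :
    RepSpace K t h β :=
  fun a => (g (h a) : Matrix (Fin (β (h a))) (Fin (β (h a))) K) * W a *
    (((g (t a))⁻¹ : Matrix.GeneralLinearGroup (Fin (β (t a))) K) :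
      Matrix (Fin (β (t a))) (Fin (β (t a))) K)

/-- A polynomial function on `rep(Q,β)`. -/
def IsPolyFun (t h : A → V) {β : V → ℕ} (f : RepSpace K t h β → K) : Prop :=
  ∃ P : MvPolynomial ((a : A) × (Fin (β (h a)) × Fin (β (t a)))) K,
    ∀ W, f W = MvPolynomial.eval (fun x => W x.1 x.2.1 x.2.2) P

/-- The weight space `SI(Q,β)_σ` of semi-invariant polynomial functions of weight `σ`. -/
def SIweight (t h : A → V) (β : V → ℕ) (σ : V → ℤ) :
    Submodule K (RepSpace K t h β → K) where
  carrier := {f | IsPolyFun K t h f ∧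
    ∀ (g : ∀ i, Matrix.GeneralLinearGroup (Fin (β i)) K) (W : RepSpace K t h β),
      f (glAct K t h g W) =
        (((∏ i, (Matrix.GeneralLinearGroup.det (g i)) ^ σ i : Kˣ) : K)) * f W}
  zero_mem' := by
    refine ⟨⟨0, by simp⟩, by simp⟩
  add_mem' := by
    rintro f g ⟨⟨P, hP⟩, hf⟩ ⟨⟨Q, hQ⟩, hg⟩
    refine ⟨⟨P + Q, fun W => ?_⟩, fun gg W => ?_⟩
    · simp [hP W, hQ W]
    · simp only [Pi.add_apply, hf gg W, hg gg W]; ring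
  smul_mem' := by
    rintro c f ⟨⟨P, hP⟩, hf⟩
    refine ⟨⟨MvPolynomial.C c * P, fun W => ?_⟩, fun gg W => ?_⟩
    · simp [hP W]
    · simp only [Pi.smul_apply, hf gg W, smul_eq_mul]; ring

/-- Entry of a matrix accessed through natural-number indices. -/
def entryN {m n : ℕ} (M : Matrix (Fin m) (Fin n) K) (r c : ℕ) : K :=
  if hr : r < m then (if hc : c < n then M ⟨r, hr⟩ ⟨c, hc⟩ else 0) else 0

/-- The matrix of the map `d^V_W` (with `V` of dimension vector `α` varying and `W` of
dimension vector `w` fixed), in the standard bases. -/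
def schofieldMatrix (t h : A → V) {α w : V → ℕ}
    (Vm : RepSpace K t h α) (W : RepSpace K t h w) :
    Matrix ((a : A) × (Fin (w (h a)) × Fin (α (t a)))) ((i : V) × (Fin (w i) × Fin (α i))) K :=
  fun r c =>
    (if c.1 = h r.1 ∧ (c.2.1 : ℕ) = (r.2.1 : ℕ) then
      entryN K (Vm r.1) (c.2.2 : ℕ) (r.2.2 : ℕ) else 0)
    - (if c.1 = t r.1 ∧ (c.2.2 : ℕ) = (r.2.2 : ℕ) then
      entryN K (W r.1) (r.2.1 : ℕ) (c.2.1 : ℕ) else 0)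

/-- The Schofield semi-invariant `c_W : rep(Q,α) → K`, `V ↦ det d^V_W` (defined when
`⟨α, dim W⟩ = 0`, i.e. when `d^V_W` is a square matrix). -/
def schofieldSI (t h : A → V) {α w : V → ℕ} (W : RepSpace K t h w)
    (Vm : RepSpace K t h α) : K :=
  if hc : Fintype.card ((i : V) × (Fin (w i) × Fin (α i))) =
      Fintype.card ((a : A) × (Fin (w (h a)) × Fin (α (t a)))) then
    ((schofieldMatrix K t h Vm W).submatrix (Fintype.equivOfCardEq hc) id).det
  else 0

/-- The representation of `Q` attached to a point of `rep(Q,β)`. -/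
def toRep (t h : A → V) {β : V → ℕ} (W : RepSpace K t h β) : QuivRep K V A t h where
  sp i := Fin (β i) → K
  map a := Matrix.mulVecLin (W a)


namespace QR

open QuivRep

section Main

variable {K : Type} [Field K] {V A : Type}
variable {t h : A → V}

section LinAlg

variable {M N P : Type} [AddCommGroup M] [Module K M] [AddCommGroup N] [Module K N]
  [AddCommGroup P] [Module K P]

theorem retr (f : M →ₗ[K] N) (hf : Function.Injective f) :
    ∃ r : N →ₗ[K] M, ∀ x, r (f x) = x := by
  obtain ⟨r, hr⟩ := f.exists_leftInverse_of_injective (LinearMap.ker_eq_bot.2 hf)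
  exact ⟨r, fun x => LinearMap.congr_fun hr x⟩

theorem sect (g : M →ₗ[K] N) (hg : Function.Surjective g) :
    ∃ s : N →ₗ[K] M, ∀ x, g (s x) = x := by
  obtain ⟨r, hr⟩ := g.exists_rightInverse_of_surjective (LinearMap.range_eq_top.2 hg)
  exact ⟨r, fun x => LinearMap.congr_fun hr x⟩

theorem fac_inj (f : M →ₗ[K] N) (hf : Function.Injective f) (u : P →ₗ[K] N)
    (hu : ∀ x, ∃ y, f y = u x) : ∃ v : P →ₗ[K] M, ∀ x, f (v x) = u x := by
  obtain ⟨r, hr⟩ := retr f hf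
  refine ⟨r.comp u, fun x => ?_⟩
  obtain ⟨y, hy⟩ := hu x
  simp [← hy, hr]

theorem fac_surj (g : M →ₗ[K] N) (hg : Function.Surjective g) (u : M →ₗ[K] P)
    (hu : ∀ x, g x = 0 → u x = 0) : ∃ v : N →ₗ[K] P, ∀ x, v (g x) = u x := by
  obtain ⟨s, hs⟩ := sect g hg
  refine ⟨u.comp s, fun x => ?_⟩
  have := hu (s (g x) - x) (by simp [hs])
  rw [map_sub, sub_eq_zero] at this
  simpa using this

end LinAlg

section Homs

variable {X Y Z : QuivRep K V A t h}



theorem hcomm (f : RepHom X Y) (a : A) (x : X.sp (t a)) :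
    f.app (h a) (X.map a x) = Y.map a (f.app (t a) x) :=
  LinearMap.congr_fun (f.comm a) x

/-- Build a morphism from a pointwise commutation. -/
def mk' (φ : ∀ i, X.sp i →ₗ[K] Y.sp i)
    (hφ : ∀ a x, φ (h a) (X.map a x) = Y.map a (φ (t a) x)) : RepHom X Y :=
  ⟨φ, fun a => LinearMap.ext fun x => hφ a x⟩

@[simp] theorem mk'_app (φ : ∀ i, X.sp i →ₗ[K] Y.sp i) (hφ) (i : V) :
    (mk' φ hφ : RepHom X Y).app i = φ i := rfl

@[simp] theorem comp_app (f : RepHom X Y) (g : RepHom Y Z) (i : V) (x : X.sp i) :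
    (f.comp g).app i x = g.app i (f.app i x) := rfl

@[simp] theorem id_app (i : V) (x : X.sp i) : (RepHom.idHom X).app i x = x := rfl

/-- injective morphism -/
def Inj (f : RepHom X Y) : Prop := ∀ i, Function.Injective (f.app i)
/-- surjective morphism -/
def Sur (f : RepHom X Y) : Prop := ∀ i, Function.Surjective (f.app i)
/-- zero morphism -/
def IsZ (f : RepHom X Y) : Prop := ∀ i x, f.app i x = 0
/-- all morphisms vanish -/
def HomZ (X Y : QuivRep K V A t h) : Prop := ∀ f : RepHom X Y, IsZ f
/-- vanishing of Ext -/
def ExtZ (X Y : QuivRep K V A t h) : Prop := Function.Surjective (dmap X Y)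
/-- nonzero representation -/
def Nz (X : QuivRep K V A t h) : Prop := ∃ i, ∃ x : X.sp i, x ≠ 0

theorem inj_iff (f : RepHom X Y) : Inj f ↔ ∀ i x, f.app i x = 0 → x = 0 := by
  refine forall_congr' fun i => ?_
  exact injective_iff_map_eq_zero _

theorem Inj.comp {f : RepHom X Y} {g : RepHom Y Z} (hf : Inj f) (hg : Inj g) :
    Inj (f.comp g) := fun i => (hg i).comp (hf i)
theorem Sur.comp {f : RepHom X Y} {g : RepHom Y Z} (hf : Sur f) (hg : Sur g) :
    Sur (f.comp g) := fun i => (hg i).comp (hf i)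

theorem Inj.id : Inj (RepHom.idHom X) := fun _ => Function.injective_id
theorem Sur.id : Sur (RepHom.idHom X) := fun _ => Function.surjective_id

theorem iso_refl (X : QuivRep K V A t h) : RepIso K X X :=
  ⟨fun _ => LinearEquiv.refl _ _, fun _ _ => rfl⟩
theorem iso_symm (e : RepIso K X Y) : RepIso K Y X := by
  obtain ⟨e, he⟩ := e
  refine ⟨fun i => (e i).symm, fun a x => ?_⟩
  rw [LinearEquiv.symm_apply_eq, he]; simp
theorem iso_trans (e : RepIso K X Y) (e' : RepIso K Y Z) : RepIso K X Z := by
  obtain ⟨e, he⟩ := e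
  obtain ⟨e', he'⟩ := e'
  exact ⟨fun i => (e i).trans (e' i), fun a x => by simp [he, he']⟩
theorem iso_of_bij (f : RepHom X Y) (h1 : Inj f) (h2 : Sur f) : RepIso K X Y :=
  ⟨fun i => LinearEquiv.ofBijective (f.app i) ⟨h1 i, h2 i⟩, fun a x => hcomm f a x⟩
theorem iso_hom (e : RepIso K X Y) : ∃ f : RepHom X Y, ∃ g : RepHom Y X, Inj f ∧ Sur f ∧ Inj g ∧
    Sur g ∧ (∀ i x, g.app i (f.app i x) = x) ∧ (∀ i x, f.app i (g.app i x) = x) := by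
  obtain ⟨e', he'⟩ := iso_symm e
  obtain ⟨e, he⟩ := id e
  refine ⟨mk' (fun i => (e i).toLinearMap) he,
    mk' (fun i => (e i).symm.toLinearMap) ?_, fun i => (e i).injective, fun i => (e i).surjective,
    fun i => (e i).symm.injective, fun i => (e i).symm.surjective, ?_, ?_⟩
  · intro a x
    simp only [LinearEquiv.coe_coe]
    rw [LinearEquiv.symm_apply_eq, he]; simp
  · intro i x; simp
  · intro i x; simp

/-- difference of morphisms -/
def hsub (f g : RepHom X Y) : RepHom X Y :=
  mk' (fun i => f.app i - g.app i) (fun a x => by simp [hcomm])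

@[simp] theorem hsub_app (f g : RepHom X Y) (i : V) (x : X.sp i) :
  (hsub f g).app i x = f.app i x - g.app i x := rfl

/-- zero morphism -/
def zeroHom (X Y : QuivRep K V A t h) : RepHom X Y := mk' (fun _ => 0) (by simp)

theorem not_homZ : ¬ HomZ X Y ↔ ∃ f : RepHom X Y, ¬ IsZ f := by
  simp [HomZ]

theorem nz_of_not_isZ {f : RepHom X Y} (hf : ¬ IsZ f) : Nz X ∧ Nz Y := by
  simp only [IsZ, not_forall] at hf
  obtain ⟨i, x, hx⟩ := hf
  exact ⟨⟨i, x, fun h => hx (by simp [h])⟩, ⟨i, _, hx⟩⟩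

theorem Nz.of_inj {f : RepHom X Y} (hf : Inj f) (hX : Nz X) : Nz Y := by
  obtain ⟨i, x, hx⟩ := hX
  exact ⟨i, f.app i x, fun h => hx ((inj_iff f).1 hf i x h)⟩

theorem Nz.of_sur {f : RepHom X Y} (hf : Sur f) (hX : Nz Y) : Nz X := by
  obtain ⟨i, x, hx⟩ := hX
  obtain ⟨y, rfl⟩ := hf i x
  exact ⟨i, y, fun h => hx (by simp [h])⟩

/-- short exact sequence -/
structure SES {A' B' C' : QuivRep K V A t h} (f : RepHom A' B') (g : RepHom B' C') : Prop where
  inj : Inj f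
  sur : Sur g
  zer : ∀ i x, g.app i (f.app i x) = 0
  ex : ∀ i x, g.app i x = 0 → ∃ y, f.app i y = x

theorem dmap_apply (φ : ∀ i, X.sp i →ₗ[K] Y.sp i) (a : A) (x : X.sp (t a)) :
    dmap X Y φ a x = φ (h a) (X.map a x) - Y.map a (φ (t a) x) := rfl

/-- from kernel of dmap to hom -/
def homOfD (φ : ∀ i, X.sp i →ₗ[K] Y.sp i) (hφ : dmap X Y φ = 0) : RepHom X Y :=
  mk' φ (fun a x => by
    have := LinearMap.congr_fun (congrFun hφ a) x
    rw [dmap_apply] at this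
    exact sub_eq_zero.1 this)

theorem dmap_hom (f : RepHom X Y) : dmap X Y f.app = 0 := by
  funext a; ext x; rw [dmap_apply, hcomm]; simp

theorem extZ_iff : ExtZ X Y ↔ ∀ ξ : ∀ a : A, X.sp (t a) →ₗ[K] Y.sp (h a),
    ∃ φ : ∀ i, X.sp i →ₗ[K] Y.sp i, ∀ a x,
      φ (h a) (X.map a x) - Y.map a (φ (t a) x) = ξ a x := by
  unfold ExtZ Function.Surjective
  refine forall_congr' fun ξ => exists_congr fun φ => ?_
  constructor
  · rintro rfl a x; rfl
  · intro H; funext a; ext x; exact H a x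

variable {A' B' C' : QuivRep K V A t h} {f : RepHom A' B'} {g : RepHom B' C'}

theorem ext_post_sur (hg : Sur g) (H : ExtZ X B') : ExtZ X C' := by
  rw [extZ_iff] at H ⊢
  intro ξ
  choose s hs using fun i => sect (g.app i) (hg i)
  obtain ⟨φ, hφ⟩ := H (fun a => (s (h a)).comp (ξ a))
  refine ⟨fun i => (g.app i).comp (φ i), fun a x => ?_⟩
  have := congrArg (g.app (h a)) (hφ a x)
  simpa [hs, hcomm] using this

theorem ext_pre_inj (hf : Inj f) (H : ExtZ B' X) : ExtZ A' X := by
  rw [extZ_iff] at H ⊢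
  intro ξ
  choose r hr using fun i => retr (f.app i) (hf i)
  obtain ⟨φ, hφ⟩ := H (fun a => (ξ a).comp (r (t a)))
  refine ⟨fun i => (φ i).comp (f.app i), fun a x => ?_⟩
  have := hφ a (f.app (t a) x)
  simpa [hr, hcomm] using this

theorem ext_mid_right (S : SES f g) (H1 : ExtZ X A') (H2 : ExtZ X C') : ExtZ X B' := by
  rw [extZ_iff] at *
  intro ξ
  choose s hs using fun i => sect (g.app i) (S.sur i)
  obtain ⟨ψ, hψ⟩ := H2 (fun a => (g.app (h a)).comp (ξ a))
  have : ∀ a : A, ∃ v : X.sp (t a) →ₗ[K] A'.sp (h a), ∀ x, f.app (h a) (v x) =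
      (ξ a - (((s (h a)).comp (ψ (h a))).comp (X.map a) -
        (B'.map a).comp ((s (t a)).comp (ψ (t a))))) x := by
    intro a
    apply fac_inj _ (S.inj _)
    intro x
    apply S.ex
    have := hψ a x
    simp only [LinearMap.sub_apply, LinearMap.comp_apply, map_sub, hcomm, hs] at this ⊢
    rw [this]; simp
  choose η hη using this
  obtain ⟨φ, hφ⟩ := H1 η
  refine ⟨fun i => (s i).comp (ψ i) + (f.app i).comp (φ i), fun a x => ?_⟩
  have e1 := hη a x
  rw [← hφ] at e1
  simp only [LinearMap.add_apply, LinearMap.sub_apply, LinearMap.comp_apply, map_add, map_sub,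
    hcomm] at e1 ⊢
  rw [← sub_eq_zero] at e1 ⊢
  rw [← e1]; abel

theorem ext_mid_left (S : SES f g) (H1 : ExtZ A' X) (H2 : ExtZ C' X) : ExtZ B' X := by
  rw [extZ_iff] at *
  intro ξ
  choose r hr using fun i => retr (f.app i) (S.inj i)
  obtain ⟨ψ, hψ⟩ := H1 (fun a => (ξ a).comp (f.app (t a)))
  have : ∀ a : A, ∃ v : C'.sp (t a) →ₗ[K] X.sp (h a), ∀ x, v (g.app (t a) x) =
      (ξ a - (((ψ (h a)).comp (r (h a))).comp (B'.map a) -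
        (X.map a).comp ((ψ (t a)).comp (r (t a))))) x := by
    intro a
    apply fac_surj _ (S.sur _)
    intro x hx
    obtain ⟨y, rfl⟩ := S.ex _ _ hx
    have := hψ a y
    simp only [LinearMap.sub_apply, LinearMap.comp_apply, ← hcomm, hr] at this ⊢
    rw [this]; simp
  choose η hη using this
  obtain ⟨φ, hφ⟩ := H2 η
  refine ⟨fun i => (ψ i).comp (r i) + (φ i).comp (g.app i), fun a x => ?_⟩
  have e1 := hη a x
  rw [← hφ] at e1
  simp only [LinearMap.add_apply, LinearMap.sub_apply, LinearMap.comp_apply, map_add,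
    hcomm] at e1 ⊢
  rw [← sub_eq_zero] at e1 ⊢
  rw [← e1]; abel

theorem ext_of_hom (S : SES f g) (H1 : HomZ X C') (H2 : ExtZ X B') : ExtZ X A' := by
  rw [extZ_iff] at *
  intro ξ
  obtain ⟨φ, hφ⟩ := H2 (fun a => (f.app (h a)).comp (ξ a))
  have h0 : IsZ (mk' (fun i => (g.app i).comp (φ i)) (fun a x => by
      have := congrArg (g.app (h a)) (hφ a x)
      simp only [LinearMap.comp_apply, map_sub, S.zer, hcomm] at this ⊢
      exact sub_eq_zero.1 this) : RepHom X C') := H1 _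
  have : ∀ i, ∃ v : X.sp i →ₗ[K] A'.sp i, ∀ x, f.app i (v x) = φ i x :=
    fun i => fac_inj _ (S.inj i) _ fun x => S.ex i _ (h0 i x)
  choose ψ hψ using this
  refine ⟨ψ, fun a x => S.inj _ ?_⟩
  have := hφ a x
  simp only [LinearMap.comp_apply, map_sub, hcomm, hψ] at this ⊢
  exact this

theorem extend_hom (S : SES f g) (H : ExtZ C' X) (ψ : RepHom A' X) :
    ∃ θ : RepHom B' X, ∀ i x, θ.app i (f.app i x) = ψ.app i x := by
  rw [extZ_iff] at H
  choose r hr using fun i => retr (f.app i) (S.inj i)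
  have : ∀ a : A, ∃ v : C'.sp (t a) →ₗ[K] X.sp (h a), ∀ x, v (g.app (t a) x) =
      ((((ψ.app (h a)).comp (r (h a))).comp (B'.map a) -
        (X.map a).comp ((ψ.app (t a)).comp (r (t a))))) x := by
    intro a
    apply fac_surj _ (S.sur _)
    intro x hx
    obtain ⟨y, rfl⟩ := S.ex _ _ hx
    simp only [LinearMap.sub_apply, LinearMap.comp_apply, ← hcomm, hr]
    simp
  choose η hη using this
  obtain ⟨φ, hφ⟩ := H η
  refine ⟨mk' (fun i => (ψ.app i).comp (r i) - (φ i).comp (g.app i)) fun a x => ?_, fun i x => ?_⟩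
  · have e1 := hη a x
    rw [← hφ] at e1
    simp only [LinearMap.sub_apply, LinearMap.comp_apply, map_sub, hcomm] at e1 ⊢
    rw [← sub_eq_zero] at e1 ⊢
    rw [← neg_eq_zero, ← e1]; abel
  · simp [hr, S.zer]

theorem lift_hom (S : SES f g) (H : ExtZ X A') (ψ : RepHom X C') :
    ∃ θ : RepHom X B', ∀ i x, g.app i (θ.app i x) = ψ.app i x := by
  rw [extZ_iff] at H
  choose s hs using fun i => sect (g.app i) (S.sur i)
  have : ∀ a : A, ∃ v : X.sp (t a) →ₗ[K] A'.sp (h a), ∀ x, f.app (h a) (v x) =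
      ((((s (h a)).comp (ψ.app (h a))).comp (X.map a) -
        (B'.map a).comp ((s (t a)).comp (ψ.app (t a))))) x := by
    intro a
    apply fac_inj _ (S.inj _)
    intro x
    apply S.ex
    simp only [LinearMap.sub_apply, LinearMap.comp_apply, map_sub, hcomm, hs]
    simp
  choose η hη using this
  obtain ⟨φ, hφ⟩ := H η
  refine ⟨mk' (fun i => (s i).comp (ψ.app i) - (f.app i).comp (φ i)) fun a x => ?_, fun i x => ?_⟩
  · have e1 := hη a x
    rw [← hφ] at e1
    simp only [LinearMap.sub_apply, LinearMap.comp_apply, map_sub, hcomm] at e1 ⊢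
    rw [← sub_eq_zero] at e1 ⊢
    rw [← neg_eq_zero, ← e1]; abel
  · simp [hs, S.zer]

theorem SES.lift (S : SES f g) (u : RepHom X B') (hu : ∀ i x, g.app i (u.app i x) = 0) :
    ∃ v : RepHom X A', ∀ i x, f.app i (v.app i x) = u.app i x := by
  have : ∀ i, ∃ v : X.sp i →ₗ[K] A'.sp i, ∀ x, f.app i (v x) = u.app i x :=
    fun i => fac_inj _ (S.inj i) _ fun x => S.ex i _ (hu i x)
  choose ψ hψ using this
  refine ⟨mk' ψ fun a x => S.inj _ ?_, hψ⟩
  rw [hψ, hcomm, hcomm, hψ]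

theorem SES.desc (S : SES f g) (u : RepHom B' X) (hu : ∀ i x, u.app i (f.app i x) = 0) :
    ∃ v : RepHom C' X, ∀ i x, v.app i (g.app i x) = u.app i x := by
  have : ∀ i, ∃ v : C'.sp i →ₗ[K] X.sp i, ∀ x, v (g.app i x) = u.app i x :=
    fun i => fac_surj _ (S.sur i) _ fun x hx => by
      obtain ⟨y, rfl⟩ := S.ex i _ hx; exact hu _ _
  choose ψ hψ using this
  refine ⟨mk' ψ fun a x => ?_, hψ⟩
  obtain ⟨y, rfl⟩ := S.sur _ x
  rw [hψ, ← hcomm, hψ, hcomm]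

end Homs

section Constr

variable {X Y Z : QuivRep K V A t h}

/-- kernel -/
def kerRep (f : RepHom X Y) : QuivRep K V A t h where
  sp i := LinearMap.ker (f.app i)
  map a := (X.map a).restrict (fun x hx => by
    rw [LinearMap.mem_ker] at hx ⊢
    rw [hcomm, hx, map_zero])

/-- kernel inclusion -/
def kerι (f : RepHom X Y) : RepHom (kerRep f) X :=
  mk' (fun i => (LinearMap.ker (f.app i)).subtype) (fun _ _ => rfl)

/-- image -/
def imRep (f : RepHom X Y) : QuivRep K V A t h where
  sp i := LinearMap.range (f.app i)
  map a := (Y.map a).restrict (fun x hx => by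
    obtain ⟨y, rfl⟩ := hx
    exact ⟨X.map a y, hcomm f a y⟩)

/-- image inclusion -/
def imι (f : RepHom X Y) : RepHom (imRep f) Y :=
  mk' (fun i => (LinearMap.range (f.app i)).subtype) (fun _ _ => rfl)

/-- image projection -/
def imπ (f : RepHom X Y) : RepHom X (imRep f) :=
  mk' (fun i => (f.app i).rangeRestrict) (fun a x => Subtype.ext (hcomm f a x))

/-- cokernel -/
def cokRep (f : RepHom X Y) : QuivRep K V A t h where
  sp i := Y.sp i ⧸ LinearMap.range (f.app i)
  map a := Submodule.mapQ _ _ (Y.map a) (fun x hx => by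
    obtain ⟨y, rfl⟩ := hx
    exact ⟨X.map a y, hcomm f a y⟩)

/-- cokernel projection -/
def cokπ (f : RepHom X Y) : RepHom Y (cokRep f) :=
  mk' (fun i => (LinearMap.range (f.app i)).mkQ) (fun _ _ => rfl)

theorem imι_inj (f : RepHom X Y) : Inj (imι f) := fun _ => Subtype.val_injective
theorem imπ_sur (f : RepHom X Y) : Sur (imπ f) := fun i => (f.app i).surjective_rangeRestrict
theorem kerι_inj (f : RepHom X Y) : Inj (kerι f) := fun _ => Subtype.val_injective
theorem cokπ_sur (f : RepHom X Y) : Sur (cokπ f) := fun _ => Submodule.mkQ_surjective _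
@[simp] theorem imιπ (f : RepHom X Y) (i : V) (x : X.sp i) :
  (imι f).app i ((imπ f).app i x) = f.app i x := rfl

theorem ses_ker (f : RepHom X Y) : SES (kerι f) (imπ f) :=
  ⟨kerι_inj f, imπ_sur f, fun i x => Subtype.ext x.2, fun i x hx =>
    ⟨⟨x, congrArg Subtype.val hx⟩, rfl⟩⟩

theorem ses_ker' (f : RepHom X Y) (hf : Sur f) : SES (kerι f) f :=
  ⟨kerι_inj f, hf, fun i x => x.2, fun i x hx => ⟨⟨x, hx⟩, rfl⟩⟩

theorem ses_cok (f : RepHom X Y) : SES (imι f) (cokπ f) :=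
  ⟨imι_inj f, cokπ_sur f, fun i x => (Submodule.Quotient.mk_eq_zero _).2 x.2, fun i x hx =>
    ⟨⟨x, (Submodule.Quotient.mk_eq_zero _).1 hx⟩, rfl⟩⟩

theorem ses_cok' (f : RepHom X Y) (hf : Inj f) : SES f (cokπ f) :=
  ⟨hf, cokπ_sur f, fun i x => (Submodule.Quotient.mk_eq_zero _).2 ⟨x, rfl⟩, fun i x hx =>
    (Submodule.Quotient.mk_eq_zero _).1 hx⟩

/-- extension -/
def extRep (C' A' : QuivRep K V A t h) (ξ : ∀ a : A, C'.sp (t a) →ₗ[K] A'.sp (h a)) :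
    QuivRep K V A t h where
  sp i := A'.sp i × C'.sp i
  map a := ((A'.map a).coprod (ξ a)).prod ((C'.map a).comp (LinearMap.snd K _ _))

/-- inclusion into the extension -/
def extι (C' A' : QuivRep K V A t h) (ξ : ∀ a : A, C'.sp (t a) →ₗ[K] A'.sp (h a)) :
    RepHom A' (extRep C' A' ξ) :=
  mk' (fun i => LinearMap.inl K _ _) (fun a x => by
    refine Prod.ext ?_ (map_zero (C'.map a)).symm
    change A'.map a x = A'.map a x + ξ a 0
    simp)

/-- projection of the extension -/
def extπ (C' A' : QuivRep K V A t h) (ξ : ∀ a : A, C'.sp (t a) →ₗ[K] A'.sp (h a)) :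
    RepHom (extRep C' A' ξ) C' :=
  mk' (fun i => LinearMap.snd K _ _) (fun a x => rfl)

theorem ses_ext (C' A' : QuivRep K V A t h) (ξ : ∀ a : A, C'.sp (t a) →ₗ[K] A'.sp (h a)) :
    SES (extι C' A' ξ) (extπ C' A' ξ) :=
  ⟨fun _ => LinearMap.inl_injective, fun _ => LinearMap.snd_surjective, fun i x => rfl,
    fun i x hx => ⟨x.1, Prod.ext rfl (Eq.symm hx)⟩⟩

/-- first coordinate -/
def extFst (C' A' : QuivRep K V A t h) (ξ : ∀ a : A, C'.sp (t a) →ₗ[K] A'.sp (h a)) (i : V) :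
    (extRep C' A' ξ).sp i →ₗ[K] A'.sp i := LinearMap.fst K (A'.sp i) (C'.sp i)
/-- second inclusion -/
def extInr (C' A' : QuivRep K V A t h) (ξ : ∀ a : A, C'.sp (t a) →ₗ[K] A'.sp (h a)) (i : V) :
    C'.sp i →ₗ[K] (extRep C' A' ξ).sp i := LinearMap.inr K (A'.sp i) (C'.sp i)

theorem extFst_map (C' A' : QuivRep K V A t h) (ξ : ∀ a : A, C'.sp (t a) →ₗ[K] A'.sp (h a))
    (a : A) (x : (extRep C' A' ξ).sp (t a)) :
    extFst C' A' ξ (h a) ((extRep C' A' ξ).map a x) =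
      A'.map a (extFst C' A' ξ (t a) x) + ξ a ((extπ C' A' ξ).app (t a) x) := rfl

theorem extMap_inr (C' A' : QuivRep K V A t h) (ξ : ∀ a : A, C'.sp (t a) →ₗ[K] A'.sp (h a))
    (a : A) (y : C'.sp (t a)) :
    (extRep C' A' ξ).map a (extInr C' A' ξ (t a) y) =
      (extι C' A' ξ).app (h a) (ξ a y) + extInr C' A' ξ (h a) (C'.map a y) := by
  refine Prod.ext ?_ ?_
  · change A'.map a 0 + ξ a y = ξ a y + 0
    simp
  · change C'.map a y = 0 + C'.map a y
    simp

theorem ext_retr (C' A' : QuivRep K V A t h) (ξ : ∀ a : A, C'.sp (t a) →ₗ[K] A'.sp (h a))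
    (ρ : RepHom (extRep C' A' ξ) A') (hρ : ∀ i x, ρ.app i ((extι C' A' ξ).app i x) = x) :
    ξ ∈ LinearMap.range (dmap C' A') := by
  refine ⟨fun i => -(ρ.app i).comp (extInr C' A' ξ i), ?_⟩
  funext a; ext y
  rw [dmap_apply]
  have e := hcomm ρ a (extInr C' A' ξ _ y)
  rw [extMap_inr, map_add, hρ] at e
  simp only [LinearMap.neg_apply, LinearMap.comp_apply, map_neg]
  rw [← e]
  abel

theorem ext_sec (C' A' : QuivRep K V A t h) (ξ : ∀ a : A, C'.sp (t a) →ₗ[K] A'.sp (h a))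
    (s : RepHom C' (extRep C' A' ξ)) (hs : ∀ i x, (extπ C' A' ξ).app i (s.app i x) = x) :
    ξ ∈ LinearMap.range (dmap C' A') := by
  refine ⟨fun i => (extFst C' A' ξ i).comp (s.app i), ?_⟩
  funext a; ext y
  rw [dmap_apply, LinearMap.comp_apply, LinearMap.comp_apply, hcomm, extFst_map, hs]
  abel

theorem nonsplit {C' A' : QuivRep K V A t h} (H : ¬ ExtZ C' A') :
    ∃ ξ, ξ ∉ LinearMap.range (dmap C' A') := by
  by_contra hh
  push Not at hh
  exact H hh

/-- pullback -/
def pbRep (g : RepHom X Z) (j : RepHom Y Z) : QuivRep K V A t h where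
  sp i := LinearMap.eqLocus ((g.app i).comp (LinearMap.fst K _ _))
    ((j.app i).comp (LinearMap.snd K _ _))
  map a := ((X.map a).prodMap (Y.map a)).restrict (fun x hx => by
    have : g.app _ x.1 = j.app _ x.2 := hx
    change g.app _ (X.map a x.1) = j.app _ (Y.map a x.2)
    rw [hcomm, hcomm, this])

/-- pullback, first projection -/
def pb1 (g : RepHom X Z) (j : RepHom Y Z) : RepHom (pbRep g j) X :=
  mk' (fun i => (LinearMap.fst K _ _).comp (Submodule.subtype _)) (fun _ _ => rfl)
/-- pullback, second projection -/
def pb2 (g : RepHom X Z) (j : RepHom Y Z) : RepHom (pbRep g j) Y :=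
  mk' (fun i => (LinearMap.snd K _ _).comp (Submodule.subtype _)) (fun _ _ => rfl)

theorem pb_comm (g : RepHom X Z) (j : RepHom Y Z) (i : V) (x : (pbRep g j).sp i) :
    g.app i ((pb1 g j).app i x) = j.app i ((pb2 g j).app i x) := x.2

theorem pb_ses {A' : QuivRep K V A t h} {f : RepHom A' X} {g : RepHom X Z} (S : SES f g)
    (j : RepHom Y Z) :
    ∃ f' : RepHom A' (pbRep g j), SES f' (pb2 g j) := by
  refine ⟨mk' (fun i => LinearMap.codRestrict _ ((f.app i).prod 0) (fun x => ?_)) ?_, ?_, ?_, ?_, ?_⟩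
  · change g.app i (f.app i x) = j.app i 0
    rw [S.zer, map_zero]
  · intro a x
    apply Subtype.ext
    apply Prod.ext
    · exact hcomm f a x
    · exact (map_zero (Y.map a)).symm
  · intro i x y hxy
    exact S.inj i (congrArg (fun z => z.1.1) hxy)
  · intro i y
    obtain ⟨x, hx⟩ := S.sur i (j.app i y)
    exact ⟨⟨(x, y), hx⟩, rfl⟩
  · intro i x; rfl
  · intro i x hx
    have h2 : x.1.2 = 0 := hx
    have : g.app i x.1.1 = 0 := by
      have := pb_comm g j i x
      rw [hx, map_zero] at this
      exact this
    obtain ⟨y, hy⟩ := S.ex i _ this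
    exact ⟨y, Subtype.ext (Prod.ext hy h2.symm)⟩

theorem pb1_inj (g : RepHom X Z) (j : RepHom Y Z) (hj : Inj j) : Inj (pb1 g j) := by
  rw [inj_iff]
  intro i x hx
  have := pb_comm g j i x
  rw [hx, map_zero] at this
  apply Subtype.ext
  exact Prod.ext hx ((inj_iff j).1 hj i _ this.symm)

/-- direct sum of a finite family -/
def piRep {ι : Type} [Finite ι] (B : ι → QuivRep K V A t h) : QuivRep K V A t h where
  sp i := ∀ k, (B k).sp i
  map a := LinearMap.pi fun k => ((B k).map a).comp (LinearMap.proj k)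

/-- projection -/
def piProj {ι : Type} [Finite ι] (B : ι → QuivRep K V A t h) (k : ι) : RepHom (piRep B) (B k) :=
  mk' (fun i => LinearMap.proj k) (fun _ _ => rfl)

theorem pi_ext {ι : Type} [Finite ι] {B : ι → QuivRep K V A t h} {i : V} {x y : (piRep B).sp i}
    (H : ∀ k, (piProj B k).app i x = (piProj B k).app i y) : x = y := funext H

/-- linear inclusion -/
def piInc {ι : Type} [Finite ι] [DecidableEq ι] (B : ι → QuivRep K V A t h) (k : ι) :
    RepHom (B k) (piRep B) :=
  mk' (fun i => LinearMap.single K (fun k => (B k).sp i) k) (fun a x => by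
    funext l
    by_cases hl : l = k
    · subst hl
      change (Pi.single l ((B l).map a x) : ∀ k, (B k).sp (h a)) l =
        (B l).map a ((Pi.single l x : ∀ k, (B k).sp (t a)) l)
      simp
    · change (Pi.single k ((B k).map a x) : ∀ k, (B k).sp (h a)) l =
        (B l).map a ((Pi.single k x : ∀ k, (B k).sp (t a)) l)
      simp [hl])

theorem piProj_inc {ι : Type} [Finite ι] [DecidableEq ι] (B : ι → QuivRep K V A t h) (k : ι)
    (i : V) (x : (B k).sp i) : (piProj B k).app i ((piInc B k).app i x) = x :=
  Pi.single_eq_same (M := fun k => (B k).sp i) k x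

theorem piProj_inc_ne {ι : Type} [Finite ι] [DecidableEq ι] (B : ι → QuivRep K V A t h) (k l : ι)
    (hl : l ≠ k) (i : V) (x : (B k).sp i) : (piProj B l).app i ((piInc B k).app i x) = 0 :=
  Pi.single_eq_of_ne (M := fun k => (B k).sp i) hl x

theorem pi_ses {n : ℕ} (B : Fin (n + 1) → QuivRep K V A t h) :
    ∃ (f : RepHom (B 0) (piRep B)) (g : RepHom (piRep B) (piRep fun k : Fin n => B k.succ)),
      SES f g := by
  refine ⟨piInc B 0,
    mk' (fun i => LinearMap.pi fun k => (piProj B k.succ).app i) (fun a x => rfl), ?_, ?_, ?_, ?_⟩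
  · rw [inj_iff]; intro i x hxy
    rw [← piProj_inc B 0 i x, hxy, map_zero]
  · intro i y
    refine ⟨Fin.cons 0 y, ?_⟩
    rfl
  · intro i x
    apply pi_ext
    intro k; exact piProj_inc_ne B 0 _ (Fin.succ_ne_zero k) i x
  · intro i x hx
    refine ⟨(piProj B 0).app i x, pi_ext fun k => ?_⟩
    refine Fin.cases ?_ (fun k => ?_) k
    · rw [piProj_inc]
    · rw [piProj_inc_ne B 0 _ (Fin.succ_ne_zero k)]
      exact (congrFun hx k).symm

/-- the simple representation at a vertex -/
def simpleRep (K : Type) [Field K] {V A : Type} [DecidableEq V] (t h : A → V) (i : V) :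
    QuivRep K V A t h where
  sp j := ↥(if j = i then ⊤ else ⊥ : Submodule K K)
  map _ := 0

end Constr

section Dims

variable [Fintype V]
variable {X Y Z A' B' C' : QuivRep K V A t h} {f : RepHom A' B'} {g : RepHom B' C'}

/-- weight -/
def wt (σ : V → ℤ) (X : QuivRep K V A t h) : ℤ := ∑ i, σ i * (X.dimVec i : ℤ)

/-- total dimension -/
def tdim (X : QuivRep K V A t h) : ℕ := ∑ i, X.dimVec i

theorem SES.dimVec (S : SES f g) (i : V) : B'.dimVec i = A'.dimVec i + C'.dimVec i := by
  have h1 := LinearMap.finrank_range_add_finrank_ker (g.app i)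
  have h2 : LinearMap.range (f.app i) = LinearMap.ker (g.app i) := by
    ext x; constructor
    · rintro ⟨y, rfl⟩; exact S.zer i y
    · intro hx; exact S.ex i x hx
  rw [← h2, LinearMap.finrank_range_of_inj (S.inj i), LinearMap.range_eq_top.2 (S.sur i),
    finrank_top] at h1
  simp only [QuivRep.dimVec]; omega

theorem SES.wt (S : SES f g) (σ : V → ℤ) : wt σ B' = wt σ A' + wt σ C' := by
  simp only [QR.wt, ← Finset.sum_add_distrib, ← mul_add]
  refine Finset.sum_congr rfl fun i _ => ?_
  rw [S.dimVec]; push_cast; ring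

theorem SES.tdim (S : SES f g) : tdim B' = tdim A' + tdim C' := by
  simp only [QR.tdim, ← Finset.sum_add_distrib]
  exact Finset.sum_congr rfl fun i _ => S.dimVec i

theorem iso_dim (e : RepIso K X Y) : X.dimVec = Y.dimVec := by
  obtain ⟨e, _⟩ := e
  funext i
  exact (e i).finrank_eq

theorem iso_wt (e : RepIso K X Y) (σ : V → ℤ) : wt σ X = wt σ Y := by
  simp only [wt, iso_dim e]

theorem not_nz_dim : ¬ Nz X ↔ X.dimVec = fun _ => 0 := by
  simp only [Nz, not_exists, not_not]
  constructor
  · intro H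
    funext i
    have : Subsingleton (X.sp i) := ⟨fun x y => by rw [H i x, H i y]⟩
    exact Module.finrank_zero_of_subsingleton
  · intro H i x
    have : Subsingleton (X.sp i) := Module.finrank_zero_iff.1 (congrFun H i)
    exact Subsingleton.elim _ _

theorem tdim_pos : 0 < tdim X ↔ Nz X := by
  rw [← not_iff_not, not_nz_dim, not_lt, Nat.le_zero, tdim, Finset.sum_eq_zero_iff]
  simp [funext_iff]

theorem wt_of_not_nz (H : ¬ Nz X) (σ : V → ℤ) : wt σ X = 0 := by
  rw [not_nz_dim] at H
  simp [wt, H]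

theorem sur_of_inj {f : RepHom X Y} (hf : Inj f) (hd : X.dimVec = Y.dimVec) : Sur f :=
  fun i => (LinearMap.injective_iff_surjective_of_finrank_eq_finrank (congrFun hd i)).1 (hf i)

theorem inj_of_sur {f : RepHom X Y} (hf : Sur f) (hd : X.dimVec = Y.dimVec) : Inj f :=
  fun i => (LinearMap.injective_iff_surjective_of_finrank_eq_finrank (congrFun hd i)).2 (hf i)

theorem ker_nz {f : RepHom X Y} : ¬ Nz (kerRep f) ↔ Inj f := by
  rw [inj_iff]
  constructor
  · intro H i x hx
    by_contra h0
    exact H ⟨i, ⟨x, hx⟩, fun h => h0 (congrArg Subtype.val h)⟩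
  · rintro H ⟨i, x, hx⟩
    exact hx (Subtype.ext (H i x.1 x.2))

theorem im_nz {f : RepHom X Y} : ¬ Nz (imRep f) ↔ IsZ f := by
  constructor
  · intro H i x
    by_contra h0
    exact H ⟨i, ⟨f.app i x, x, rfl⟩, fun h => h0 (congrArg Subtype.val h)⟩
  · rintro H ⟨i, ⟨x, y, hy⟩, hx⟩
    exact hx (Subtype.ext (hy.symm.trans (H i y)))

theorem cok_nz {f : RepHom X Y} : ¬ Nz (cokRep f) ↔ Sur f := by
  constructor
  · intro H i y
    by_contra h0
    exact H ⟨i, (cokπ f).app i y, fun h => h0 ((Submodule.Quotient.mk_eq_zero _).1 h)⟩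
  · rintro H ⟨i, x, hx⟩
    obtain ⟨y, rfl⟩ := cokπ_sur f i x
    exact hx ((Submodule.Quotient.mk_eq_zero _).2 (H i y))

theorem tdim_le_of_inj {f : RepHom X Y} (hf : Inj f) : tdim X ≤ tdim Y := by
  rw [(ses_cok' f hf).tdim]; omega
theorem tdim_le_of_sur {f : RepHom X Y} (hf : Sur f) : tdim Y ≤ tdim X := by
  rw [(ses_ker' f hf).tdim]; omega

end Dims

section Euler

variable [Fintype V] [Fintype A]
variable {X Y Z A' B' C' : QuivRep K V A t h} {f : RepHom A' B'} {g : RepHom B' C'}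

/-- Euler form of dimension vectors -/
def eu (X Y : QuivRep K V A t h) : ℤ := eulerForm t h (natZ X.dimVec) (natZ Y.dimVec)

theorem extZ_iff_dim : ExtZ X Y ↔ extDim X Y = 0 := by
  unfold extDim ExtZ
  rw [Module.finrank_zero_iff, Submodule.Quotient.subsingleton_iff, LinearMap.range_eq_top]

theorem homS_ker : homS X Y = LinearMap.ker (dmap X Y) := by
  ext φ
  rw [LinearMap.mem_ker]
  constructor
  · intro H; exact dmap_hom ⟨φ, H⟩
  · intro H; exact (homOfD φ H).comm

theorem homZ_iff_dim : HomZ X Y ↔ homDim X Y = 0 := by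
  unfold homDim
  rw [Submodule.finrank_eq_zero, Submodule.eq_bot_iff]
  constructor
  · intro H φ hφ
    funext i; ext x
    exact H ⟨φ, hφ⟩ i x
  · intro H f i x
    have := H f.app f.comm
    rw [this]; rfl

theorem eu_eq : eu X Y = homDim X Y - extDim X Y := by
  have h1 := LinearMap.finrank_range_add_finrank_ker (dmap X Y)
  have h2 := Submodule.finrank_quotient_add_finrank (LinearMap.range (dmap X Y))
  rw [← homS_ker] at h1
  rw [Module.finrank_pi_fintype] at h1 h2
  simp only [Module.finrank_linearMap] at h1 h2
  unfold eu eulerForm homDim extDim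
  simp only [natZ, dimVec]
  have h1' : ((∑ i, Module.finrank K (X.sp i) * Module.finrank K (Y.sp i) : ℕ) : ℤ) =
    (Module.finrank K (LinearMap.range (dmap X Y)) : ℤ) + Module.finrank K (homS X Y) := by
    exact_mod_cast h1.symm
  have h2' := congrArg (Nat.cast : ℕ → ℤ) h2
  push_cast at h1' h2'
  rw [h1', ← h2']; ring

theorem SES.eu_right (S : SES f g) : eu X B' = eu X A' + eu X C' := by
  simp only [eu, eulerForm, natZ, S.dimVec]
  push_cast
  simp only [mul_add, Finset.sum_add_distrib]
  ring

theorem SES.eu_left (S : SES f g) : eu B' X = eu A' X + eu C' X := by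
  simp only [eu, eulerForm, natZ, S.dimVec]
  push_cast
  simp only [add_mul, Finset.sum_add_distrib]
  ring

theorem wt_weightL [DecidableEq V] (α : V → ℤ) :
    wt (weightL t h α) X = eulerForm t h α (natZ X.dimVec) := by
  simp only [wt, weightL, eulerForm, natZ, sub_mul, Finset.sum_sub_distrib]
  congr 1
  · refine Finset.sum_congr rfl fun i _ => ?_
    simp
  · simp only [Finset.sum_mul]
    rw [Finset.sum_comm]
    refine Finset.sum_congr rfl fun a _ => ?_
    simp

/-- universal extension step: the Ext dimension drops -/
theorem extDim_drop (C' A' S : QuivRep K V A t h) (hAS : ExtZ A' S)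
    (ξ : ∀ a : A, C'.sp (t a) →ₗ[K] A'.sp (h a)) (p : RepHom A' S)
    (hp : (fun a => (p.app (h a)).comp (ξ a)) ∉ LinearMap.range (dmap C' S)) :
    extDim (extRep C' A' ξ) S < extDim C' S := by
  set E := extRep C' A' ξ with hE
  have key : ∀ φ : ∀ i, C'.sp i →ₗ[K] S.sp i, ∀ a,
      (dmap C' S φ a).comp ((extπ C' A' ξ).app (t a)) =
        dmap E S (fun i => (φ i).comp ((extπ C' A' ξ).app i)) a := by
    intro φ a; ext x
    all_goals
      simp only [LinearMap.comp_apply, dmap_apply]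
      rw [hcomm]
  let Q : (∀ a : A, C'.sp (t a) →ₗ[K] S.sp (h a)) →ₗ[K] (∀ a : A, E.sp (t a) →ₗ[K] S.sp (h a)) :=
    LinearMap.pi fun a => (LinearMap.lcomp K (S.sp (h a)) ((extπ C' A' ξ).app (t a))).comp
      (LinearMap.proj a)
  have hQ : ∀ η a, Q η a = (η a).comp ((extπ C' A' ξ).app (t a)) := fun η a => rfl
  let q := Submodule.mapQ (LinearMap.range (dmap C' S)) (LinearMap.range (dmap E S)) Q (by
    rintro _ ⟨φ, rfl⟩
    exact ⟨_, (funext fun a => key φ a).symm⟩)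
  have hqs : Function.Surjective q := by
    intro y
    obtain ⟨η, rfl⟩ := Submodule.mkQ_surjective _ y
    rw [extZ_iff] at hAS
    obtain ⟨ψ, hψ⟩ := hAS (fun a => (η a).comp ((extι C' A' ξ).app (t a)))
    choose r hr using fun i => retr ((extι C' A' ξ).app i) ((ses_ext C' A' ξ).inj i)
    have : ∀ a : A, ∃ v : C'.sp (t a) →ₗ[K] S.sp (h a), ∀ x, v ((extπ C' A' ξ).app (t a) x) =
        (η - dmap E S (fun i => (ψ i).comp (r i))) a x := by
      intro a
      apply fac_surj _ ((ses_ext C' A' ξ).sur _)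
      intro x hx
      obtain ⟨y, rfl⟩ := (ses_ext C' A' ξ).ex _ _ hx
      have := hψ a y
      rw [Pi.sub_apply, LinearMap.sub_apply, dmap_apply]
      simp only [LinearMap.comp_apply, ← hcomm, hr] at this ⊢
      rw [this]; simp
    choose v hv using this
    refine ⟨Submodule.Quotient.mk v, ?_⟩
    rw [Submodule.mapQ_apply, Submodule.mkQ_apply, Submodule.Quotient.eq]
    refine ⟨-(fun i => (ψ i).comp (r i)), ?_⟩
    rw [map_neg]
    funext a
    ext1 x
    have := hv a x
    rw [Pi.sub_apply, LinearMap.sub_apply, hQ, LinearMap.comp_apply, this]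
    simp
  have hker : LinearMap.ker q ≠ ⊥ := by
    intro hb
    apply hp
    have : Submodule.Quotient.mk (fun a => (p.app (h a)).comp (ξ a)) ∈ LinearMap.ker q := by
      rw [LinearMap.mem_ker, Submodule.mapQ_apply, Submodule.Quotient.mk_eq_zero]
      refine ⟨fun i => (p.app i).comp (extFst C' A' ξ i), ?_⟩
      funext a
      apply LinearMap.ext
      intro x
      rw [dmap_apply, hQ]
      simp only [LinearMap.comp_apply]
      rw [extFst_map, map_add, hcomm]
      abel
    rw [hb, Submodule.mem_bot, Submodule.Quotient.mk_eq_zero] at this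
    exact this
  have h1 := LinearMap.finrank_range_add_finrank_ker q
  rw [LinearMap.range_eq_top.2 hqs, finrank_top] at h1
  have h2 : 0 < Module.finrank K (LinearMap.ker q) := by
    rw [Nat.pos_iff_ne_zero]
    intro h0
    exact hker (Submodule.finrank_eq_zero.1 h0)
  unfold extDim
  omega

theorem extDim_drop2 (C' A' : QuivRep K V A t h) (hC : ExtZ C' C')
    (ξ : ∀ a : A, C'.sp (t a) →ₗ[K] A'.sp (h a))
    (hp : ξ ∉ LinearMap.range (dmap C' A')) :
    extDim C' (extRep C' A' ξ) < extDim C' A' := by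
  set E := extRep C' A' ξ with hE
  have key : ∀ φ : ∀ i, C'.sp i →ₗ[K] A'.sp i, ∀ a,
      ((extι C' A' ξ).app (h a)).comp (dmap C' A' φ a) =
        dmap C' E (fun i => ((extι C' A' ξ).app i).comp (φ i)) a := by
    intro φ a; ext1 x
    simp only [LinearMap.comp_apply, dmap_apply, map_sub]
    rw [hcomm]
  let Q : (∀ a : A, C'.sp (t a) →ₗ[K] A'.sp (h a)) →ₗ[K] (∀ a : A, C'.sp (t a) →ₗ[K] E.sp (h a)) :=
    LinearMap.pi fun a => (((extι C' A' ξ).app (h a)).compRight K).comp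
      (LinearMap.proj a)
  have hQ : ∀ η a, Q η a = ((extι C' A' ξ).app (h a)).comp (η a) := fun η a => rfl
  let q := Submodule.mapQ (LinearMap.range (dmap C' A')) (LinearMap.range (dmap C' E)) Q (by
    rintro _ ⟨φ, rfl⟩
    exact ⟨_, (funext fun a => key φ a).symm⟩)
  have hqs : Function.Surjective q := by
    intro y
    obtain ⟨η, rfl⟩ := Submodule.mkQ_surjective _ y
    rw [extZ_iff] at hC
    obtain ⟨ψ, hψ⟩ := hC (fun a => ((extπ C' A' ξ).app (h a)).comp (η a))
    choose s hs using fun i => sect ((extπ C' A' ξ).app i) ((ses_ext C' A' ξ).sur i)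
    have : ∀ a : A, ∃ v : C'.sp (t a) →ₗ[K] A'.sp (h a), ∀ x, (extι C' A' ξ).app (h a) (v x) =
        (η - dmap C' E (fun i => (s i).comp (ψ i))) a x := by
      intro a
      apply fac_inj _ ((ses_ext C' A' ξ).inj _)
      intro x
      apply (ses_ext C' A' ξ).ex
      have := hψ a x
      rw [Pi.sub_apply, LinearMap.sub_apply, dmap_apply, map_sub, map_sub, hcomm]
      simp only [LinearMap.comp_apply, hs] at this ⊢
      rw [this]; simp
    choose v hv using this
    refine ⟨Submodule.Quotient.mk v, ?_⟩
    rw [Submodule.mapQ_apply, Submodule.mkQ_apply, Submodule.Quotient.eq]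
    refine ⟨-(fun i => (s i).comp (ψ i)), ?_⟩
    rw [map_neg]
    funext a
    ext1 x
    have := hv a x
    rw [Pi.sub_apply, LinearMap.sub_apply, hQ, LinearMap.comp_apply, this]
    simp
  have hker : LinearMap.ker q ≠ ⊥ := by
    intro hb
    apply hp
    have : Submodule.Quotient.mk ξ ∈ LinearMap.ker q := by
      rw [LinearMap.mem_ker, Submodule.mapQ_apply, Submodule.Quotient.mk_eq_zero]
      refine ⟨-fun i => extInr C' A' ξ i, ?_⟩
      rw [map_neg]
      funext a
      apply LinearMap.ext
      intro x
      rw [Pi.neg_apply, LinearMap.neg_apply, dmap_apply, hQ, extMap_inr]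
      simp only [LinearMap.comp_apply]
      abel
    rw [hb, Submodule.mem_bot, Submodule.Quotient.mk_eq_zero] at this
    exact this
  have h1 := LinearMap.finrank_range_add_finrank_ker q
  rw [LinearMap.range_eq_top.2 hqs, finrank_top] at h1
  have h2 : 0 < Module.finrank K (LinearMap.ker q) := by
    rw [Nat.pos_iff_ne_zero]
    intro h0
    exact hker (Submodule.finrank_eq_zero.1 h0)
  unfold extDim
  omega

end Euler

section Torsion

variable [Fintype V]
variable {X Y Z A' B' C' W : QuivRep K V A t h} {f : RepHom A' B'} {g : RepHom B' C'} {σ : V → ℤ}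

/-- torsion objects -/
def TT (σ : V → ℤ) (X : QuivRep K V A t h) : Prop :=
  ∀ (Y : QuivRep K V A t h) (g : RepHom X Y), Sur g → Nz Y → 0 < wt σ Y
/-- torsion-free objects -/
def FF (σ : V → ℤ) (X : QuivRep K V A t h) : Prop :=
  ∀ (Y : QuivRep K V A t h) (f : RepHom Y X), Inj f → wt σ Y ≤ 0
/-- semistable objects -/
def WW (σ : V → ℤ) (X : QuivRep K V A t h) : Prop := wt σ X = 0 ∧ FF σ X
/-- stable objects -/
def ST (σ : V → ℤ) (X : QuivRep K V A t h) : Prop :=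
  wt σ X = 0 ∧ Nz X ∧ ∀ (Y : QuivRep K V A t h) (f : RepHom Y X), Inj f → Nz Y → ¬ Sur f →
    wt σ Y < 0

theorem st_iff : IsStable K σ X ↔ ST σ X := by
  unfold IsStable ST
  refine and_congr Iff.rfl (and_congr ?_ ?_)
  · rw [ne_eq, ← not_nz_dim, not_not]
  · constructor
    · intro H Y f hf hY hs
      let U : Sub X := ⟨fun i => LinearMap.range (f.app i), fun a x hx => by
        obtain ⟨y, rfl⟩ := hx
        exact ⟨Y.map a y, hcomm f a y⟩⟩
      have hU : U.dimVec = Y.dimVec := by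
        funext i; exact LinearMap.finrank_range_of_inj (hf i)
      have := H U
      rw [hU] at this
      refine this ?_ ?_
      · rw [ne_eq, ← not_nz_dim, not_not]; exact hY
      · intro hd; exact hs (sur_of_inj hf hd)
    · intro H U h1 h2
      let Y : QuivRep K V A t h := ⟨fun i => U.sub i, fun a => (X.map a).restrict (U.le a)⟩
      let f : RepHom Y X := mk' (fun i => (U.sub i).subtype) (fun _ _ => rfl)
      have hf : Inj f := fun i => Subtype.val_injective
      refine H Y f hf ?_ ?_
      · by_contra hc
        exact h1 (not_nz_dim.1 hc)
      · intro hs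
        apply h2
        funext i
        have : LinearMap.range (U.sub i).subtype = ⊤ := LinearMap.range_eq_top.2 (hs i)
        rw [Submodule.range_subtype] at this
        change Module.finrank K (U.sub i) = _
        rw [this, finrank_top]; rfl

theorem ST.ww (H : ST σ X) : WW σ X := by
  refine ⟨H.1, fun Y f hf => ?_⟩
  by_cases hY : Nz Y
  · by_cases hs : Sur f
    · rw [iso_wt (iso_of_bij f hf hs), H.1]
    · exact (H.2.2 Y f hf hY hs).le
  · rw [wt_of_not_nz hY]

theorem WW.wt_sur (H : WW σ X) (g : RepHom X Y) (hg : Sur g) : 0 ≤ wt σ Y := by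
  have h1 := (ses_ker' g hg).wt σ
  have h2 := H.2 _ _ (kerι_inj g)
  rw [H.1] at h1; omega

theorem ST.wt_sur (H : ST σ X) (g : RepHom X Y) (hg : Sur g) (hY : Nz Y) (hi : ¬ Inj g) :
    0 < wt σ Y := by
  have h1 := (ses_ker' g hg).wt σ
  have h2 := H.2.2 _ _ (kerι_inj g) (by rwa [← ker_nz, not_not] at hi) (by
    intro hs
    obtain ⟨i, y, hy⟩ := hY
    obtain ⟨x, rfl⟩ := hg i y
    obtain ⟨z, rfl⟩ := hs i x
    exact hy z.2)
  rw [H.1] at h1; omega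

theorem TT.sur (H : TT σ X) {g : RepHom X Y} (hg : Sur g) : TT σ Y :=
  fun _ g' hg' hZ => H _ _ (hg.comp hg') hZ
theorem FF.inj (H : FF σ X) {f : RepHom Y X} (hf : Inj f) : FF σ Y :=
  fun _ f' hf' => H _ _ (hf'.comp hf)
theorem TT.wt_pos (H : TT σ X) (hX : Nz X) : 0 < wt σ X := H X _ Sur.id hX
theorem TT.wt_nonneg (H : TT σ X) : 0 ≤ wt σ X := by
  by_cases hX : Nz X
  · exact (H.wt_pos hX).le
  · rw [wt_of_not_nz hX]
theorem FF.wt_le (H : FF σ X) : wt σ X ≤ 0 := H X _ Inj.id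
theorem TT.iso (H : TT σ X) (e : RepIso K X Y) : TT σ Y := by
  obtain ⟨f, g, hf⟩ := iso_hom e
  exact H.sur hf.2.1
theorem FF.iso (H : FF σ X) (e : RepIso K X Y) : FF σ Y := by
  obtain ⟨f, g, hf⟩ := iso_hom e
  exact H.inj hf.2.2.1
theorem WW.iso (H : WW σ X) (e : RepIso K X Y) : WW σ Y :=
  ⟨by rw [← iso_wt e, H.1], H.2.iso e⟩
theorem tt_zero (H : ¬ Nz X) : TT σ X := fun _ _ hg hY => (H (hY.of_sur hg)).elim
theorem ff_zero (H : ¬ Nz X) : FF σ X := fun Y f hf => by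
  by_cases hY : Nz Y
  · exact (H (hY.of_inj hf)).elim
  · rw [wt_of_not_nz hY]
theorem ww_zero (H : ¬ Nz X) : WW σ X := ⟨wt_of_not_nz H σ, ff_zero H⟩
theorem not_nz_of_tt_ff (H1 : TT σ X) (H2 : FF σ X) : ¬ Nz X := fun h => by
  have := H1.wt_pos h
  have := H2.wt_le
  omega

theorem homZ_tt_ff (H1 : TT σ X) (H2 : FF σ Y) : HomZ X Y := by
  intro f
  rw [← im_nz]
  exact not_nz_of_tt_ff (H1.sur (imπ_sur f)) (H2.inj (imι_inj f))

theorem TT.ext (S : SES f g) (H1 : TT σ A') (H2 : TT σ C') : TT σ B' := by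
  intro Y u hu hY
  have h1 := ses_cok (f.comp u)
  have h2 := H1.sur (imπ_sur (f.comp u))
  obtain ⟨v, hv⟩ := S.desc (u.comp (cokπ (f.comp u)))
    (fun i x => h1.zer i ((imπ (f.comp u)).app i x))
  have hvs : Sur v := by
    intro i z
    obtain ⟨x, hx⟩ := (hu.comp h1.sur) i z
    exact ⟨g.app i x, by rw [hv, hx]⟩
  have h3 := H2.sur hvs
  have h4 := h1.wt σ
  by_cases hc : Nz (cokRep (f.comp u))
  · have := h3.wt_pos hc
    have := h2.wt_nonneg
    omega
  · have h5 := wt_of_not_nz hc σ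
    rw [cok_nz] at hc
    have : Nz (imRep (f.comp u)) := by
      obtain ⟨i, y, hy⟩ := hY
      obtain ⟨x, rfl⟩ := hc i y
      exact ⟨i, (imπ (f.comp u)).app i x, fun h => hy (congrArg Subtype.val h)⟩
    have := h2.wt_pos this
    omega

theorem FF.ext (S : SES f g) (H1 : FF σ A') (H2 : FF σ C') : FF σ B' := by
  intro Y u hu
  have h1 := ses_ker (u.comp g)
  have h2 := h1.wt σ
  have h3 := (H2.inj (imι_inj (u.comp g))).wt_le
  obtain ⟨v, hv⟩ := S.lift ((kerι (u.comp g)).comp u) (fun i x => x.2)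
  have hvi : Inj v := by
    rw [inj_iff]
    intro i x hx
    have := hv i x
    rw [hx, map_zero] at this
    exact (inj_iff _).1 ((kerι_inj (u.comp g)).comp hu) i x this.symm
  have := H1 _ v hvi
  omega

theorem WW.ext (S : SES f g) (H1 : WW σ A') (H2 : WW σ C') : WW σ B' :=
  ⟨by rw [S.wt, H1.1, H2.1]; rfl, FF.ext S H1.2 H2.2⟩

theorem torsion (σ : V → ℤ) (X : QuivRep K V A t h) :
    ∃ (T F : QuivRep K V A t h) (f : RepHom T X) (g : RepHom X F), SES f g ∧ TT σ T ∧ FF σ F := by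
  obtain ⟨N, hN⟩ : ∃ N : ℤ, N = (tdim X : ℤ) := ⟨_, rfl⟩
  have hN0 : 0 ≤ N := by rw [hN]; positivity
  let P : ℤ → Prop := fun z => ∃ (T : QuivRep K V A t h) (f : RepHom T X), Inj f ∧
    z = (N + 1) * wt σ T - tdim T
  have hb : ∃ b : ℤ, ∀ z, P z → z ≤ b := by
    refine ⟨(N + 1) * ∑ i, |σ i| * X.dimVec i, ?_⟩
    rintro z ⟨T, f, hf, rfl⟩
    have h1 : wt σ T ≤ ∑ i, |σ i| * X.dimVec i := by
      refine Finset.sum_le_sum fun i _ => ?_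
      have : (T.dimVec i : ℤ) ≤ X.dimVec i := by
        exact_mod_cast LinearMap.finrank_le_finrank_of_injective (hf i)
      have h2 : (0:ℤ) ≤ T.dimVec i := by positivity
      exact (mul_le_mul_of_nonneg_right (le_abs_self _) h2).trans
        (mul_le_mul_of_nonneg_left this (abs_nonneg _))
    have h2 : (0:ℤ) ≤ tdim T := by positivity
    have h3 : (0:ℤ) ≤ N + 1 := by positivity
    have := mul_le_mul_of_nonneg_left h1 h3
    omega
  obtain ⟨m, ⟨T, f, hf, hm⟩, hmax⟩ := Int.exists_greatest_of_bdd hb ⟨_, X, RepHom.idHom X, Inj.id, rfl⟩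
  have S := ses_cok' f hf
  refine ⟨T, cokRep f, f, cokπ f, S, ?_, ?_⟩
  · intro Y g hg hY
    have h1 := hmax _ ⟨kerRep g, (kerι g).comp f, (kerι_inj g).comp hf, rfl⟩
    have h2 := (ses_ker' g hg).wt σ
    have h3 := (ses_ker' g hg).tdim
    have h4 := tdim_pos.2 hY
    rw [hm, h2, h3] at h1
    push_cast at h1
    have h5 : 0 < (N + 1) * wt σ Y := by
      have : (0:ℤ) < tdim Y := by exact_mod_cast h4
      linarith
    have h3 : (0:ℤ) < N + 1 := by positivity
    exact (pos_iff_pos_of_mul_pos h5).1 h3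
  · intro Y j hj
    obtain ⟨f', S'⟩ := pb_ses S j
    have h1 := hmax _ ⟨pbRep (cokπ f) j, pb1 _ _, pb1_inj _ _ hj, rfl⟩
    have h2 := S'.wt σ
    have h3 := S'.tdim
    rw [hm, h2, h3] at h1
    push_cast at h1
    have h4 : (tdim Y : ℤ) ≤ N := by
      have e1 := tdim_le_of_inj hj
      have e2 := tdim_le_of_sur S.sur
      rw [hN]; exact_mod_cast e1.trans e2
    have h5 : (N + 1) * wt σ Y < (N + 1) * 1 := by linarith
    have h3 : (0:ℤ) < N + 1 := by positivity
    have := lt_of_mul_lt_mul_left h5 h3.le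
    omega

theorem ff_of_tt (H : ∀ (T : QuivRep K V A t h) (u : RepHom T X), Inj u → TT σ T → ¬ Nz T) :
    FF σ X := by
  intro Y f hf
  obtain ⟨T, F, u, v, S, hT, hF⟩ := torsion σ Y
  have h1 := S.wt σ
  have h2 := wt_of_not_nz (H T (u.comp f) (S.inj.comp hf) hT) σ
  have h3 := hF.wt_le
  omega

/-- a map from stable to semistable is injective or zero -/
theorem st_ww_inj (H1 : ST σ W) (H2 : WW σ X) (f : RepHom W X) (hf : ¬ IsZ f) : Inj f := by
  by_contra hi
  have h1 := H1.wt_sur (imπ f) (imπ_sur f) (by rwa [← im_nz, not_not] at hf) (by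
    intro h; exact hi fun i x y hxy => h i (Subtype.ext hxy))
  have h2 := H2.2 _ _ (imι_inj f)
  omega

theorem ww_st_sur (H1 : ST σ W) (H2 : WW σ X) (f : RepHom X W) (hf : ¬ IsZ f) : Sur f := by
  by_contra hi
  have h1 := H1.2.2 _ (imι f) (imι_inj f) (by rwa [← im_nz, not_not] at hf) (by
    intro h; apply hi; intro i y
    obtain ⟨z, rfl⟩ := h i y
    obtain ⟨x, rfl⟩ := imπ_sur f i z
    exact ⟨x, rfl⟩)
  have h2 := H2.wt_sur _ (imπ_sur f)
  omega

theorem st_st (H1 : ST σ X) (H2 : ST σ Y) (f : RepHom X Y) (hf : ¬ IsZ f) : Inj f ∧ Sur f :=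
  ⟨st_ww_inj H1 H2.ww f hf, ww_st_sur H2 H1.ww f hf⟩

theorem ww_cok (S : SES f g) (H1 : wt σ A' = 0) (H2 : WW σ B') : WW σ C' := by
  refine ⟨by have := S.wt σ; rw [H1, H2.1] at this; omega, fun Y j hj => ?_⟩
  obtain ⟨f', S'⟩ := pb_ses S j
  have h1 := H2.2 _ _ (pb1_inj g j hj)
  have := S'.wt σ
  omega

theorem ww_ker (S : SES f g) (H1 : wt σ C' = 0) (H2 : WW σ B') : WW σ A' :=
  ⟨by have := S.wt σ; rw [H1, H2.1] at this; omega, H2.2.inj S.inj⟩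

theorem exists_st (H : WW σ X) (hX : Nz X) : ∃ (W : QuivRep K V A t h) (f : RepHom W X),
    ST σ W ∧ Inj f := by
  induction hn : tdim X using Nat.strong_induction_on generalizing X with
  | _ n ih =>
    by_cases hs : ST σ X
    · exact ⟨X, RepHom.idHom X, hs, Inj.id⟩
    · have : ∃ (Y : QuivRep K V A t h) (f : RepHom Y X), Inj f ∧ Nz Y ∧ ¬ Sur f ∧ 0 ≤ wt σ Y := by
        by_contra hc
        push Not at hc
        exact hs ⟨H.1, hX, fun Y f h1 h2 h3 => hc Y f h1 h2 h3⟩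
      obtain ⟨Y, f, h1, h2, h3, h4⟩ := this
      have h5 : WW σ Y := ⟨le_antisymm (H.2 Y f h1) h4, H.2.inj h1⟩
      have h6 := (ses_cok' f h1).tdim
      rw [← cok_nz, not_not] at h3
      have h7 := tdim_pos.2 h3
      obtain ⟨W, u, hW, hu⟩ := ih (tdim Y) (by omega) h5 h2 rfl
      exact ⟨W, u.comp f, hW, hu.comp h1⟩

theorem ww_ind {P : QuivRep K V A t h → Prop} (h0 : ∀ X, ¬ Nz X → P X)
    (hs : ∀ (A' B' C' : QuivRep K V A t h) (f : RepHom A' B') (g : RepHom B' C'), SES f g →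
      ST σ A' → WW σ C' → P C' → P B') : ∀ X, WW σ X → P X := by
  intro X
  induction hn : tdim X using Nat.strong_induction_on generalizing X with
  | _ n ih =>
    intro H
    by_cases hX : Nz X
    · obtain ⟨W, f, hW, hf⟩ := exists_st H hX
      have S := ses_cok' f hf
      have h1 := ww_cok S hW.1 H
      have := S.tdim
      have := tdim_pos.2 hW.2.1
      exact hs _ _ _ _ _ S hW h1 (ih _ (by omega) _ rfl h1)
    · exact h0 X hX

/-- scalar endomorphisms -/
def Brick (X : QuivRep K V A t h) : Prop := ∀ f : RepHom X X, ∃ c : K, ∀ i x, f.app i x = c • x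

theorem brick_of [IsAlgClosed K] (hX : Nz X) (H : ∀ f : RepHom X X, ¬ IsZ f → Inj f) : Brick X := by
  intro f
  obtain ⟨i, x, hx⟩ := hX
  have : Nontrivial (X.sp i) := ⟨x, 0, hx⟩
  obtain ⟨c, hc⟩ := Module.End.exists_eigenvalue (f.app i : Module.End K (X.sp i))
  obtain ⟨v, hv⟩ := hc.exists_hasEigenvector
  refine ⟨c, ?_⟩
  have : IsZ (hsub f (RepHom.smul c (RepHom.idHom X))) := by
    by_contra hn
    have := (inj_iff _).1 (H _ hn) i v (by
      rw [hsub_app]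
      have := hv.apply_eq_smul
      change f.app i v = c • v at this
      rw [this]
      exact sub_self _)
    exact hv.2 this
  intro j y
  have := this j y
  rw [hsub_app] at this
  exact sub_eq_zero.1 this

theorem ST.brick [IsAlgClosed K] (H : ST σ X) : Brick X :=
  brick_of H.2.1 fun f hf => (st_st H H f hf).1

end Torsion

section Quiver

theorem isPath_append (t h : A → V) {i j k : V} {p q : List A} (hp : IsPathFrom t h i p j)
    (hq : IsPathFrom t h j q k) : IsPathFrom t h i (p ++ q) k := by
  induction p generalizing i with
  | nil => cases hp; exact hq
  | cons a p ih => exact ⟨hp.1, ih hp.2⟩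

theorem transGen_path {i j : V} (H : Relation.TransGen (fun i j => ∃ a, t a = i ∧ h a = j) i j) :
    ∃ p : List A, p ≠ [] ∧ IsPathFrom t h i p j := by
  induction H with
  | single H => obtain ⟨a, h1, h2⟩ := H; exact ⟨[a], by simp, h1, h2⟩
  | tail _ H ih =>
    obtain ⟨p, hp, hp'⟩ := ih
    obtain ⟨a, h1, h2⟩ := H
    exact ⟨p ++ [a], by simp, isPath_append t h hp' ⟨h1, h2⟩⟩

variable [Fintype V]

theorem wf_fwd (hQ : Acyclic t h) : WellFounded (fun i j : V => ∃ a, t a = i ∧ h a = j) := by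
  have : IsIrrefl V (Relation.TransGen (fun i j : V => ∃ a, t a = i ∧ h a = j)) :=
    ⟨fun i hi => by
      obtain ⟨p, hp, hp'⟩ := transGen_path hi
      exact hp (hQ i p hp')⟩
  have := Finite.wellFounded_of_trans_of_irrefl
    (Relation.TransGen (fun i j : V => ∃ a, t a = i ∧ h a = j))
  exact Subrelation.wf (fun {_ _} h => Relation.TransGen.single h) this

theorem wf_bwd (hQ : Acyclic t h) : WellFounded (fun j i : V => ∃ a, t a = i ∧ h a = j) := by
  have : IsIrrefl V (Function.swap (Relation.TransGen (fun i j : V => ∃ a, t a = i ∧ h a = j))) :=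
    ⟨fun i hi => by
      obtain ⟨p, hp, hp'⟩ := transGen_path hi
      exact hp (hQ i p hp')⟩
  have := Finite.wellFounded_of_trans_of_irrefl
    (Function.swap (Relation.TransGen (fun i j : V => ∃ a, t a = i ∧ h a = j)))
  exact Subrelation.wf (fun {_ _} h => Relation.TransGen.single h) this

variable [DecidableEq V] [Fintype A]

/-- first arrow decomposition -/
def pathEquiv (t h : A → V) (i j : V) : {p : List A | IsPathFrom t h i p j} ≃
    (PLift (i = j)) ⊕ (Σ a : {a : A // t a = i}, {p : List A | IsPathFrom t h (h a.1) p j}) where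
  toFun := fun p => match p with
    | ⟨[], hp⟩ => Sum.inl ⟨hp⟩
    | ⟨a :: p, hp⟩ => Sum.inr ⟨⟨a, hp.1⟩, ⟨p, hp.2⟩⟩
  invFun := fun s => match s with
    | Sum.inl e => ⟨[], e.down⟩
    | Sum.inr ⟨a, p⟩ => ⟨a.1 :: p.1, ⟨a.2, p.2⟩⟩
  left_inv := by rintro ⟨_ | ⟨a, p⟩, hp⟩ <;> rfl
  right_inv := by rintro (e | ⟨a, p⟩) <;> rfl

theorem path_finite (hQ : Acyclic t h) (i j : V) : Finite {p : List A | IsPathFrom t h i p j} := by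
  induction i using (wf_bwd hQ).induction with
  | _ i ih =>
    have : ∀ a : {a : A // t a = i}, Finite {p : List A | IsPathFrom t h (h a.1) p j} :=
      fun a => ih _ ⟨a.1, a.2, rfl⟩
    exact Finite.of_equiv _ (pathEquiv t h i j).symm

theorem gamma_rec (hQ : Acyclic t h) (i j : V) :
    gammaRoot t h i j = (if i = j then 1 else 0) + ∑ a : {a : A // t a = i}, gammaRoot t h (h a.1) j := by
  have : ∀ a : {a : A // t a = i}, Finite {p : List A | IsPathFrom t h (h a.1) p j} :=
    fun a => path_finite hQ _ _
  unfold gammaRoot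
  rw [← Nat.card_coe_set_eq, Nat.card_congr (pathEquiv t h i j), Nat.card_sum, Nat.card_sigma]
  congr 1
  split_ifs with hij
  · rw [Nat.card_eq_fintype_card]; simp [hij]
  · have : IsEmpty (PLift (i = j)) := ⟨fun e => hij e.down⟩
    simp

theorem euler_gamma (hQ : Acyclic t h) (i : V) (y : V → ℤ) :
    eulerForm t h (natZ (gammaRoot t h i)) y = y i := by
  induction i using (wf_bwd hQ).induction with
  | _ i ih =>
    have e : natZ (gammaRoot t h i) = (fun j => (if i = j then (1:ℤ) else 0)) +
        ∑ a : {a : A // t a = i}, natZ (gammaRoot t h (h a.1)) := by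
      funext j
      simp only [natZ, Pi.add_apply, Finset.sum_apply]
      rw [gamma_rec hQ]
      push_cast
      rfl
    have e2 : ∀ a : {a : A // t a = i}, eulerForm t h (natZ (gammaRoot t h (h a.1))) y = y (h a.1) :=
      fun a => ih _ ⟨a.1, a.2, rfl⟩
    rw [e]
    have lin : eulerForm t h ((fun j => (if i = j then (1:ℤ) else 0)) +
        ∑ a : {a : A // t a = i}, natZ (gammaRoot t h (h a.1))) y =
        eulerForm t h (fun j => (if i = j then (1:ℤ) else 0)) y +
          ∑ a : {a : A // t a = i}, eulerForm t h (natZ (gammaRoot t h (h a.1))) y := by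
      simp only [eulerForm, Pi.add_apply, Finset.sum_apply, add_mul, Finset.sum_add_distrib,
        Finset.sum_mul, Finset.sum_sub_distrib]
      rw [Finset.sum_comm (s := Finset.univ (α := V)), Finset.sum_comm (s := Finset.univ (α := A))]
      ring
    rw [lin, Finset.sum_congr rfl fun a _ => e2 a]
    simp only [eulerForm, ite_mul, one_mul, zero_mul, Finset.sum_ite_eq, Finset.mem_univ, if_true]
    have : ∑ a : A, (if i = t a then y (h a) else 0) = ∑ a : {a : A // t a = i}, y (h a.1) := by
      rw [← Finset.sum_filter]
      symm
      rw [Finset.sum_subtype (p := fun a => t a = i)]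
      intro a; simp [eq_comm]
    rw [this]; ring

theorem weightL_inj (hQ : Acyclic t h) {α β : V → ℤ} (H : weightL t h α = weightL t h β) : α = β := by
  have key : ∀ (α : V → ℤ) (i : V), weightL t h α i = α i - ∑ a, (if h a = i then α (t a) else 0) := by
    intro α i
    simp [weightL, eulerForm]
  funext i
  induction i using (wf_fwd hQ).induction with
  | _ i ih =>
    have h1 := congrFun H i
    rw [key, key] at h1
    have : ∑ a, (if h a = i then α (t a) else 0) = ∑ a, (if h a = i then β (t a) else 0) := by
      refine Finset.sum_congr rfl fun a _ => ?_
      split_ifs with ha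
      · exact ih _ ⟨a, rfl, ha⟩
      · rfl
    omega

theorem weightL_lin (α β : V → ℤ) : weightL t h (α + β) = weightL t h α + weightL t h β := by
  funext i
  simp only [weightL, eulerForm, Pi.add_apply, add_mul, Finset.sum_add_distrib]
  ring

theorem eulerForm_add (α β y : V → ℤ) : eulerForm t h (α + β) y = eulerForm t h α y + eulerForm t h β y := by
  simp only [eulerForm, Pi.add_apply, add_mul, Finset.sum_add_distrib]
  ring

theorem eulerForm_smul (c : ℤ) (α y : V → ℤ) : eulerForm t h (c • α) y = c * eulerForm t h α y := by
  simp only [eulerForm, Pi.smul_apply, smul_eq_mul, mul_sub, Finset.mul_sum, mul_assoc]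

end Quiver

section Simples

variable [Fintype V] [DecidableEq V] {X : QuivRep K V A t h} {σ : V → ℤ}

theorem simple_dim (i j : V) : (simpleRep K t h i).dimVec j = if j = i then 1 else 0 := by
  change Module.finrank K (↥(if j = i then ⊤ else ⊥ : Submodule K K)) = _
  by_cases hj : j = i
  · rw [if_pos hj, if_pos hj, finrank_top, Module.finrank_self]
  · rw [if_neg hj, if_neg hj, finrank_bot]

theorem simple_wt (i : V) : wt σ (simpleRep K t h i) = σ i := by
  simp [wt, simple_dim]

theorem hom_to_simple (hQ : Acyclic t h) (hX : Nz X) : ∃ i, ¬ HomZ X (simpleRep K t h i) := by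
  obtain ⟨i0, ⟨x, hx⟩, hmin⟩ := (wf_fwd hQ).has_min {i | ∃ x : X.sp i, x ≠ 0} hX
  refine ⟨i0, not_homZ.2 ?_⟩
  obtain ⟨l, hl⟩ : ∃ l : X.sp i0 →ₗ[K] K, l x ≠ 0 := by
    by_contra hc
    push Not at hc
    exact hx ((Module.forall_dual_apply_eq_zero_iff K x).1 hc)
  let ℓ : ∀ j, X.sp j →ₗ[K] K := Pi.single i0 l
  have hℓ : ∀ j, j ≠ i0 → ℓ j = 0 := fun j hj => Pi.single_eq_of_ne (M := fun j => X.sp j →ₗ[K] K) hj l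
  have hℓ0 : ℓ i0 = l := Pi.single_eq_same (M := fun j => X.sp j →ₗ[K] K) i0 l
  refine ⟨mk' (fun j => LinearMap.codRestrict (if j = i0 then ⊤ else ⊥ : Submodule K K) (ℓ j)
    (fun y => ?_)) ?_, ?_⟩
  · split_ifs with hj
    · trivial
    · rw [hℓ j hj]; simp
  · intro a y
    apply Subtype.ext
    change ℓ (h a) (X.map a y) = 0
    by_cases ha : h a = i0
    · have : y = 0 := by
        by_contra hy
        exact hmin (t a) ⟨y, hy⟩ ⟨a, rfl, ha⟩
      simp [this]
    · rw [hℓ _ ha]; rfl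
  · intro hz
    have := congrArg Subtype.val (hz i0 x)
    change ℓ i0 x = 0 at this
    rw [hℓ0] at this
    exact hl this

theorem hom_from_simple (hQ : Acyclic t h) (hX : Nz X) :
    ∃ i, (∃ x : X.sp i, x ≠ 0) ∧ ¬ HomZ (simpleRep K t h i) X := by
  obtain ⟨i0, ⟨x, hx⟩, hmin⟩ := (wf_bwd hQ).has_min {i | ∃ x : X.sp i, x ≠ 0} hX
  refine ⟨i0, ⟨x, hx⟩, not_homZ.2 ?_⟩
  let ℓ : ∀ j, K →ₗ[K] X.sp j := Pi.single i0 (LinearMap.toSpanSingleton K _ x)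
  have hℓ : ∀ j, j ≠ i0 → ℓ j = 0 := fun j hj => Pi.single_eq_of_ne (M := fun j => K →ₗ[K] X.sp j) hj _
  have hℓ0 : ℓ i0 = LinearMap.toSpanSingleton K _ x := Pi.single_eq_same (M := fun j => K →ₗ[K] X.sp j) i0 _
  refine ⟨mk' (fun j => (ℓ j).comp (Submodule.subtype (if j = i0 then ⊤ else ⊥ : Submodule K K))) ?_,
    ?_⟩
  · intro a y
    have e : (simpleRep K t h i0).map a y = 0 := rfl
    rw [e, map_zero]
    symm
    change X.map a (ℓ (t a) y.1) = 0
    by_cases ha : t a = i0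
    · by_contra hy
      exact hmin (h a) ⟨_, hy⟩ ⟨a, ha, rfl⟩
    · rw [hℓ _ ha]; simp
  · intro hz
    have := hz i0 ⟨1, by simp⟩
    change ℓ i0 1 = 0 at this
    rw [hℓ0] at this
    exact hx (by simpa using this)

theorem simple_tt {i : V} (hi : 0 < σ i) : TT σ (simpleRep K t h i) := by
  intro Y g hg hY
  have h1 : ∀ j, j ≠ i → Y.dimVec j = 0 := by
    intro j hj
    have := LinearMap.finrank_le_finrank_of_surjective (hg j)
    have h2 : (simpleRep K t h i).dimVec j = 0 := by rw [simple_dim, if_neg hj]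
    unfold dimVec at h2 ⊢
    omega
  have h2 : wt σ Y = σ i * Y.dimVec i := by
    unfold wt
    rw [Finset.sum_eq_single i]
    · intro j _ hj; rw [h1 j hj]; simp
    · simp
  have h3 : Y.dimVec i ≠ 0 := by
    intro h0
    rw [← not_not (a := Nz Y), not_nz_dim] at hY
    apply hY
    funext j
    by_cases hj : j = i
    · rw [hj, h0]
    · exact h1 j hj
  rw [h2]
  exact mul_pos hi (by exact_mod_cast Nat.pos_of_ne_zero h3)

theorem simple_ff {i : V} (hi : σ i ≤ 0) : FF σ (simpleRep K t h i) := by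
  intro Y g hg
  have h1 : ∀ j, j ≠ i → Y.dimVec j = 0 := by
    intro j hj
    have := LinearMap.finrank_le_finrank_of_injective (hg j)
    have h2 : (simpleRep K t h i).dimVec j = 0 := by rw [simple_dim, if_neg hj]
    unfold dimVec at h2 ⊢
    omega
  have h2 : wt σ Y = σ i * Y.dimVec i := by
    unfold wt
    rw [Finset.sum_eq_single i]
    · intro j _ hj; rw [h1 j hj]; simp
    · simp
  rw [h2]
  exact mul_nonpos_of_nonpos_of_nonneg hi (by positivity)

theorem simple_nz (i : V) : Nz (simpleRep K t h i) := by
  rw [← not_not (a := Nz _), not_nz_dim]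
  intro H
  have := congrFun H i
  rw [simple_dim] at this
  simp at this

end Simples

section Pencil

variable {E F : Type} [AddCommGroup E] [Module K E] [AddCommGroup F] [Module K F]
  [FiniteDimensional K E] [FiniteDimensional K F]

theorem pencil_inj (D0 D1 : E →ₗ[K] F) (H : Function.Injective D0) :
    {s : K | ¬ Function.Injective (D0 + s • D1)}.Finite := by
  obtain ⟨r, hr⟩ := retr D0 H
  have hfin := Module.End.finite_hasEigenvalue (r.comp D1 : Module.End K E)
  have hinj : Set.InjOn (fun s : K => -s⁻¹) {s : K | ¬ Function.Injective (D0 + s • D1)} := by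
    intro a _ b _ hab
    simpa using hab
  refine Set.Finite.of_finite_image (hfin.subset ?_) hinj
  rintro _ ⟨s, hs, rfl⟩
  rw [Set.mem_setOf_eq, injective_iff_map_eq_zero] at hs
  push Not at hs
  obtain ⟨v, hv, hv0⟩ := hs
  have h1 : v + s • r (D1 v) = 0 := by
    have := congrArg r hv
    simpa [hr] using this
  have hs0 : s ≠ 0 := by
    rintro rfl
    simp at h1
    exact hv0 h1
  have h2 : r (D1 v) = (-s⁻¹) • v := by
    have h3 : s • r (D1 v) = -v := by rw [eq_neg_iff_add_eq_zero, add_comm]; exact h1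
    rw [neg_smul, ← smul_neg, ← h3, smul_smul, inv_mul_cancel₀ hs0, one_smul]
  exact Module.End.hasEigenvalue_of_hasEigenvector (x := v)
    ⟨Module.End.mem_eigenspace_iff.2 h2, hv0⟩

theorem pencil_sur (D0 D1 : E →ₗ[K] F) (H : Function.Surjective D0) :
    {s : K | ¬ Function.Surjective (D0 + s • D1)}.Finite := by
  obtain ⟨r, hr⟩ := sect D0 H
  refine (pencil_inj (LinearMap.id : F →ₗ[K] F) (D1.comp r) Function.injective_id).subset ?_
  intro s hs hi
  apply hs
  have h1 := LinearMap.injective_iff_surjective.1 hi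
  intro y
  obtain ⟨x, rfl⟩ := h1 y
  exact ⟨r x, by simp [hr]⟩

theorem pencil_D (D0 D1 : E →ₗ[K] F) (H : {s : K | ¬ Function.Injective (D0 + s • D1)}.Infinite) :
    ∃ v0 v1 : E, v0 ≠ 0 ∧ D0 v0 = 0 ∧ D0 v1 + D1 v0 = 0 := by
  by_contra hc
  push Not at hc
  obtain ⟨E', hE'⟩ := Submodule.exists_isCompl (LinearMap.ker D0)
  let L0 : (E' × LinearMap.ker D0) →ₗ[K] F :=
    (D0.comp E'.subtype).coprod (D1.comp (LinearMap.ker D0).subtype)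
  let L1 : (E' × LinearMap.ker D0) →ₗ[K] F :=
    (D1.comp E'.subtype).coprod 0
  have hL0 : Function.Injective L0 := by
    rw [injective_iff_map_eq_zero]
    rintro ⟨e, n⟩ hen
    have h1 : D0 e + D1 n = 0 := by simpa [L0] using hen
    have hn : n = 0 := by
      by_contra hn
      exact hc n e (fun h => hn (Subtype.ext h)) n.2 h1
    subst hn
    have h2 : (e : E) ∈ LinearMap.ker D0 := by simpa using h1
    have h3 : (e : E) = 0 := by
      have := hE'.disjoint.le_bot ⟨h2, e.2⟩
      simpa using this
    exact Prod.ext (Subtype.ext h3) rfl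
  apply H
  refine ((pencil_inj L0 L1 hL0).union (Set.finite_singleton (0 : K))).subset ?_
  intro s hs
  by_contra hc2
  simp only [Set.mem_union, Set.mem_setOf_eq, not_or, not_not, Set.mem_singleton_iff] at hc2
  obtain ⟨hi, hs0⟩ := hc2
  apply hs
  rw [injective_iff_map_eq_zero] at hi ⊢
  intro v hv
  obtain ⟨n, hn, e, he, rfl⟩ := Submodule.mem_sup.1 (show v ∈ LinearMap.ker D0 ⊔ E' by
    rw [hE'.codisjoint.eq_top]; trivial)
  have := hi (⟨e, he⟩, ⟨s • n, Submodule.smul_mem _ _ hn⟩) (by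
    have hn' : D0 n = 0 := hn
    simp [L0, L1]
    simp [hn'] at hv
    rw [← hv]; abel)
  simp only [Prod.mk_eq_zero, Submodule.mk_eq_zero, smul_eq_zero, hs0, false_or] at this
  rw [this.1, this.2, add_zero]

end Pencil

section Closed

variable [Fintype V] [Fintype A]

theorem null_pt {ι κ : Type} [Finite ι] [IsAlgClosed K] [CommRing κ] [Nontrivial κ] [Algebra K κ]
    (z : ι → κ) : ∃ x : ι → K, ∀ p : MvPolynomial ι K, MvPolynomial.aeval z p = 0 →
      MvPolynomial.eval x p = 0 := by
  have h1 : RingHom.ker (MvPolynomial.aeval z : MvPolynomial ι K →ₐ[K] κ) ≠ ⊤ :=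
    RingHom.ker_ne_top _
  obtain ⟨m, hm, hle⟩ := Ideal.exists_le_maximal _ h1
  obtain ⟨x, hx⟩ := MvPolynomial.isMaximal_iff_eq_vanishingIdeal_singleton.1 hm
  refine ⟨x, fun p hp => ?_⟩
  have : p ∈ m := hle hp
  rw [hx, MvPolynomial.mem_vanishingIdeal_singleton_iff] at this
  rwa [MvPolynomial.aeval_eq_eval] at this

theorem minor_ne {L : Type} [Field L] {d e : ℕ} (B : Matrix (Fin d) (Fin e) L)
    (C : Matrix (Fin e) (Fin d) L) (H : C * B = 1) :
    ∃ ρ : Fin e → Fin d, (B.submatrix ρ id).det ≠ 0 := by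
  by_contra hc
  push Not at hc
  have h1 : (C * B).det = 0 := by
    have e1 : C * B = fun j => ∑ k, C j k • B k := by
      funext j l
      simp [Matrix.mul_apply, Finset.sum_apply]
    change Matrix.detRowAlternating (C * B) = 0
    rw [e1, ← AlternatingMap.coe_multilinearMap, MultilinearMap.map_sum]
    refine Finset.sum_eq_zero fun ρ _ => ?_
    rw [MultilinearMap.map_smul_univ]
    have := hc ρ
    change Matrix.detRowAlternating (fun j => B (ρ j)) = 0 at this
    rw [AlternatingMap.coe_multilinearMap, this, smul_zero]
  rw [H, Matrix.det_one] at h1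
  exact one_ne_zero h1

theorem normalize {L : Type} [Field L] (O : ValuationSubring L) {d e : ℕ}
    (B : Matrix (Fin d) (Fin e) L) (C : Matrix (Fin e) (Fin d) L) (H : C * B = 1) :
    ∃ (ρ : Fin e → Fin d) (B' : Matrix (Fin d) (Fin e) O) (P P' : Matrix (Fin e) (Fin e) L),
      B'.submatrix ρ id = 1 ∧ B * P = B'.map O.subtype ∧ B'.map O.subtype * P' = B := by
  obtain ⟨ρ0, hρ0⟩ := minor_ne B C H
  obtain ⟨ρ, _, hρ⟩ := Finset.exists_max_image (Finset.univ : Finset (Fin e → Fin d))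
    (fun ρ => O.valuation (B.submatrix ρ id).det) ⟨ρ0, Finset.mem_univ _⟩
  have hne : (B.submatrix ρ id).det ≠ 0 := by
    intro h0
    have := hρ ρ0 (Finset.mem_univ _)
    rw [h0, map_zero, le_zero_iff, map_eq_zero] at this
    exact hρ0 this
  set P := B.submatrix ρ id with hP
  have hu : IsUnit P.det := isUnit_iff_ne_zero.2 hne
  have hmem : ∀ k j, (B * P⁻¹) k j ∈ O := by
    intro k j
    have e1 : (B * P⁻¹) k j = P.det⁻¹ * (P.updateRow j (B k)).det := by
      rw [← Matrix.cramer_transpose_apply, Matrix.cramer_eq_adjugate_mulVec,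
        ← Matrix.adjugate_transpose, Matrix.inv_def, Ring.inverse_eq_inv']
      simp only [Matrix.mul_smul, Matrix.smul_apply, smul_eq_mul, Matrix.mul_apply,
        Matrix.mulVec, dotProduct, Matrix.transpose_apply]
      rw [Finset.mul_sum]
      refine Finset.sum_congr rfl fun l _ => ?_
      ring
    have e2 : P.updateRow j (B k) = B.submatrix (Function.update ρ j k) id := by
      ext a b
      by_cases ha : a = j
      · subst ha; simp
      · simp [ha, hP]
    rw [e1, e2, ← O.valuation_le_one_iff, map_mul, map_inv₀]
    have h3 := hρ (Function.update ρ j k) (Finset.mem_univ _)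
    have h4 : O.valuation P.det ≠ 0 := by rw [ne_eq, map_eq_zero]; exact hne
    rw [inv_mul_le_iff₀ (zero_lt_iff.2 h4), mul_one]
    exact h3
  refine ⟨ρ, fun k j => ⟨_, hmem k j⟩, P⁻¹, P, ?_, rfl, ?_⟩
  · ext a b
    change (B * P⁻¹) (ρ a) b = _
    have : (B * P⁻¹).submatrix ρ id = 1 := by
      rw [Matrix.submatrix_mul _ _ _ id _ Function.bijective_id, ← hP, Matrix.submatrix_id_id]
      exact Matrix.mul_nonsing_inv P hu
    have := congrFun (congrFun this a) b
    rw [Matrix.submatrix_apply] at this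
    rw [show (B * P⁻¹) (ρ a) b = (B * P⁻¹) (ρ a) (id b) from rfl, this]
    by_cases hab : a = b
    · subst hab; simp
    · simp [Matrix.one_apply_ne hab]
  · change (B * P⁻¹) * P = B
    rw [Matrix.mul_assoc, Matrix.nonsing_inv_mul P hu, Matrix.mul_one]

theorem exists_place [IsAlgClosed K] {L : Type} [Field L] [Algebra K L] (s : L)
    (hs : ∀ c : K, s ≠ algebraMap K L c) :
    ∃ O : ValuationSubring L, (∀ c : K, algebraMap K L c ∈ O) ∧ O.valuation s < 1 := by
  have h0 : s ≠ 0 := by simpa using hs 0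
  have hnin : ¬ IsIntegral K (s⁻¹) := by
    intro hi
    have := IsAlgClosed.degree_eq_one_of_irreducible K (minpoly.irreducible hi)
    obtain ⟨c, hc⟩ := minpoly.mem_range_of_degree_eq_one K _ this
    refine hs c⁻¹ ?_
    rw [map_inv₀, hc, inv_inv]
  have h2 : s⁻¹ ∉ (⨅ O : {O : ValuationSubring L // Set.range (algebraMap K L) ⊆ O.toSubring},
      O.1.toSubring) := by
    rw [iInf_valuationSubring_superset]
    intro hm
    apply hnin
    obtain ⟨p, hp, hp0⟩ : IsIntegral (Subring.closure (Set.range (algebraMap K L))) s⁻¹ := hm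
    have hcl : Subring.closure (Set.range (algebraMap K L)) = (algebraMap K L).range := by
      rw [← RingHom.coe_range, Subring.closure_eq]
    let f : K →+* Subring.closure (Set.range (algebraMap K L)) :=
      (algebraMap K L).codRestrict _ (fun c => Subring.subset_closure ⟨c, rfl⟩)
    have hf : Function.Surjective f := by
      rintro ⟨y, hy⟩
      have hy' := hy
      rw [hcl] at hy'
      obtain ⟨c, rfl⟩ := hy'
      exact ⟨c, rfl⟩
    have hl : p ∈ Polynomial.lifts f := by
      rw [Polynomial.lifts_iff_coeff_lifts]
      exact fun n => hf _
    obtain ⟨q, hq, -, hqm⟩ := Polynomial.lifts_and_natDegree_eq_and_monic hl hp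
    refine ⟨q, hqm, ?_⟩
    rw [← hq, Polynomial.eval₂_map] at hp0
    exact hp0
  simp only [Subring.mem_iInf, not_forall] at h2
  obtain ⟨⟨O, hO⟩, hsO⟩ := h2
  refine ⟨O, fun c => hO ⟨c, rfl⟩, ?_⟩
  rw [← ValuationSubring.mem_nonunits_iff, ValuationSubring.mem_nonunits_iff_or]
  exact Or.inr hsO

end Closed

section Closed

variable [Fintype V] [Fintype A]

theorem place_step {L : Type} [Field L] (O : ValuationSubring L) (d e : V → ℕ)
    (M : ∀ a : A, Matrix (Fin (d (h a))) (Fin (d (t a))) O)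
    (B : ∀ i, Matrix (Fin (d i)) (Fin (e i)) L) (C : ∀ i, Matrix (Fin (e i)) (Fin (d i)) L)
    (G : ∀ a : A, Matrix (Fin (e (h a))) (Fin (e (t a))) L)
    (hC : ∀ i, C i * B i = 1) (hG : ∀ a, (M a).map O.subtype * B (t a) = B (h a) * G a) :
    ∃ (B' : ∀ i, Matrix (Fin (d i)) (Fin (e i)) O) (C' : ∀ i, Matrix (Fin (e i)) (Fin (d i)) O)
      (G' : ∀ a : A, Matrix (Fin (e (h a))) (Fin (e (t a))) O),
      (∀ i, C' i * B' i = 1) ∧ ∀ a, M a * B' (t a) = B' (h a) * G' a := by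
  choose ρ B' P P' h1 h2 h3 using fun i => normalize O (B i) (C i) (hC i)
  refine ⟨B', fun i => (1 : Matrix (Fin (d i)) (Fin (d i)) O).submatrix (ρ i) id,
    fun a => (M a * B' (t a)).submatrix (ρ (h a)) id, fun i => ?_, fun a => ?_⟩
  · rw [← h1 i]
    ext j k
    simp [Matrix.mul_apply, Matrix.one_apply]
  · have e1 : (M a * B' (t a)).map O.subtype =
        (B' (h a)).map O.subtype * (P' (h a) * G a * P (t a)) := by
      rw [Matrix.map_mul, ← h2, ← Matrix.mul_assoc, hG, ← Matrix.mul_assoc, ← Matrix.mul_assoc, h3]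
    have e2 : ((M a * B' (t a)).submatrix (ρ (h a)) id).map O.subtype =
        P' (h a) * G a * P (t a) := by
      rw [← Matrix.submatrix_map, e1, Matrix.submatrix_mul _ _ _ id _ Function.bijective_id,
        Matrix.submatrix_map, h1, Matrix.submatrix_id_id, Matrix.map_one _ (map_zero _) (map_one _),
        Matrix.one_mul]
    apply Matrix.map_injective (f := O.subtype) Subtype.val_injective
    change (M a * B' (t a)).map O.subtype =
      (B' (h a) * (M a * B' (t a)).submatrix (ρ (h a)) id).map O.subtype
    rw [e1, Matrix.map_mul, e2]

theorem descend_step [IsAlgClosed K] {κ : Type} [CommRing κ] [Nontrivial κ] [Algebra K κ]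
    (d e : V → ℕ)
    (M : ∀ a : A, Matrix (Fin (d (h a))) (Fin (d (t a))) K)
    (B : ∀ i, Matrix (Fin (d i)) (Fin (e i)) κ) (C : ∀ i, Matrix (Fin (e i)) (Fin (d i)) κ)
    (G : ∀ a : A, Matrix (Fin (e (h a))) (Fin (e (t a))) κ)
    (hC : ∀ i, C i * B i = 1) (hG : ∀ a, (M a).map (algebraMap K κ) * B (t a) = B (h a) * G a) :
    ∃ (B' : ∀ i, Matrix (Fin (d i)) (Fin (e i)) K) (C' : ∀ i, Matrix (Fin (e i)) (Fin (d i)) K)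
      (G' : ∀ a : A, Matrix (Fin (e (h a))) (Fin (e (t a))) K),
      (∀ i, C' i * B' i = 1) ∧ ∀ a, M a * B' (t a) = B' (h a) * G' a := by
  let ι := (Σ i : V, Fin (d i) × Fin (e i)) ⊕ (Σ i : V, Fin (e i) × Fin (d i)) ⊕
    (Σ a : A, Fin (e (h a)) × Fin (e (t a)))
  let vB : ∀ i, Fin (d i) → Fin (e i) → ι := fun i k j => Sum.inl ⟨i, k, j⟩
  let vC : ∀ i, Fin (e i) → Fin (d i) → ι := fun i k j => Sum.inr (Sum.inl ⟨i, k, j⟩)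
  let vG : ∀ a : A, Fin (e (h a)) → Fin (e (t a)) → ι := fun i k j => Sum.inr (Sum.inr ⟨i, k, j⟩)
  let z : ι → κ := Sum.elim (fun x => B x.1 x.2.1 x.2.2)
    (Sum.elim (fun x => C x.1 x.2.1 x.2.2) (fun x => G x.1 x.2.1 x.2.2))
  obtain ⟨x, hx⟩ := null_pt (K := K) z
  refine ⟨fun i => Matrix.of fun k j => x (vB i k j), fun i => Matrix.of fun k j => x (vC i k j),
    fun a => Matrix.of fun k j => x (vG a k j), fun i => ?_, fun a => ?_⟩
  · ext j k
    have h1 := congrFun (congrFun (hC i) j) k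
    have := hx (∑ l, MvPolynomial.X (vC i j l) * MvPolynomial.X (vB i l k) -
      MvPolynomial.C ((1 : Matrix (Fin (e i)) (Fin (e i)) K) j k)) (by
        rw [Matrix.mul_apply] at h1
        simp only [map_sub, map_sum, map_mul, MvPolynomial.aeval_X, MvPolynomial.aeval_C]
        rw [sub_eq_zero]
        refine Eq.trans h1 ?_
        by_cases hjk : j = k
        · subst hjk; simp
        · simp [Matrix.one_apply_ne hjk])
    simp only [map_sub, map_sum, map_mul, MvPolynomial.eval_X, MvPolynomial.eval_C] at this
    rw [Matrix.mul_apply]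
    exact sub_eq_zero.1 this
  · ext j k
    have h1 := congrFun (congrFun (hG a) j) k
    have := hx (∑ l, MvPolynomial.C (M a j l) * MvPolynomial.X (vB (t a) l k) -
      ∑ l, MvPolynomial.X (vB (h a) j l) * MvPolynomial.X (vG a l k)) (by
        rw [Matrix.mul_apply, Matrix.mul_apply] at h1
        simp only [map_sub, map_sum, map_mul, MvPolynomial.aeval_X, MvPolynomial.aeval_C]
        rw [sub_eq_zero]
        exact h1)
    simp only [map_sub, map_sum, map_mul, MvPolynomial.eval_X, MvPolynomial.eval_C] at this
    rw [Matrix.mul_apply, Matrix.mul_apply]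
    exact sub_eq_zero.1 this

theorem closed_core [IsAlgClosed K] (d e : V → ℕ)
    (M0 M1 : ∀ a : A, Matrix (Fin (d (h a))) (Fin (d (t a))) K) (S : Set K) (hS : S.Infinite)
    (B : S → ∀ i, Matrix (Fin (d i)) (Fin (e i)) K)
    (C : S → ∀ i, Matrix (Fin (e i)) (Fin (d i)) K)
    (G : S → ∀ a : A, Matrix (Fin (e (h a))) (Fin (e (t a))) K)
    (hC : ∀ s i, C s i * B s i = 1)
    (hG : ∀ s a, (M0 a + s.1 • M1 a) * B s (t a) = B s (h a) * G s a) :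
    ∃ (B' : ∀ i, Matrix (Fin (d i)) (Fin (e i)) K) (C' : ∀ i, Matrix (Fin (e i)) (Fin (d i)) K)
      (G' : ∀ a : A, Matrix (Fin (e (h a))) (Fin (e (t a))) K),
      (∀ i, C' i * B' i = 1) ∧ ∀ a, M0 a * B' (t a) = B' (h a) * G' a := by
  let I : Ideal (S → K) :=
    { carrier := {f | (Function.support f).Finite}
      zero_mem' := by simp
      add_mem' := fun {f g} hf hg => (hf.union hg).subset (Function.support_add f g)
      smul_mem' := fun c f hf => hf.subset (by
        intro s hs hs0
        exact hs (by simp [hs0])) }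
  have hI : I ≠ ⊤ := by
    rw [Ideal.ne_top_iff_one]
    intro h1
    have : (Function.support (1 : S → K)).Finite := h1
    rw [Function.support_one] at this
    haveI := hS.to_subtype
    exact Set.infinite_univ ‹_›
  obtain ⟨m, hm, hle⟩ := Ideal.exists_le_maximal I hI
  obtain ⟨L, fL, π, hπ⟩ : ∃ (L : Type) (_ : Field L) (π : (S → K) →+* L), RingHom.ker π = m :=
    ⟨(S → K) ⧸ m, Ideal.Quotient.field m, Ideal.Quotient.mk m, Ideal.mk_ker⟩
  letI : Algebra K L := (π.comp (algebraMap K (S → K))).toAlgebra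
  let sR : S → K := fun s => s.1
  have hs : ∀ c : K, π sR ≠ algebraMap K L c := by
    intro c hc
    have h1 : π (sR - algebraMap K (S → K) c) = 0 := by
      rw [map_sub, hc, sub_eq_zero]; rfl
    have h2 : (sR - algebraMap K (S → K) c) ∈ m := by rw [← hπ]; exact h1
    classical
    let δ : S → K := fun s => if s.1 = c then 1 else 0
    have h3 : δ ∈ m := hle (by
      change (Function.support δ).Finite
      refine Set.Finite.of_finite_image (f := Subtype.val)
        ((Set.finite_singleton c).subset ?_) Subtype.val_injective.injOn
      rintro _ ⟨s, hs, rfl⟩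
      by_contra hsc
      exact hs (if_neg hsc))
    have h4 := m.add_mem h2 h3
    apply hm.ne_top
    refine Ideal.eq_top_of_isUnit_mem _ h4 ?_
    rw [Pi.isUnit_iff]
    intro s
    rw [isUnit_iff_ne_zero]
    change s.1 - c + (if s.1 = c then 1 else 0) ≠ 0
    split_ifs with hsc
    · simp [hsc]
    · rw [add_zero]; exact sub_ne_zero.2 hsc
  obtain ⟨O, hO, hsO⟩ := exists_place (π sR) hs
  let j : K →+* O := (algebraMap K L).codRestrict O.toSubring hO
  let so : O := ⟨π sR, (O.valuation_le_one_iff _).1 hsO.le⟩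
  let BR : ∀ i, Matrix (Fin (d i)) (Fin (e i)) (S → K) := fun i k l s => B s i k l
  let CR : ∀ i, Matrix (Fin (e i)) (Fin (d i)) (S → K) := fun i k l s => C s i k l
  let GR : ∀ a : A, Matrix (Fin (e (h a))) (Fin (e (t a))) (S → K) := fun i k l s => G s i k l
  let MR : ∀ a : A, Matrix (Fin (d (h a))) (Fin (d (t a))) (S → K) :=
    fun a k l s => M0 a k l + s.1 * M1 a k l
  have hCR : ∀ i, CR i * BR i = 1 := by
    intro i
    ext k l s
    have := congrFun (congrFun (hC s i) k) l
    rw [Matrix.mul_apply] at this ⊢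
    rw [Finset.sum_apply]
    refine Eq.trans this ?_
    by_cases hkl : k = l
    · subst hkl; simp
    · simp [Matrix.one_apply_ne hkl]
  have hGR : ∀ a, MR a * BR (t a) = BR (h a) * GR a := by
    intro a
    ext k l s
    have := congrFun (congrFun (hG s a) k) l
    rw [Matrix.mul_apply, Matrix.mul_apply] at this ⊢
    rw [Finset.sum_apply, Finset.sum_apply]
    exact this
  obtain ⟨B', C', G', hC', hG'⟩ := place_step O d e
    (fun a => (M0 a).map j + so • (M1 a).map j)
    (fun i => (BR i).map π) (fun i => (CR i).map π) (fun a => (GR a).map π)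
    (fun i => by rw [← Matrix.map_mul, hCR, Matrix.map_one _ (map_zero _) (map_one _)])
    (fun a => by
      rw [← Matrix.map_mul, ← hGR, Matrix.map_mul]
      congr 1
      ext k l
      change π (algebraMap K (S → K) (M0 a k l)) + π sR * π (algebraMap K (S → K) (M1 a k l)) = _
      rw [← map_mul, ← map_add]
      rfl)
  let r := IsLocalRing.residue O
  letI : Algebra K (IsLocalRing.ResidueField O) := (r.comp j).toAlgebra
  have hso : r so = 0 := by
    rw [IsLocalRing.residue_eq_zero_iff]
    exact (O.valuation_lt_one_iff so).2 hsO
  refine descend_step d e M0 (fun i => (B' i).map r) (fun i => (C' i).map r)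
    (fun a => (G' a).map r) (fun i => ?_) (fun a => ?_)
  · rw [← Matrix.map_mul, hC', Matrix.map_one _ (map_zero _) (map_one _)]
  · rw [← Matrix.map_mul, ← hG', Matrix.map_mul]
    congr 1
    ext k l
    simp [hso]
    rfl

end Closed

section Lines

variable [Fintype V] [Fintype A] {X Y Z : QuivRep K V A t h} {σ : V → ℤ}

/-- A point on a line of representations. -/
def lineRep (X : QuivRep K V A t h) (ξ : ∀ a : A, X.sp (t a) →ₗ[K] X.sp (h a)) (s : K) :
    QuivRep K V A t h where
  sp := X.sp
  map a := X.map a + s • ξ a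

theorem line_closed [IsAlgClosed K] (X : QuivRep K V A t h)
    (ξ : ∀ a : A, X.sp (t a) →ₗ[K] X.sp (h a)) (e : V → ℕ)
    (H : {s : K | ∃ (Y : QuivRep K V A t h) (f : RepHom Y (lineRep X ξ s)),
      Inj f ∧ Y.dimVec = e}.Infinite) :
    ∃ (Y : QuivRep K V A t h) (f : RepHom Y X), Inj f ∧ Y.dimVec = e := by
  set S := {s : K | ∃ (Y : QuivRep K V A t h) (f : RepHom Y (lineRep X ξ s)),
      Inj f ∧ Y.dimVec = e} with hS
  choose Y f hf hY using fun s : S => s.2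
  let b : ∀ i, Module.Basis (Fin (X.dimVec i)) K (X.sp i) := fun i => Module.finBasis K (X.sp i)
  let bY : ∀ (s : S) i, Module.Basis (Fin (e i)) K ((Y s).sp i) := fun s i =>
    Module.finBasisOfFinrankEq K _ (congrFun (hY s) i)
  obtain ⟨φ, hφ, hφc⟩ : ∃ φ : ∀ (s : S) i, (Y s).sp i →ₗ[K] X.sp i,
      (∀ s i, Function.Injective (φ s i)) ∧ ∀ s a, (φ s (h a)).comp ((Y s).map a) =
        (X.map a + s.1 • ξ a).comp (φ s (t a)) :=
    ⟨fun s i => (f s).app i, fun s i => hf s i, fun s a => (f s).comm a⟩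
  choose r hr using fun (s : S) i => retr (φ s i) (hφ s i)
  obtain ⟨B', C', G', h1, h2⟩ := closed_core (t := t) (h := h) X.dimVec e
    (fun a => LinearMap.toMatrix (b (t a)) (b (h a)) (X.map a))
    (fun a => LinearMap.toMatrix (b (t a)) (b (h a)) (ξ a)) S H
    (fun s i => LinearMap.toMatrix (bY s i) (b i) (φ s i))
    (fun s i => LinearMap.toMatrix (b i) (bY s i) (r s i))
    (fun s a => LinearMap.toMatrix (bY s (t a)) (bY s (h a)) ((Y s).map a))
    (fun s i => by
      rw [← LinearMap.toMatrix_comp (bY s i) (b i) (bY s i)]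
      rw [show (r s i).comp (φ s i) = LinearMap.id from LinearMap.ext (hr s i)]
      exact LinearMap.toMatrix_id _)
    (fun s a => by
      rw [← map_smul, ← map_add]
      rw [← LinearMap.toMatrix_comp (bY s (t a)) (b (t a)) (b (h a))]
      have := LinearMap.toMatrix_comp (bY s (t a)) (bY s (h a)) (b (h a)) (φ s (h a))
        ((Y s).map a)
      refine Eq.trans ?_ this
      rw [hφc s a])
  let bE : ∀ i, Module.Basis (Fin (e i)) K (Fin (e i) → K) := fun i => Pi.basisFun K _
  refine ⟨⟨fun i => Fin (e i) → K, fun a => Matrix.toLin (bE (t a)) (bE (h a)) (G' a)⟩,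
    ⟨fun i => Matrix.toLin (bE i) (b i) (B' i), fun a => ?_⟩, fun i => ?_, ?_⟩
  · have h3 := congrArg (Matrix.toLin (bE (t a)) (b (h a))) (h2 a)
    rw [Matrix.toLin_mul (bE (t a)) (bE (h a)) (b (h a)),
      Matrix.toLin_mul (bE (t a)) (b (t a)) (b (h a)), Matrix.toLin_toMatrix] at h3
    exact h3.symm
  · have h3 := congrArg (Matrix.toLin (bE i) (bE i)) (h1 i)
    rw [Matrix.toLin_mul (bE i) (b i) (bE i), Matrix.toLin_one] at h3
    refine Function.LeftInverse.injective (g := Matrix.toLin (b i) (bE i) (C' i)) fun x => ?_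
    exact LinearMap.congr_fun h3 x
  · funext i
    change Module.finrank K (Fin (e i) → K) = _
    simp

/-- Along a line, injections from prescribed dimension vectors. -/
theorem line_open [IsAlgClosed K] (X : QuivRep K V A t h)
    (ξ : ∀ a : A, X.sp (t a) →ₗ[K] X.sp (h a)) (P : (V → ℕ) → Prop)
    (H : ∀ (Y : QuivRep K V A t h) (f : RepHom Y X), Inj f → P Y.dimVec) :
    {s : K | ¬ ∀ (Y : QuivRep K V A t h) (f : RepHom Y (lineRep X ξ s)), Inj f → P Y.dimVec}.Finite := by
  refine Set.Finite.subset (s := ⋃ e ∈ {e ∈ Set.Iic X.dimVec | ¬ P e},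
    {s : K | ∃ (Y : QuivRep K V A t h) (f : RepHom Y (lineRep X ξ s)), Inj f ∧ Y.dimVec = e}) ?_ ?_
  · refine Set.Finite.biUnion ((Set.Finite.pi' (fun i => Set.finite_Iic (X.dimVec i))).subset (fun e he => he.1)) fun e he => ?_
    by_contra hc
    obtain ⟨Y, f, hf, hY⟩ := line_closed X ξ e hc
    exact he.2 (hY ▸ H Y f hf)
  · intro s hs
    simp only [Set.mem_setOf_eq, not_forall] at hs
    obtain ⟨Y, f, hf, hY⟩ := hs
    simp only [Set.mem_iUnion]
    refine ⟨Y.dimVec, ⟨?_, hY⟩, Y, f, hf, rfl⟩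
    intro i
    exact LinearMap.finrank_le_finrank_of_injective (hf i)

theorem ff_open [IsAlgClosed K] (HX : FF σ X) (ξ : ∀ a : A, X.sp (t a) →ₗ[K] X.sp (h a)) :
    {s : K | ¬ FF σ (lineRep X ξ s)}.Finite :=
  line_open X ξ (fun e => ∑ i, σ i * (e i : ℤ) ≤ 0) HX

theorem ww_open [IsAlgClosed K] (HX : WW σ X) (ξ : ∀ a : A, X.sp (t a) →ₗ[K] X.sp (h a)) :
    {s : K | ¬ WW σ (lineRep X ξ s)}.Finite := by
  refine (ff_open HX.2 ξ).subset fun s hs hf => hs ⟨HX.1, hf⟩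

theorem tt_iff_sub : TT σ X ↔ ∀ (Y : QuivRep K V A t h) (f : RepHom Y X), Inj f →
    (Y.dimVec ≠ X.dimVec → wt σ Y < wt σ X) := by
  constructor
  · intro H Y f hf hd
    have h1 := (ses_cok' f hf).wt σ
    have h2 := H _ _ (cokπ_sur f) (by
      by_contra hc
      rw [cok_nz] at hc
      exact hd (iso_dim (iso_of_bij f hf hc)))
    omega
  · intro H Y g hg hY
    have h1 := (ses_ker' g hg).wt σ
    have h2 := H _ _ (kerι_inj g) (by
      intro hd
      have h3 := sur_of_inj (kerι_inj g) hd
      obtain ⟨i, y, hy⟩ := hY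
      obtain ⟨x, rfl⟩ := hg i y
      obtain ⟨z, rfl⟩ := h3 i x
      exact hy ((ses_ker' g hg).zer i z))
    omega

theorem tt_open [IsAlgClosed K] (HX : TT σ X) (ξ : ∀ a : A, X.sp (t a) →ₗ[K] X.sp (h a)) :
    {s : K | ¬ TT σ (lineRep X ξ s)}.Finite := by
  have := line_open X ξ (fun e => e ≠ X.dimVec → ∑ i, σ i * (e i : ℤ) < wt σ X)
    (tt_iff_sub.1 HX)
  refine this.subset fun s hs hc => hs ?_
  exact tt_iff_sub.2 hc

end Lines

section Univ

variable [Fintype V] [Fintype A] {X Y Z : QuivRep K V A t h} {σ : V → ℤ}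

theorem univ1 (S : QuivRep K V A t h) (hS : ExtZ S S) (Q : QuivRep K V A t h → Prop)
    (hQ : ∀ C' ξ, Q C' → ξ ∉ LinearMap.range (dmap C' S) → Q (extRep C' S ξ)) :
    ∀ X, Q X → ∃ X', Q X' ∧ ExtZ X' S := by
  intro X
  induction hn : extDim X S using Nat.strong_induction_on generalizing X with
  | _ n ih =>
    intro hX
    by_cases hE : ExtZ X S
    · exact ⟨X, hX, hE⟩
    · obtain ⟨ξ, hξ⟩ := nonsplit hE
      have := extDim_drop X S S hS ξ (RepHom.idHom S) hξ
      exact ih _ (by omega) _ rfl (hQ X ξ hX hξ)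

theorem univ {ι : Type} (B : ι → QuivRep K V A t h) (hS : ∀ j, ExtZ (B j) (B j)) (L : List ι)
    (hL : L.Pairwise fun a b => ExtZ (B b) (B a)) : ∀ (Q : QuivRep K V A t h → Prop),
    (∀ j ∈ L, ∀ C' ξ, Q C' → ξ ∉ LinearMap.range (dmap C' (B j)) → Q (extRep C' (B j) ξ)) →
    ∀ X, Q X → ∃ X', Q X' ∧ ∀ j ∈ L, ExtZ X' (B j) := by
  induction L with
  | nil => exact fun Q _ X hX => ⟨X, hX, by simp⟩
  | cons a L ih =>
    intro Q hQ X hX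
    rw [List.pairwise_cons] at hL
    obtain ⟨X1, hX1, hX1'⟩ := univ1 (B a) (hS a) Q (hQ a (by simp)) X hX
    obtain ⟨X2, hX2, hX2'⟩ := ih hL.2 (fun Y => Q Y ∧ ExtZ Y (B a)) (by
      rintro j hj C' ξ ⟨h1, h2⟩ hξ
      refine ⟨hQ j (by simp [hj]) C' ξ h1 hξ, ?_⟩
      exact ext_mid_left (ses_ext _ _ _) (hL.1 j hj) h2) X1 ⟨hX1, hX1'⟩
    refine ⟨X2, hX2.1, ?_⟩
    intro j hj
    rcases List.mem_cons.1 hj with rfl | hj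
    · exact hX2.2
    · exact hX2' j hj

theorem univ2 {ι : Type} (B : ι → QuivRep K V A t h) (L : List ι)
    (hS : ∀ j ∈ L, ∀ k ∈ L, ExtZ (B j) (B k)) : ∀ (Q : QuivRep K V A t h → Prop),
    (∀ j ∈ L, ∀ E ξ, Q E → ξ ∉ LinearMap.range (dmap (B j) E) → Q (extRep (B j) E ξ)) →
    ∀ X, Q X → ∃ X', Q X' ∧ ∀ j ∈ L, ExtZ (B j) X' := by
  induction L with
  | nil => exact fun Q _ X hX => ⟨X, hX, by simp⟩
  | cons a L ih =>
    intro Q hQ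
    have step : ∀ X, Q X → ∃ X', Q X' ∧ ExtZ (B a) X' := by
      intro X
      induction hn : extDim (B a) X using Nat.strong_induction_on generalizing X with
      | _ n ih =>
        intro hX
        by_cases hE : ExtZ (B a) X
        · exact ⟨X, hX, hE⟩
        · obtain ⟨ξ, hξ⟩ := nonsplit hE
          have := extDim_drop2 (B a) X (hS a (by simp) a (by simp)) ξ hξ
          exact ih _ (by omega) _ rfl (hQ a (by simp) X ξ hX hξ)
    intro X hX
    obtain ⟨X1, hX1, hX1'⟩ := step X hX
    obtain ⟨X2, hX2, hX2'⟩ := ih (fun j hj k hk => hS j (by simp [hj]) k (by simp [hk]))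
      (fun Y => Q Y ∧ ExtZ (B a) Y) (by
      rintro j hj E ξ ⟨h1, h2⟩ hξ
      refine ⟨hQ j (by simp [hj]) E ξ h1 hξ, ?_⟩
      exact ext_mid_right (ses_ext _ _ _) h2 (hS a (by simp) j (by simp [hj]))) X1 ⟨hX1, hX1'⟩
    refine ⟨X2, hX2.1, ?_⟩
    intro j hj
    rcases List.mem_cons.1 hj with rfl | hj
    · exact hX2.2
    · exact hX2' j hj

/-- finitely many isomorphism classes -/
def FinIso (P : QuivRep K V A t h → Prop) : Prop :=
  ∃ l : List (QuivRep K V A t h), ∀ X, P X → ∃ Y ∈ l, RepIso K X Y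

theorem FinIso.mono {P P' : QuivRep K V A t h → Prop} (H : FinIso P) (hP : ∀ X, P' X → P X) :
    FinIso P' := by
  obtain ⟨l, hl⟩ := H
  exact ⟨l, fun X hX => hl X (hP X hX)⟩

theorem FinIso.or {P P' : QuivRep K V A t h → Prop} (H : FinIso P) (H' : FinIso P') :
    FinIso (fun X => P X ∨ P' X) := by
  obtain ⟨l, hl⟩ := H
  obtain ⟨l', hl'⟩ := H'
  refine ⟨l ++ l', fun X hX => ?_⟩
  rcases hX with hX | hX
  · obtain ⟨Y, h1, h2⟩ := hl X hX
    exact ⟨Y, by simp [h1], h2⟩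
  · obtain ⟨Y, h1, h2⟩ := hl' X hX
    exact ⟨Y, by simp [h1], h2⟩

theorem finIso_iso (Y : QuivRep K V A t h) : FinIso (fun X => RepIso K X Y) :=
  ⟨[Y], fun X hX => ⟨Y, by simp, hX⟩⟩

theorem finIso_false : FinIso (fun _ : QuivRep K V A t h => False) :=
  ⟨[], fun _ hX => hX.elim⟩

theorem finIso_ex {ι : Type} [Finite ι] {P : ι → QuivRep K V A t h → Prop}
    (H : ∀ i, FinIso (P i)) : FinIso (fun X => ∃ i, P i X) := by
  haveI := Fintype.ofFinite ι
  choose l hl using H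
  refine ⟨(Finset.univ : Finset ι).toList.flatMap l, ?_⟩
  rintro X ⟨i, hX⟩
  obtain ⟨Y, h1, h2⟩ := hl i X hX
  exact ⟨Y, List.mem_flatMap.2 ⟨i, by simp, h1⟩, h2⟩

theorem FinIso.reps {P : QuivRep K V A t h → Prop} (H : FinIso P) :
    ∃ (n : ℕ) (B : Fin n → QuivRep K V A t h), (∀ j, P (B j)) ∧
      (∀ j k, j ≠ k → ¬ RepIso K (B j) (B k)) ∧ ∀ X, P X → ∃ j, RepIso K X (B j) := by
  obtain ⟨l, hl⟩ := H
  have key : ∀ l : List (QuivRep K V A t h), ∃ l' : List (QuivRep K V A t h),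
      (∀ Y ∈ l', P Y) ∧ (l'.Pairwise fun Y Z => ¬ RepIso K Y Z) ∧
      ∀ X, P X → (∃ Y ∈ l, RepIso K X Y) → ∃ Y ∈ l', RepIso K X Y := by
    intro l
    induction l with
    | nil => exact ⟨[], by simp, by simp, by simp⟩
    | cons Y l ih =>
      obtain ⟨l', h1, h2, h3⟩ := ih
      by_cases hc : ∃ X, P X ∧ RepIso K X Y ∧ ∀ Z ∈ l', ¬ RepIso K X Z
      · obtain ⟨X, hX, hXY, hXl⟩ := hc
        refine ⟨X :: l', ?_, List.pairwise_cons.2 ⟨hXl, h2⟩, ?_⟩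
        · intro Z hZ
          rcases List.mem_cons.1 hZ with rfl | hZ
          · exact hX
          · exact h1 Z hZ
        · rintro Z hZ ⟨U, hU, hZU⟩
          rcases List.mem_cons.1 hU with rfl | hU
          · exact ⟨X, by simp, iso_trans hZU (iso_symm hXY)⟩
          · obtain ⟨T, hT, hT'⟩ := h3 Z hZ ⟨U, hU, hZU⟩
            exact ⟨T, by simp [hT], hT'⟩
      · push Not at hc
        refine ⟨l', h1, h2, ?_⟩
        rintro Z hZ ⟨U, hU, hZU⟩
        rcases List.mem_cons.1 hU with rfl | hU
        · exact hc Z hZ hZU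
        · exact h3 Z hZ ⟨U, hU, hZU⟩
  obtain ⟨l', h1, h2, h3⟩ := key l
  refine ⟨l'.length, l'.get, fun j => h1 _ (List.get_mem _ _), ?_, ?_⟩
  · intro j k hjk hiso
    rw [List.pairwise_iff_get] at h2
    rcases lt_or_gt_of_ne hjk with hlt | hlt
    · exact h2 j k hlt hiso
    · exact h2 k j hlt (iso_symm hiso)
  · intro X hX
    obtain ⟨Y, hY, hXY⟩ := h3 X hX (hl X hX)
    obtain ⟨j, rfl⟩ := List.get_of_mem hY
    exact ⟨j, hXY⟩

theorem pi_closed {C : QuivRep K V A t h → Prop} (h0 : ∀ X, ¬ Nz X → C X)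
    (hext : ∀ (A' B' C' : QuivRep K V A t h) (f : RepHom A' B') (g : RepHom B' C'), SES f g →
      C A' → C C' → C B') : ∀ (m : ℕ) (B : Fin m → QuivRep K V A t h), (∀ j, C (B j)) →
      C (piRep B) := by
  intro m
  induction m with
  | zero =>
    intro B _
    apply h0
    rintro ⟨i, x, hx⟩
    exact hx (pi_ext fun k => k.elim0)
  | succ n ih =>
    intro B hB
    obtain ⟨f, g, S⟩ := pi_ses B
    exact hext _ _ _ _ _ S (hB 0) (ih _ fun k => hB _)

theorem sink [IsAlgClosed K] {C : QuivRep K V A t h → Prop}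
    (hopen : ∀ X ξ, C X → {s : K | ¬ C (lineRep X ξ s)}.Finite) {n : ℕ}
    (BB : Fin n → QuivRep K V A t h)
    (hne : ∀ X, C X → Nz X → ∃ j, ¬ HomZ (BB j) X)
    (horth : ∀ j k, j ≠ k → HomZ (BB j) (BB k)) (hbrick : ∀ j, Brick (BB j))
    (hnz : ∀ j, Nz (BB j)) {m : ℕ} (g : Fin m → Fin n) (hg : Function.Injective g) (hm : 0 < m)
    (hpi : C (piRep fun j => BB (g j))) :
    ∃ j, ∀ k, ExtZ (BB (g j)) (BB (g k)) := by
  by_contra hc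
  push Not at hc
  choose sc hsc using hc
  choose ξ hξ using fun j => nonsplit (hsc j)
  set B : Fin m → QuivRep K V A t h := fun j => BB (g j) with hB
  set X0 := piRep B with hX0
  let Ξ : ∀ a : A, X0.sp (t a) →ₗ[K] X0.sp (h a) := fun a =>
    ∑ j, ((piInc B (sc j)).app (h a)).comp ((ξ j a).comp ((piProj B j).app (t a)))
  have hX0nz : Nz X0 := by
    obtain ⟨i, x, hx⟩ := hnz (g ⟨0, hm⟩)
    refine ⟨i, (piInc B ⟨0, hm⟩).app i x, fun h0 => hx ?_⟩
    have := piProj_inc B ⟨0, hm⟩ i x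
    rw [h0, map_zero] at this
    exact this.symm
  have hfin := hopen X0 Ξ hpi
  have hinf : ∃ j, {s : K | ¬ HomZ (BB j) (lineRep X0 Ξ s)}.Infinite := by
    by_contra hcc
    push Not at hcc
    have h1 : (Set.univ : Set K).Finite := by
      refine (hfin.union (Set.finite_iUnion hcc)).subset fun s _ => ?_
      by_cases hs : C (lineRep X0 Ξ s)
      · right
        obtain ⟨j, hj⟩ := hne _ hs hX0nz
        exact Set.mem_iUnion.2 ⟨j, hj⟩
      · left; exact hs
    haveI : Infinite K := IsAlgClosed.instInfinite
    exact Set.infinite_univ h1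
  obtain ⟨j, hj⟩ := hinf
  let D1 : (∀ i, (BB j).sp i →ₗ[K] X0.sp i) →ₗ[K] (∀ a : A, (BB j).sp (t a) →ₗ[K] X0.sp (h a)) :=
    { toFun := fun φ a => -(Ξ a).comp (φ (t a))
      map_add' := fun φ ψ => by
        funext a
        simp only [Pi.add_apply, LinearMap.comp_add]
        abel
      map_smul' := fun c φ => by
        funext a
        simp only [Pi.smul_apply, LinearMap.comp_smul, RingHom.id_apply, smul_neg] }
  have hpen : {s : K | ¬ Function.Injective (dmap (BB j) X0 + s • D1)}.Infinite := by
    refine Set.Infinite.mono ?_ hj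
    intro s hs hinj
    apply hs
    intro f
    have h1 := hcomm f
    obtain ⟨φ, hφ⟩ : ∃ φ : ∀ i, (BB j).sp i →ₗ[K] X0.sp i, φ = f.app := ⟨_, rfl⟩
    have h1' : ∀ a x, φ (h a) ((BB j).map a x) = X0.map a (φ (t a) x) + s • Ξ a (φ (t a) x) := by
      rw [hφ]; exact h1
    have h2 : (dmap (BB j) X0 + s • D1) φ = 0 := by
      funext a
      refine LinearMap.ext fun x => ?_
      change (φ (h a) ((BB j).map a x) - X0.map a (φ (t a) x)) + s • -(Ξ a (φ (t a) x)) = 0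
      rw [h1', smul_neg]
      abel
    have h3 : φ = 0 := hinj (by rw [h2, map_zero])
    have h4 : ∀ i x, φ i x = 0 := fun i x => by rw [h3]; rfl
    rw [hφ] at h4
    exact h4
  obtain ⟨v0, v1, hv0, hD0, hD1⟩ := pencil_D _ _ hpen
  let f0 := homOfD v0 hD0
  have hk : ∃ k, ¬ IsZ (f0.comp (piProj B k)) := by
    by_contra hcc
    push Not at hcc
    apply hv0
    funext i
    refine LinearMap.ext fun x => ?_
    refine pi_ext fun k => ?_
    exact (hcc k i x).trans (map_zero _).symm
  obtain ⟨k, hk⟩ := hk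
  have hjk : j = g k := by
    by_contra hne'
    exact hk (horth _ _ hne' _)
  subst hjk
  obtain ⟨c, hc⟩ := hbrick (g k) (f0.comp (piProj B k))
  have hc0 : c ≠ 0 := by
    rintro rfl
    exact hk fun i x => by rw [hc]; exact zero_smul _ _
  apply hξ k
  have hother : ∀ l, l ≠ k → ∀ i x, (piProj B l).app i (v0 i x) = 0 := by
    intro l hl i x
    exact horth (g k) (g l) (fun h => hl (hg h).symm) (f0.comp (piProj B l)) i x
  have hself : ∀ i x, (piProj B k).app i (v0 i x) = c • x := hc
  have hΞ : ∀ a x, Ξ a (v0 (t a) x) = (piInc B (sc k)).app (h a) (c • ξ k a x) := by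
    intro a x
    have e1 : Ξ a (v0 (t a) x) = ∑ j, (piInc B (sc j)).app (h a)
        (ξ j a ((piProj B j).app (t a) (v0 (t a) x))) := by
      change (∑ j, ((piInc B (sc j)).app (h a)).comp ((ξ j a).comp ((piProj B j).app (t a))) :
        X0.sp (t a) →ₗ[K] X0.sp (h a)) (v0 (t a) x) = _
      rw [LinearMap.sum_apply]
      rfl
    rw [e1, Finset.sum_eq_single k]
    · rw [hself, map_smul]
    · intro l _ hl
      rw [hother l hl, map_zero, map_zero]
    · simp
  have hfinal : dmap (BB (g k)) (BB (g (sc k))) (fun i => ((piProj B (sc k)).app i).comp (v1 i)) =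
      c • ξ k := by
    funext a
    refine LinearMap.ext fun x => ?_
    have h1 := LinearMap.congr_fun (congrFun hD1 a) x
    have h2 : (v1 (h a) ((BB (g k)).map a x) - X0.map a (v1 (t a) x)) + -(Ξ a (v0 (t a) x)) = 0 := h1
    rw [hΞ, ← sub_eq_add_neg, sub_eq_zero] at h2
    have h3 := congrArg ((piProj B (sc k)).app (h a)) h2
    rw [map_sub, piProj_inc, hcomm] at h3
    exact h3
  have := (LinearMap.range (dmap (BB (g k)) (BB (g (sc k))))).smul_mem c⁻¹ ⟨_, hfinal⟩
  rwa [smul_smul, inv_mul_cancel₀ hc0, one_smul] at this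

theorem order_of_sink {n : ℕ} (BB : Fin n → QuivRep K V A t h)
    (H : ∀ (m : ℕ) (g : Fin m → Fin n), Function.Injective g → 0 < m →
      ∃ j, ∀ k, ExtZ (BB (g j)) (BB (g k))) :
    ∃ L : List (Fin n), L.Nodup ∧ (∀ j, j ∈ L) ∧ (L.Pairwise fun a b => ExtZ (BB b) (BB a)) ∧
      ∀ j, ExtZ (BB j) (BB j) := by
  have key : ∀ s : Finset (Fin n), ∃ L : List (Fin n), L.Nodup ∧ (∀ j, j ∈ L ↔ j ∈ s) ∧
      (L.Pairwise fun a b => ExtZ (BB b) (BB a)) ∧ ∀ j ∈ s, ExtZ (BB j) (BB j) := by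
    intro s
    induction hn : s.card generalizing s with
    | zero =>
      rw [Finset.card_eq_zero] at hn
      subst hn
      exact ⟨[], by simp⟩
    | succ m ih =>
      obtain ⟨j, hj⟩ := H (m + 1) (s.orderEmbOfFin hn) (s.orderEmbOfFin hn).injective (by omega)
      set j0 := s.orderEmbOfFin hn j with hj0
      have hj0s : j0 ∈ s := s.orderEmbOfFin_mem hn j
      have hall : ∀ k ∈ s, ExtZ (BB j0) (BB k) := by
        intro k hk
        have : k ∈ Set.range (s.orderEmbOfFin hn) := by rw [Finset.range_orderEmbOfFin]; exact hk
        obtain ⟨l, rfl⟩ := this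
        exact hj l
      obtain ⟨L, h1, h2, h3, h4⟩ := ih (s.erase j0) (by rw [Finset.card_erase_of_mem hj0s]; omega)
      refine ⟨L ++ [j0], ?_, ?_, ?_, ?_⟩
      · rw [List.nodup_append]
        refine ⟨h1, by simp, ?_⟩
        intro a ha b hb hab
        rw [List.mem_singleton] at hb
        subst hb; subst hab
        simpa using (h2 _).1 ha
      · intro k
        simp only [List.mem_append, h2, Finset.mem_erase, List.mem_singleton]
        by_cases hk : k = j0
        · subst hk; simp [hj0s]
        · simp [hk]
      · rw [List.pairwise_append]
        refine ⟨h3, by simp, ?_⟩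
        intro a ha b hb
        rw [List.mem_singleton] at hb
        subst hb
        exact hall a (Finset.mem_of_mem_erase ((h2 a).1 ha))
      · intro k hk
        by_cases hkj : k = j0
        · rw [hkj]; exact hall j0 hj0s
        · exact h4 k (Finset.mem_erase.2 ⟨hkj, hk⟩)
  obtain ⟨L, h1, h2, h3, h4⟩ := key Finset.univ
  exact ⟨L, h1, fun j => (h2 j).2 (Finset.mem_univ j), h3, fun j => h4 j (Finset.mem_univ j)⟩

end Univ

section Rigid

variable [Fintype V] [Fintype A] {X Y Z X' Y' : QuivRep K V A t h} {σ : V → ℤ}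

theorem ExtZ.iso (H : ExtZ X Y) (e : RepIso K X X') (e' : RepIso K Y Y') : ExtZ X' Y' := by
  obtain ⟨_, g, _, _, hg, _⟩ := iso_hom e
  obtain ⟨f, _, _, hf, _⟩ := iso_hom e'
  exact ext_post_sur hf (ext_pre_inj hg H)

theorem schur_brick (H : homDim X X = 1) : Brick X := by
  have hid : ∀ f : RepHom X X, f.app ∈ homS X X := fun f a => f.comm a
  have hz : ¬ HomZ X X := by rw [homZ_iff_dim]; omega
  obtain ⟨f0, hf0⟩ := not_homZ.1 hz
  have hne : (⟨_, hid (RepHom.idHom X)⟩ : homS X X) ≠ 0 := by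
    intro h0
    obtain ⟨i, x, hx⟩ := (nz_of_not_isZ hf0).1
    have := congrFun (congrArg Subtype.val h0) i
    exact hx (LinearMap.congr_fun this x)
  have h1 := (finrank_eq_one_iff_of_nonzero' _ hne).1 H
  intro f
  obtain ⟨c, hc⟩ := h1 ⟨f.app, hid f⟩
  refine ⟨c, fun i x => ?_⟩
  have := congrFun (congrArg Subtype.val hc) i
  exact (LinearMap.congr_fun this x).symm

theorem hom_of_eu (H : 0 < eu X Y) : ¬ HomZ X Y := by
  rw [homZ_iff_dim]
  rw [eu_eq] at H
  omega

theorem eu_of_ext (H : ExtZ X Y) : eu X Y = homDim X Y := by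
  rw [eu_eq, extZ_iff_dim.1 H]; simp

theorem rigid_iso (hX : ExtZ X X) (hX1 : homDim X X = 1) (hZ : ExtZ Z Z)
    (hd : Z.dimVec = X.dimVec) : RepIso K X Z := by
  have e1 : eu X X = 1 := by rw [eu_of_ext hX, hX1]; rfl
  have e2 : eu X Z = 1 := by rw [← e1]; unfold eu; rw [hd]
  have e3 : eu Z Z = 1 := by rw [← e1]; unfold eu; rw [hd]
  obtain ⟨f, hf⟩ := not_homZ.1 (hom_of_eu (X := X) (Y := Z) (by omega))
  have hI : ExtZ X (imRep f) := ext_post_sur (imπ_sur f) hX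
  have hn : ¬ HomZ X (imRep f) := fun H => hf fun i x => by
    rw [← imιπ, H]; simp
  have e4 : 0 < eu X (imRep f) := by
    rw [eu_of_ext hI]
    rw [homZ_iff_dim] at hn
    omega
  have e5 : eu Z (imRep f) = eu X (imRep f) := by unfold eu; rw [hd]
  obtain ⟨g, hg⟩ := not_homZ.1 (hom_of_eu (e5 ▸ e4))
  have hb : Brick Z := schur_brick (by
    rw [eu_of_ext hZ] at e3; exact_mod_cast e3)
  obtain ⟨c, hc⟩ := hb (g.comp (imι f))
  have hc0 : c ≠ 0 := by
    rintro rfl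
    apply hg
    intro i x
    have := hc i x
    rw [zero_smul, comp_app] at this
    exact imι_inj f i (by rw [this, map_zero])
  have hs : Sur f := by
    intro i z
    obtain ⟨y, hy⟩ := imπ_sur f i (g.app i (c⁻¹ • z))
    refine ⟨y, ?_⟩
    rw [← imιπ, hy]
    have := hc i (c⁻¹ • z)
    rw [comp_app] at this
    rw [this, smul_smul, mul_inv_cancel₀ hc0, one_smul]
  exact iso_of_bij f (inj_of_sur hs hd.symm) hs

/-- The derivative of `dmap` along a line. -/
def dline (X Y : QuivRep K V A t h) (ξ : ∀ a : A, X.sp (t a) →ₗ[K] X.sp (h a))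
    (η : ∀ a : A, Y.sp (t a) →ₗ[K] Y.sp (h a)) :
    (∀ i, X.sp i →ₗ[K] Y.sp i) →ₗ[K] (∀ a : A, X.sp (t a) →ₗ[K] Y.sp (h a)) where
  toFun φ := fun a => (φ (h a)).comp (ξ a) - (η a).comp (φ (t a))
  map_add' f g := by
    funext a
    simp only [Pi.add_apply, LinearMap.add_comp, LinearMap.comp_add]
    abel
  map_smul' c f := by
    funext a
    simp only [Pi.smul_apply, LinearMap.smul_comp, LinearMap.comp_smul, smul_sub,
      RingHom.id_apply]

theorem ext_line_iff (ξ : ∀ a : A, X.sp (t a) →ₗ[K] X.sp (h a))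
    (η : ∀ a : A, Y.sp (t a) →ₗ[K] Y.sp (h a)) (s : K) :
    ExtZ (lineRep X ξ s) (lineRep Y η s) ↔
      Function.Surjective (dmap X Y + s • dline X Y ξ η) := by
  have : ∀ φ : ∀ i, X.sp i →ₗ[K] Y.sp i, (dmap X Y + s • dline X Y ξ η) φ =
      fun a => (φ (h a)).comp (X.map a + s • ξ a) - (Y.map a + s • η a).comp (φ (t a)) := by
    intro φ
    funext a
    ext x
    simp [dmap, dline]
    module
  constructor
  · intro H y
    obtain ⟨φ, hφ⟩ := H y
    exact ⟨φ, (this φ).trans hφ⟩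
  · intro H y
    obtain ⟨φ, hφ⟩ := H y
    exact ⟨φ, (this φ).symm.trans hφ⟩

theorem ext_line_fin (ξ : ∀ a : A, X.sp (t a) →ₗ[K] X.sp (h a))
    (η : ∀ a : A, Y.sp (t a) →ₗ[K] Y.sp (h a)) (s₀ : K)
    (H : ExtZ (lineRep X ξ s₀) (lineRep Y η s₀)) :
    {s | ¬ ExtZ (lineRep X ξ s) (lineRep Y η s)}.Finite := by
  rw [ext_line_iff] at H
  refine ((pencil_sur _ (dline X Y ξ η) H).preimage (f := fun s => s - s₀) ?_).subset ?_
  · intro a _ b _ hab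
    simpa using hab
  · intro s hs hc
    apply hs
    rw [ext_line_iff]
    convert hc using 2
    module

theorem iso_line (hd : X'.dimVec = X.dimVec) : ∃ ξ, RepIso K X' (lineRep X ξ 1) := by
  have e : ∀ i, X'.sp i ≃ₗ[K] X.sp i := fun i => LinearEquiv.ofFinrankEq _ _ (congrFun hd i)
  refine ⟨fun a => ((e (h a)).toLinearMap.comp (X'.map a)).comp (e (t a)).symm.toLinearMap -
    X.map a, e, fun a x => ?_⟩
  change _ = (X.map a + (1 : K) • (((e (h a)).toLinearMap.comp (X'.map a)).comp
    (e (t a)).symm.toLinearMap - X.map a)) (e (t a) x)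
  simp
  rfl

theorem line_zero (ξ : ∀ a : A, X.sp (t a) →ₗ[K] X.sp (h a)) : RepIso K X (lineRep X ξ 0) := by
  refine ⟨fun i => LinearEquiv.refl K (X.sp i), fun a x => ?_⟩
  change X.map a x = (X.map a + (0 : K) • ξ a) x
  simp

theorem ext_of_min [IsAlgClosed K] (hX : X.IsExceptional) (hY : Y.IsExceptional)
    (H : extMin K t h X.dimVec Y.dimVec = 0) : ExtZ X Y := by
  have hne : {n | ∃ X' Y' : QuivRep K V A t h, X'.dimVec = X.dimVec ∧ Y'.dimVec = Y.dimVec ∧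
    QuivRep.extDim X' Y' = n}.Nonempty := ⟨_, X, Y, rfl, rfl, rfl⟩
  obtain ⟨X', Y', h1, h2, h3⟩ := Nat.sInf_mem hne
  have h4 : extDim X' Y' = 0 := h3.trans H
  rw [← extZ_iff_dim] at h4
  obtain ⟨ξ, hξ⟩ := iso_line h1
  obtain ⟨η, hη⟩ := iso_line h2
  have f1 := ext_line_fin ξ η 1 (h4.iso hξ hη)
  have rX : ExtZ X X := extZ_iff_dim.2 hX.1
  have rY : ExtZ Y Y := extZ_iff_dim.2 hY.1
  have f2 := ext_line_fin ξ ξ 0 (rX.iso (line_zero ξ) (line_zero ξ))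
  have f3 := ext_line_fin η η 0 (rY.iso (line_zero η) (line_zero η))
  haveI : Infinite K := IsAlgClosed.instInfinite
  obtain ⟨s, hs⟩ := ((f1.union f2).union f3).exists_notMem
  simp only [Set.mem_union, Set.mem_setOf_eq, not_or, not_not] at hs
  have i1 : RepIso K X (lineRep X ξ s) := rigid_iso rX hX.2 hs.1.2 rfl
  have i2 : RepIso K Y (lineRep Y η s) := rigid_iso rY hY.2 hs.2 rfl
  exact hs.1.1.iso (iso_symm i1) (iso_symm i2)

end Rigid

section Back

variable [Fintype V] [Fintype A] {X Y Z W E : QuivRep K V A t h} {σ : V → ℤ}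

/-- A numerical presentation of the weight. -/
structure Pres (σ : V → ℤ) {ι : Type} [Fintype ι] (X : ι → QuivRep K V A t h) (q : ι → ℚ)
    (m : V → ℚ) : Prop where
  hwt : ∀ Y : QuivRep K V A t h, (wt σ Y : ℚ) = ∑ c, q c * (eu (X c) Y : ℚ) -
    ∑ i, m i * (Y.dimVec i : ℚ)
  hq : ∀ c, 0 < q c
  hm : ∀ i, 0 ≤ m i
  hE : ∀ c d, ExtZ (X c) (X d)
  hX0 : ∀ c i, m i ≠ 0 → (X c).dimVec i = 0

variable {ι : Type} [Fintype ι] {B : ι → QuivRep K V A t h} {q : ι → ℚ} {m : V → ℚ}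

theorem dim_zero_sur {f : RepHom X Y} (hf : Sur f) {i : V} (H : X.dimVec i = 0) :
    Y.dimVec i = 0 := by
  have := LinearMap.finrank_le_finrank_of_surjective (hf i)
  unfold QuivRep.dimVec at *
  omega

theorem Pres.wt_ext (P : Pres σ B q m) (hE : ∀ c, ExtZ (B c) Y)
    (h0 : ∀ i, m i ≠ 0 → Y.dimVec i = 0) :
    (wt σ Y : ℚ) = ∑ c, q c * (homDim (B c) Y : ℚ) := by
  rw [P.hwt]
  have : ∑ i, m i * (Y.dimVec i : ℚ) = 0 := Finset.sum_eq_zero fun i _ => by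
    by_cases hi : m i = 0
    · rw [hi, zero_mul]
    · rw [h0 i hi]; simp
  rw [this, sub_zero]
  refine Finset.sum_congr rfl fun c _ => ?_
  rw [eu_of_ext (hE c)]; simp

theorem Pres.homZ (P : Pres σ B q m) (H : FF σ W) (c : ι) : HomZ (B c) W := by
  by_contra hc
  obtain ⟨f, hf⟩ := not_homZ.1 hc
  have h1 := P.wt_ext (Y := imRep f) (fun d => ext_post_sur (imπ_sur f) (P.hE d c))
    (fun i hi => dim_zero_sur (imπ_sur f) (P.hX0 c i hi))
  have h2 := H (imRep f) (imι f) (imι_inj f)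
  have hn : ¬ HomZ (B c) (imRep f) := fun H => hf fun i x => by
    rw [← imιπ, H]; simp
  rw [homZ_iff_dim] at hn
  have h3 : q c * (homDim (B c) (imRep f) : ℚ) ≤ ∑ d, q d * (homDim (B d) (imRep f) : ℚ) :=
    Finset.single_le_sum (f := fun d => q d * (homDim (B d) (imRep f) : ℚ))
      (fun d _ => mul_nonneg (P.hq d).le (Nat.cast_nonneg _)) (Finset.mem_univ c)
  have h4 : 0 < q c * (homDim (B c) (imRep f) : ℚ) :=
    mul_pos (P.hq c) (by exact_mod_cast Nat.pos_of_ne_zero hn)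
  have h5 : (0 : ℚ) < (wt σ (imRep f) : ℚ) := by rw [h1]; linarith
  have h6 : 0 < wt σ (imRep f) := by exact_mod_cast h5
  omega

theorem Pres.ww (P : Pres σ B q m) (H : WW σ W) :
    (∀ c, ExtZ (B c) W) ∧ ∀ i, m i ≠ 0 → W.dimVec i = 0 := by
  have h1 := P.hwt W
  rw [H.1] at h1
  have h2 : ∑ c, q c * (eu (B c) W : ℚ) = - ∑ c, q c * (extDim (B c) W : ℚ) := by
    rw [← Finset.sum_neg_distrib]
    refine Finset.sum_congr rfl fun c _ => ?_
    rw [eu_eq, homZ_iff_dim.1 (P.homZ H.2 c)]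
    push_cast
    ring
  rw [h2] at h1
  have n1 : ∀ c ∈ Finset.univ, 0 ≤ q c * (extDim (B c) W : ℚ) :=
    fun d _ => mul_nonneg (P.hq d).le (Nat.cast_nonneg _)
  have n2 : ∀ i ∈ Finset.univ, 0 ≤ m i * (W.dimVec i : ℚ) :=
    fun d _ => mul_nonneg (P.hm d) (Nat.cast_nonneg _)
  have s1 := Finset.sum_nonneg n1
  have s2 := Finset.sum_nonneg n2
  push_cast at h1
  constructor
  · intro c
    have := (Finset.sum_eq_zero_iff_of_nonneg n1).1 (by linarith) c (Finset.mem_univ c)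
    rw [extZ_iff_dim]
    rcases mul_eq_zero.1 this with h | h
    · exact absurd h (P.hq c).ne'
    · exact_mod_cast h
  · intro i hi
    have := (Finset.sum_eq_zero_iff_of_nonneg n2).1 (by linarith) i (Finset.mem_univ i)
    rcases mul_eq_zero.1 this with h | h
    · exact absurd h hi
    · exact_mod_cast h

theorem Pres.fin (P : Pres σ B q m) : ∀ (n : ℕ) (E : QuivRep K V A t h), tdim E ≤ n →
    (∀ c, ExtZ (B c) E) → (∀ i, m i ≠ 0 → E.dimVec i = 0) →
    FinIso (fun W : QuivRep K V A t h => ST σ W ∧ ¬ HomZ E W) := by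
  intro n
  induction n with
  | zero =>
    intro E h0 _ _
    refine finIso_false.mono ?_
    rintro W ⟨_, hW⟩
    obtain ⟨f, hf⟩ := not_homZ.1 hW
    have := tdim_pos.2 (nz_of_not_isZ hf).1
    omega
  | succ n ih =>
    intro E hn hE h0
    by_cases hW : ∃ W0 : QuivRep K V A t h, ST σ W0 ∧ ¬ HomZ E W0
    · obtain ⟨W0, hs, hf⟩ := hW
      obtain ⟨f, hf⟩ := not_homZ.1 hf
      have hsur : Sur f := by
        by_contra hns
        have h1 := P.wt_ext (Y := imRep f) (fun d => ext_post_sur (imπ_sur f) (hE d))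
          (fun i hi => dim_zero_sur (imπ_sur f) (h0 i hi))
        have h2 : 0 ≤ ∑ d, q d * (homDim (B d) (imRep f) : ℚ) :=
          Finset.sum_nonneg fun d _ => mul_nonneg (P.hq d).le (Nat.cast_nonneg _)
        rw [← h1] at h2
        have h3 : 0 ≤ wt σ (imRep f) := by exact_mod_cast h2
        have h4 := hs.2.2 (imRep f) (imι f) (imι_inj f)
          (by by_contra hc; exact hf (im_nz.1 hc)) (by
            intro hc
            apply hns
            intro i y
            obtain ⟨z, hz⟩ := hc i y
            obtain ⟨x, hx⟩ := imπ_sur f i z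
            exact ⟨x, by rw [← imιπ, hx, hz]⟩)
        omega
      have S := ses_ker' f hsur
      have ht := S.tdim
      have hp := tdim_pos.2 hs.2.1
      refine ((ih (kerRep f) (by omega) (fun c => ext_of_hom S (P.homZ hs.ww.2 c) (hE c))
        (fun i hi => ?_)).or (finIso_iso W0)).mono ?_
      · have := S.dimVec i
        rw [h0 i hi] at this
        omega
      · rintro W ⟨hW, hu⟩
        obtain ⟨u, hu⟩ := not_homZ.1 hu
        by_cases hk : IsZ ((kerι f).comp u)
        · right
          obtain ⟨v, hv⟩ := S.desc u hk
          have hvn : ¬ IsZ v := fun hv0 => hu fun i x => by rw [← hv, hv0]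
          obtain ⟨h1, h2⟩ := st_st hs hW v hvn
          exact iso_symm (iso_of_bij v h1 h2)
        · exact Or.inl ⟨hW, fun hz => hk (hz _)⟩
    · exact finIso_false.mono fun W hw => hW ⟨W, hw⟩

theorem Pres.finite [DecidableEq V] (hQ : Acyclic t h) (P : Pres σ B q m) :
    FinIso (fun W : QuivRep K V A t h => ST σ W) := by
  have key : ∀ i : V, FinIso (fun W : QuivRep K V A t h => ST σ W ∧ m i = 0 ∧
      ¬ HomZ (simpleRep K t h i) W) := by
    intro i0
    by_cases hi0 : m i0 = 0
    · obtain ⟨E, ⟨hE1, hE2⟩, hE3⟩ := univ2 B Finset.univ.toList (fun j _ k _ => P.hE j k)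
        (fun E => (∀ i, m i ≠ 0 → E.dimVec i = 0) ∧ ∀ W : QuivRep K V A t h, ST σ W →
          ¬ HomZ (simpleRep K t h i0) W → ¬ HomZ E W) (by
          rintro c _ E ξ ⟨h1, h2⟩ _
          have S := ses_ext (B c) E ξ
          refine ⟨fun i hi => ?_, fun W hW hs => ?_⟩
          · rw [S.dimVec, h1 i hi, P.hX0 c i hi]
          · obtain ⟨ψ, hψ⟩ := not_homZ.1 (h2 W hW hs)
            obtain ⟨θ, hθ⟩ := extend_hom S ((P.ww hW.ww).1 c) ψ
            exact fun hz => hψ fun i x => by rw [← hθ, hz]) (simpleRep K t h i0)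
          ⟨fun i hi => by rw [simple_dim, if_neg]; rintro rfl; exact hi hi0, fun _ _ h => h⟩
      exact (P.fin _ E le_rfl (fun c => hE3 c (by simp)) hE1).mono
        fun W hw => ⟨hw.1, hE2 W hw.1 hw.2.2⟩
    · exact finIso_false.mono fun W hw => hi0 hw.2.1
  refine (finIso_ex key).mono fun W hW => ?_
  obtain ⟨i, ⟨x, hx⟩, hs⟩ := hom_from_simple hQ hW.2.1
  refine ⟨i, hW, ?_, hs⟩
  by_contra hm
  have h0 := (P.ww hW.ww).2 i hm
  exact hx ((Module.finrank_zero_iff (R := K)).1 h0 |>.elim x 0)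

end Back

section Back2

variable [Fintype V] [Fintype A] [DecidableEq V]

theorem euler_cast (x y : V → ℤ) : ((eulerForm t h x y : ℤ) : ℚ) =
    eulerForm t h (intQ x) (intQ y) := by
  unfold eulerForm intQ
  push_cast
  rfl

theorem eulerQ_sum {ι : Type} (s : Finset ι) (f : ι → ℚ) (x : ι → V → ℚ) (y : V → ℚ) :
    eulerForm t h (∑ c ∈ s, f c • x c) y = ∑ c ∈ s, f c * eulerForm t h (x c) y := by
  classical
  have h0 : eulerForm t h (0 : V → ℚ) y = 0 := by simp [eulerForm]
  have hadd : ∀ a b : V → ℚ, eulerForm t h (a + b) y = eulerForm t h a y + eulerForm t h b y := by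
    intro a b
    simp only [eulerForm, Pi.add_apply, add_mul, Finset.sum_add_distrib]
    ring
  have hsm : ∀ (c : ℚ) (a : V → ℚ), eulerForm t h (c • a) y = c * eulerForm t h a y := by
    intro c a
    simp only [eulerForm, Pi.smul_apply, smul_eq_mul, mul_assoc, ← Finset.mul_sum]
    ring
  induction s using Finset.induction_on with
  | empty => simp [h0]
  | insert a s ha ih => rw [Finset.sum_insert ha, Finset.sum_insert ha, hadd, hsm, ih]

theorem back [IsAlgClosed K] (hQ : Acyclic t h) (α : V → ℤ) (C : Finset (V → ℤ))
    (hC : IsCompatible K t h C) (hα : intQ α ∈ coneOf C) :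
    FinIso (fun W : QuivRep K V A t h => ST (weightL t h α) W) := by
  classical
  obtain ⟨lam, hl, hs⟩ := hα
  let Sch : (V → ℤ) → Prop := fun c => ∃ X : QuivRep K V A t h, X.IsExceptional ∧ c = natZ X.dimVec
  let S1 := C.filter fun c => lam c ≠ 0 ∧ Sch c
  let S2 := C.filter fun c => lam c ≠ 0 ∧ ¬ Sch c
  have m1 : ∀ c : S1, c.1 ∈ C ∧ lam c.1 ≠ 0 ∧ Sch c.1 := fun c => Finset.mem_filter.1 c.2
  have m2 : ∀ c : S2, c.1 ∈ C ∧ lam c.1 ≠ 0 ∧ ¬ Sch c.1 := fun c => Finset.mem_filter.1 c.2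
  choose X hX1 hX2 using fun c : S1 => (m1 c).2.2
  have m3 : ∀ c : S2, ∃ i : V, c.1 = fun j => -(gammaRoot t h i j : ℤ) := by
    intro c
    rcases hC.1 c.1 (m2 c).1 with ⟨β, ⟨X, rfl, hX⟩, hb⟩ | h
    · exact absurd ⟨X, hX, hb⟩ (m2 c).2.2
    · exact h
  choose g hg using m3
  have hsum : ∀ F : (V → ℤ) → ℚ, ∑ c ∈ C, lam c * F c = ∑ c : S1, lam c.1 * F c.1 +
      ∑ c : S2, lam c.1 * F c.1 := by
    intro F
    rw [Finset.sum_coe_sort S1 (fun c => lam c * F c), Finset.sum_coe_sort S2 (fun c => lam c * F c)]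
    rw [← Finset.sum_union]
    · symm
      apply Finset.sum_subset
      · intro c hc
        rcases Finset.mem_union.1 hc with h | h
        · exact (Finset.mem_filter.1 h).1
        · exact (Finset.mem_filter.1 h).1
      · intro c hc hn
        by_cases h0 : lam c = 0
        · rw [h0, zero_mul]
        · exfalso
          apply hn
          by_cases hS : Sch c
          · exact Finset.mem_union_left _ (Finset.mem_filter.2 ⟨hc, h0, hS⟩)
          · exact Finset.mem_union_right _ (Finset.mem_filter.2 ⟨hc, h0, hS⟩)
    · rw [Finset.disjoint_left]
      intro c h1 h2
      exact (Finset.mem_filter.1 h2).2.2 (Finset.mem_filter.1 h1).2.2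
  have P : Pres (weightL t h α) X (fun c => lam c.1)
      (fun i => ∑ c : S2, if g c = i then lam c.1 else 0) := by
    refine ⟨fun Y => ?_, fun c => lt_of_le_of_ne (hl _) (m1 c).2.1.symm, fun i =>
      Finset.sum_nonneg fun c _ => ?_, fun c d => ?_, fun c i hi => ?_⟩
    · rw [wt_weightL, euler_cast, hs, eulerQ_sum, hsum, sub_eq_add_neg]
      congr 1
      · refine Finset.sum_congr rfl fun c _ => ?_
        rw [← euler_cast, hX2 c]; rfl
      · simp only [Finset.sum_mul]
        rw [Finset.sum_comm, ← Finset.sum_neg_distrib]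
        refine Finset.sum_congr rfl fun c _ => ?_
        rw [← euler_cast]
        have h1 : eulerForm t h c.1 (natZ Y.dimVec) = - (Y.dimVec (g c) : ℤ) := by
          have h2 : c.1 = (-1 : ℤ) • natZ (gammaRoot t h (g c)) := by
            rw [hg c]; funext j; simp [natZ]
          rw [h2, eulerForm_smul, euler_gamma hQ]
          simp [natZ]
        rw [h1]
        simp
    · split_ifs
      · exact hl _
      · exact le_rfl
    · by_cases hcd : c = d
      · subst hcd
        exact extZ_iff_dim.2 (hX1 c).1
      · refine ext_of_min (hX1 c) (hX1 d) ?_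
        refine (hC.2 c.1 (m1 c).1 d.1 (m1 d).1 (fun h => hcd (Subtype.ext h))).1 _ _
          ⟨X c, rfl, hX1 c⟩ ⟨X d, rfl, hX1 d⟩ (hX2 c) (hX2 d)
    · obtain ⟨d, _, hd⟩ := Finset.exists_ne_zero_of_sum_ne_zero hi
      have hd' : g d = i := by by_contra hh; exact hd (if_neg hh)
      refine (hC.2 c.1 (m1 c).1 d.1 (m2 d).1 (fun h => ?_)).2 _ i ⟨X c, rfl, hX1 c⟩ (hX2 c)
        (hd' ▸ hg d)
      exact (m2 d).2.2 (h ▸ (m1 c).2.2)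
  exact P.finite hQ

theorem finIso_iff (σ : V → ℤ) : (∃ (n : ℕ) (E : Fin n → QuivRep K V A t h),
    ∀ W, IsStable K σ W → ∃ j, RepIso K W (E j)) ↔
    FinIso (fun W : QuivRep K V A t h => ST σ W) := by
  constructor
  · rintro ⟨n, E, hE⟩
    refine ⟨List.ofFn E, fun W hW => ?_⟩
    obtain ⟨j, hj⟩ := hE W (st_iff.2 hW)
    exact ⟨E j, by simp [List.mem_ofFn], hj⟩
  · intro H
    obtain ⟨n, B, _, _, hB⟩ := H.reps
    exact ⟨n, B, fun W hW => hB W (st_iff.1 hW)⟩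

end Back2

section TSimple

variable [Fintype V] [Fintype A]
variable {X Y Z W S S' A' B' C' : QuivRep K V A t h} {f : RepHom A' B'} {g : RepHom B' C'} {σ : V → ℤ}

theorem bij_inv (u : RepHom X Y) (h1 : Inj u) (h2 : Sur u) : ∃ v : RepHom Y X,
    (∀ i x, v.app i (u.app i x) = x) ∧ ∀ i y, u.app i (v.app i y) = y := by
  obtain ⟨v, hv⟩ := (ses_cok' u h1).lift (RepHom.idHom Y) (fun i x => by
    by_contra hx
    exact cok_nz.2 h2 ⟨i, _, hx⟩)
  have hv' : ∀ i y, u.app i (v.app i y) = y := fun i y => by rw [hv]; simp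
  exact ⟨v, fun i x => h1 i (hv' i _), hv'⟩

theorem isZ_ker {u : RepHom X Y} : IsZ u → Sur (kerι u) := fun H i x =>
  ⟨⟨x, H i x⟩, rfl⟩

theorem kerι_zero (u : RepHom X Y) (i : V) (x : (kerRep u).sp i) :
    u.app i ((kerι u).app i x) = 0 := x.2

theorem ker_lift (u : RepHom X Y) (w : RepHom Z X) (H : ∀ i x, u.app i (w.app i x) = 0) :
    ∃ v : RepHom Z (kerRep u), ∀ i x, (kerι u).app i (v.app i x) = w.app i x := by
  refine (ses_ker u).lift w fun i x => imι_inj u i ?_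
  rw [imιπ, H, map_zero]

theorem ff_ker_ses (T : SES f g) (H : FF σ A') : FF σ (kerRep g) := by
  obtain ⟨v, hv⟩ := T.lift (kerι g) (kerι_zero g)
  refine H.inj (f := v) ((inj_iff v).2 fun i x hx => ?_)
  apply kerι_inj g i
  rw [← hv, hx, map_zero, map_zero]

theorem ff_ker_comp {u : RepHom X Y} {v : RepHom Y Z} (H1 : FF σ (kerRep u))
    (H2 : FF σ (kerRep v)) : FF σ (kerRep (u.comp v)) := by
  obtain ⟨w, hw⟩ := ker_lift v ((kerι (u.comp v)).comp u) (fun i x => by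
    rw [comp_app, ← comp_app u v]; exact kerι_zero _ _ _)
  refine FF.ext (ses_ker w) ?_ (H2.inj (imι_inj w))
  obtain ⟨p, hp⟩ := ker_lift u ((kerι w).comp (kerι (u.comp v))) (fun i x => by
    rw [comp_app, ← comp_app, ← hw, kerι_zero, map_zero])
  refine H1.inj (f := p) ((inj_iff p).2 fun i x hx => ?_)
  apply kerι_inj w i
  apply kerι_inj (u.comp v) i
  rw [← comp_app, ← hp, hx]; simp

theorem st_order [IsAlgClosed K] (H : FinIso (fun W : QuivRep K V A t h => ST σ W)) :
    ∃ (n : ℕ) (B : Fin n → QuivRep K V A t h) (L : List (Fin n)), (∀ j, ST σ (B j)) ∧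
      (∀ X, ST σ X → ∃ j, RepIso K X (B j)) ∧ (∀ j, j ∈ L) ∧
      (L.Pairwise fun a b => ExtZ (B b) (B a)) ∧ ∀ j, ExtZ (B j) (B j) := by
  obtain ⟨n, B, h1, h2, h3⟩ := H.reps
  obtain ⟨L, _, l1, l2, l3⟩ := order_of_sink B (fun m g hg hm => sink (C := WW σ)
    (fun X ξ hX => ww_open hX ξ) B (fun X hX hn => by
      obtain ⟨W, f, hW, hf⟩ := exists_st hX hn
      obtain ⟨j, hj⟩ := h3 W hW
      obtain ⟨_, v, _, _, hv, _⟩ := iso_hom hj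
      refine ⟨j, fun hz => ?_⟩
      obtain ⟨i, x, hx⟩ := (h1 j).2.1
      exact hx (hv.comp hf i (by rw [hz (v.comp f), map_zero])))
    (fun j k hjk => by
      by_contra hc
      obtain ⟨f, hf⟩ := not_homZ.1 hc
      obtain ⟨a, b⟩ := st_st (h1 j) (h1 k) f hf
      exact h2 j k hjk (iso_of_bij f a b))
    (fun j => (h1 j).brick) (fun j => (h1 j).2.1) g hg hm
    (pi_closed (C := WW σ) (fun X hX => ww_zero hX) (fun _ _ _ _ _ S a b => WW.ext S a b) m _
      (fun j => (h1 _).ww)))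
  exact ⟨n, B, L, h1, h3, l1, l2, l3⟩

theorem tt_ext_st (hW : ST σ W) (hC : TT σ C') {ξ : ∀ a : A, C'.sp (t a) →ₗ[K] W.sp (h a)}
    (hξ : ξ ∉ LinearMap.range (dmap C' W)) : TT σ (extRep C' W ξ) := by
  intro Y p hp hY
  have E := ses_ext C' W ξ
  set ι := extι C' W ξ
  set π := extπ C' W ξ
  have hw := (ses_cok (ι.comp p)).wt σ
  have h1 := hW.ww.wt_sur (imπ (ι.comp p)) (imπ_sur _)
  obtain ⟨ψ, hψ⟩ := E.desc (p.comp (cokπ (ι.comp p))) (fun i x => by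
    have := (ses_cok (ι.comp p)).zer i ((imπ (ι.comp p)).app i x)
    rw [imιπ] at this
    exact this)
  have hψs : Sur ψ := by
    intro i y
    obtain ⟨x, hx⟩ := hp.comp (cokπ_sur (ι.comp p)) i y
    exact ⟨π.app i x, by rw [hψ, hx]⟩
  have h2 : TT σ (cokRep (ι.comp p)) := hC.sur hψs
  by_cases hn : Nz (cokRep (ι.comp p))
  · have := h2.wt_pos hn
    omega
  · have h3 := cok_nz.1 hn
    by_cases hi : Inj (ι.comp p)
    · obtain ⟨v, hv, _⟩ := bij_inv _ hi h3
      exact absurd (ext_retr C' W ξ (p.comp v) (fun i x => hv i x)) hξ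
    · exact hW.wt_sur _ h3 hY hi

/-- Simple objects of the torsion class. -/
def TS (σ : V → ℤ) (S : QuivRep K V A t h) : Prop := TT σ S ∧ Nz S ∧
  ∀ (X : QuivRep K V A t h) (u : RepHom X S), TT σ X → ¬ IsZ u → FF σ (kerRep u) → Inj u ∧ Sur u

theorem ts_exists [IsAlgClosed K] (H : FinIso (fun W : QuivRep K V A t h => ST σ W))
    (hX : TT σ X) (hn : Nz X) : ∃ S : QuivRep K V A t h, TS σ S ∧ ¬ HomZ S X := by
  classical
  let P : ℕ → Prop := fun n => ∃ (C : QuivRep K V A t h) (u : RepHom C X), TT σ C ∧ Nz C ∧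
    FF σ (kerRep u) ∧ (wt σ C).toNat = n
  have hP : ∃ n, P n := ⟨_, X, RepHom.idHom X, hX, hn, ff_zero (ker_nz.2 Inj.id), rfl⟩
  obtain ⟨C, u, h1, h2, h3, h4⟩ := Nat.find_spec hP
  have hmin := fun m => Nat.find_min' (m := m) hP
  rw [← h4] at hmin
  obtain ⟨n, B, L, b1, b2, b3, b4, b5⟩ := st_order H
  obtain ⟨D, ⟨d1, d2, v, d3⟩, d4⟩ := univ B b5 L b4
    (fun D => TT σ D ∧ wt σ D = wt σ C ∧ ∃ v : RepHom D X, FF σ (kerRep v)) (by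
      rintro j _ D ξ ⟨d1, d2, v, d3⟩ hξ
      have E := ses_ext D (B j) ξ
      refine ⟨tt_ext_st (b1 j) d1 hξ, ?_, (extπ D (B j) ξ).comp v, ff_ker_comp
        (ff_ker_ses E (b1 j).ww.2) d3⟩
      rw [E.wt, (b1 j).1, d2, zero_add]) C ⟨h1, rfl, u, h3⟩
  have hDn : Nz D := by
    by_contra hc
    have := wt_of_not_nz hc σ
    have := h1.wt_pos h2
    omega
  have hDW : ∀ W, WW σ W → ExtZ D W := by
    refine ww_ind (fun W hW => ?_) (fun W0 W1 W2 f g S hs _ hi => ?_)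
    · intro ξ
      refine ⟨0, ?_⟩
      funext a
      ext x
      by_contra hx
      have hz : ∀ y : W.sp (h a), y = 0 := fun y => by
        by_contra hy
        exact hW ⟨h a, y, hy⟩
      exact hx ((hz _).trans (hz _).symm)
    · obtain ⟨j, hj⟩ := b2 W0 hs
      exact ext_mid_right S ((d4 j (b3 j)).iso (iso_refl D) (iso_symm hj)) hi
  refine ⟨D, ⟨d1, hDn, fun Q w hQ hw hk => ?_⟩, fun hz => ?_⟩
  · have hQn : Nz Q := (nz_of_not_isZ hw).1
    have m1 := hmin _ ⟨Q, w.comp v, hQ, hQn, ff_ker_comp hk d3, rfl⟩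
    have w1 := hQ.wt_pos hQn
    have w2 := (ses_ker w).wt σ
    have w3 := (ses_cok w).wt σ
    have w4 : TT σ (cokRep w) := d1.sur (cokπ_sur w)
    have w5 := w4.wt_nonneg
    have w6 := hk.wt_le
    have hs : Sur w := by
      rw [← cok_nz]
      intro hc
      have := w4.wt_pos hc
      omega
    refine ⟨?_, hs⟩
    have T := ses_ker' w hs
    have hkw : WW σ (kerRep w) := ⟨by omega, hk⟩
    obtain ⟨θ, hθ⟩ := lift_hom T (hDW _ hkw) (RepHom.idHom D)
    obtain ⟨p, hp⟩ := T.lift (hsub (RepHom.idHom Q) (w.comp θ)) (fun i x => by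
      rw [hsub_app, map_sub, comp_app, hθ]; simp)
    rw [← ker_nz]
    refine not_nz_of_tt_ff (hQ.sur (g := p) fun i y => ⟨(kerι w).app i y, ?_⟩) hk
    apply kerι_inj w i
    rw [hp, hsub_app, comp_app, kerι_zero]
    simp
  · have := hz v
    have hs := isZ_ker this
    exact not_nz_of_tt_ff d1 (d3.iso (iso_of_bij _ (kerι_inj v) hs)) hDn

theorem ts_hom (hS : TS σ S) (u : RepHom S X) (hu : ¬ IsZ u) : FF σ (kerRep u) := by
  refine ff_of_tt fun T w hw hT hn => hu ?_
  obtain ⟨h1, h2⟩ := hS.2.2 T (w.comp (kerι u)) hT (fun hz => by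
    obtain ⟨i, x, hx⟩ := hn
    exact hx (hw.comp (kerι_inj u) i (by rw [hz, map_zero])))
    (ff_zero (ker_nz.2 (hw.comp (kerι_inj u))))
  intro i x
  obtain ⟨y, rfl⟩ := h2 i x
  rw [comp_app, kerι_zero]

theorem ts_ts (hS : TS σ S) (hS' : TS σ S') (u : RepHom S S') (hu : ¬ IsZ u) : Inj u ∧ Sur u :=
  hS'.2.2 S u hS.1 hu (ts_hom hS u hu)

theorem TS.brick [IsAlgClosed K] (hS : TS σ S) : Brick S :=
  brick_of hS.2.1 fun u hu => (ts_ts hS hS u hu).1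

theorem ts_ff (hS : TS σ S) (hY : FF σ Y) {ξ : ∀ a : A, S.sp (t a) →ₗ[K] Y.sp (h a)}
    (hξ : ξ ∉ LinearMap.range (dmap S Y)) : FF σ (extRep S Y ξ) := by
  have E := ses_ext S Y ξ
  refine ff_of_tt fun T u hu hT hn => ?_
  by_cases hv : IsZ (u.comp (extπ S Y ξ))
  · obtain ⟨w, hw⟩ := E.lift u hv
    have : Inj w := (inj_iff w).2 fun i x hx => hu i (by rw [← hw, hx]; simp)
    exact not_nz_of_tt_ff hT (hY.inj this) hn
  · obtain ⟨h1, h2⟩ := hS.2.2 T _ hT hv (by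
      obtain ⟨w, hw⟩ := E.lift ((kerι (u.comp (extπ S Y ξ))).comp u) (fun i x => by
        have := kerι_zero (u.comp (extπ S Y ξ)) i x
        exact this)
      refine hY.inj (f := w) ((inj_iff w).2 fun i x hx => ?_)
      apply kerι_inj _ i
      apply hu i
      rw [← comp_app, ← hw, hx]; simp)
    obtain ⟨v, _, hv2⟩ := bij_inv _ h1 h2
    exact hξ (ext_sec S Y ξ (v.comp u) (fun i x => hv2 i x))

theorem ts_ext_ww (hS : TS σ S) (hW : WW σ W) : ExtZ S W := by
  by_contra hc
  obtain ⟨ξ, hξ⟩ := nonsplit hc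
  have h1 := (ts_ff hS hW.2 hξ).wt_le
  have h2 := (ses_ext S W ξ).wt σ
  have h3 := hS.1.wt_pos hS.2.1
  have h4 := hW.1
  omega

theorem fin_F : ∀ (n : ℕ) (Y : QuivRep K V A t h), FF σ Y → - wt σ Y ≤ n →
    FinIso (fun S : QuivRep K V A t h => TS σ S ∧ ¬ ExtZ S Y) := by
  intro n
  induction n with
  | zero =>
    intro Y hY hn
    refine finIso_false.mono fun S hS => hS.2 (ts_ext_ww hS.1 ⟨?_, hY⟩)
    have := hY.wt_le
    push_cast at hn
    omega
  | succ n ih =>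
    intro Y hY hn
    by_cases hS : ∃ S : QuivRep K V A t h, TS σ S ∧ ¬ ExtZ S Y
    · obtain ⟨S0, hS, he⟩ := hS
      obtain ⟨ξ, hξ⟩ := nonsplit he
      have E := ses_ext S0 Y ξ
      have h1 := E.wt σ
      have h2 := hS.1.wt_pos hS.2.1
      push_cast at hn
      refine ((ih _ (ts_ff hS hY hξ) (by omega)).or (finIso_iso S0)).mono ?_
      rintro S' ⟨hS', he'⟩
      by_cases hz : HomZ S' S0
      · exact Or.inl ⟨hS', fun hE => he' (ext_of_hom E hz hE)⟩
      · right
        obtain ⟨u, hu⟩ := not_homZ.1 hz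
        obtain ⟨a, b⟩ := ts_ts hS' hS u hu
        exact iso_of_bij u a b
    · exact finIso_false.mono fun W hw => hS ⟨W, hw⟩

theorem fin_T : ∀ (n : ℕ) (X : QuivRep K V A t h), TT σ X → wt σ X ≤ n →
    FinIso (fun S : QuivRep K V A t h => TS σ S ∧ ¬ HomZ S X) := by
  intro n
  induction n with
  | zero =>
    intro X hX hn
    refine finIso_false.mono fun S hS => ?_
    obtain ⟨u, hu⟩ := not_homZ.1 hS.2
    have := hX.wt_pos (nz_of_not_isZ hu).2
    push_cast at hn
    omega
  | succ n ih =>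
    intro X hX hn
    by_cases hS : ∃ S : QuivRep K V A t h, TS σ S ∧ ¬ HomZ S X
    · obtain ⟨S0, hS, he⟩ := hS
      obtain ⟨f, hf⟩ := not_homZ.1 he
      have hk := ts_hom hS f hf
      have w1 := (ses_ker f).wt σ
      have w2 := (ses_cok f).wt σ
      have w3 := hS.1.wt_pos hS.2.1
      have w4 := hk.wt_le
      push_cast at hn
      refine (((ih (cokRep f) (hX.sur (cokπ_sur f)) (by omega)).or (finIso_iso S0)).or
        (fin_F (- wt σ (kerRep f)).toNat _ hk (by omega))).mono ?_
      rintro S' ⟨hS', he'⟩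
      obtain ⟨u, hu⟩ := not_homZ.1 he'
      by_cases hz : IsZ (u.comp (cokπ f))
      · obtain ⟨w, hw⟩ := (ses_cok f).lift u hz
        by_cases hE : ExtZ S' (kerRep f)
        · left; right
          obtain ⟨θ, hθ⟩ := lift_hom (ses_ker f) hE w
          obtain ⟨a, b⟩ := ts_ts hS' hS θ (fun h0 => hu fun i x => by
            rw [← hw, ← hθ, h0]; simp)
          exact iso_of_bij θ a b
        · exact Or.inr ⟨hS', hE⟩
      · exact Or.inl (Or.inl ⟨hS', fun h0 => hz (h0 _)⟩)
    · exact finIso_false.mono fun W hw => hS ⟨W, hw⟩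

theorem ts_fin [DecidableEq V] (hQ : Acyclic t h) :
    FinIso (fun S : QuivRep K V A t h => TS σ S) := by
  have : ∀ i : V, FinIso (fun S : QuivRep K V A t h => TS σ S ∧ 0 < σ i ∧
      ¬ HomZ S (simpleRep K t h i)) := by
    intro i
    by_cases hi : 0 < σ i
    · exact (fin_T (wt σ (simpleRep K t h i)).toNat _ (simple_tt hi)
        (Int.self_le_toNat _)).mono fun S hS => ⟨hS.1, hS.2.2⟩
    · exact finIso_false.mono fun S hS => hi hS.2.1
  refine (finIso_ex this).mono fun S hS => ?_
  obtain ⟨i, hi⟩ := hom_to_simple hQ hS.2.1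
  refine ⟨i, hS, ?_, hi⟩
  by_contra hc
  exact hi (homZ_tt_ff hS.1 (simple_ff (by omega)))

theorem ts_order [IsAlgClosed K] [DecidableEq V] (hQ : Acyclic t h)
    (H : FinIso (fun W : QuivRep K V A t h => ST σ W)) :
    ∃ (n : ℕ) (B : Fin n → QuivRep K V A t h) (L : List (Fin n)), (∀ j, TS σ (B j)) ∧
      (∀ X, TS σ X → ∃ j, RepIso K X (B j)) ∧ (∀ j k, j ≠ k → HomZ (B j) (B k)) ∧
      (∀ X, TT σ X → Nz X → ∃ j, ¬ HomZ (B j) X) ∧ L.Nodup ∧ (∀ j, j ∈ L) ∧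
      (L.Pairwise fun a b => ExtZ (B b) (B a)) ∧ ∀ j, ExtZ (B j) (B j) := by
  obtain ⟨n, B, h1, h2, h3⟩ := (ts_fin (K := K) (σ := σ) hQ).reps
  have hne : ∀ X, TT σ X → Nz X → ∃ j, ¬ HomZ (B j) X := fun X hX hn => by
      obtain ⟨W, hW, hf⟩ := ts_exists H hX hn
      obtain ⟨f, hf⟩ := not_homZ.1 hf
      obtain ⟨j, hj⟩ := h3 W hW
      obtain ⟨u, v, _, _, hv, _, h5, h6⟩ := iso_hom hj
      refine ⟨j, fun hz => hf fun i x => ?_⟩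
      have := hz (v.comp f) i (u.app i x)
      rw [comp_app, h5] at this
      exact this
  have hor : ∀ j k, j ≠ k → HomZ (B j) (B k) := fun j k hjk => by
      by_contra hc
      obtain ⟨f, hf⟩ := not_homZ.1 hc
      obtain ⟨a, b⟩ := ts_ts (h1 j) (h1 k) f hf
      exact h2 j k hjk (iso_of_bij f a b)
  obtain ⟨L, l0, l1, l2, l3⟩ := order_of_sink B (fun m g hg hm => sink (C := TT σ)
    (fun X ξ hX => tt_open hX ξ) B hne hor
    (fun j => (h1 j).brick) (fun j => (h1 j).2.1) g hg hm
    (pi_closed (C := TT σ) (fun X hX => tt_zero hX) (fun _ _ _ _ _ S a b => TT.ext S a b) m _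
      (fun j => (h1 _).1)))
  exact ⟨n, B, L, h1, h3, hor, hne, l0, l1, l2, l3⟩

end TSimple

section MK

variable [Fintype V] [Fintype A]
variable {X Y Z W S S' A' B' C' : QuivRep K V A t h} {f : RepHom A' B'} {g : RepHom B' C'} {σ : V → ℤ}

theorem homDim_of_vanish (T : SES f g) (H : ∀ (u : RepHom B' X) i x, u.app i (f.app i x) = 0) :
    homDim B' X = homDim C' X := by
  let F : homS C' X →ₗ[K] homS B' X :=
    { toFun := fun φ => ⟨fun i => (φ.1 i).comp (g.app i), fun a => by
        have h1 := φ.2 a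
        ext x
        have h2 := LinearMap.congr_fun h1 (g.app (t a) x)
        simp only [LinearMap.comp_apply] at h2 ⊢
        rw [← h2, hcomm]⟩
      map_add' := fun _ _ => rfl
      map_smul' := fun _ _ => rfl }
  have hF : Function.Bijective F := by
    constructor
    · intro φ ψ hφ
      apply Subtype.ext
      funext i
      ext y
      obtain ⟨x, rfl⟩ := T.sur i y
      exact LinearMap.congr_fun (congrFun (congrArg Subtype.val hφ) i) x
    · intro ψ
      obtain ⟨v, hv⟩ := T.desc ⟨ψ.1, fun a => ψ.2 a⟩ (H _)
      refine ⟨⟨v.app, fun a => v.comm a⟩, ?_⟩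
      apply Subtype.ext
      funext i
      ext x
      exact hv i x
  exact (LinearEquiv.ofBijective F hF).symm.finrank_eq

theorem homDim_brick (hb : Brick X) (hn : Nz X) : homDim X X = 1 := by
  have hid : (RepHom.idHom X).app ∈ homS X X := fun a => (RepHom.idHom X).comm a
  have hne : (⟨_, hid⟩ : homS X X) ≠ 0 := by
    intro h0
    obtain ⟨i, x, hx⟩ := hn
    have := congrFun (congrArg Subtype.val h0) i
    exact hx (LinearMap.congr_fun this x)
  refine (finrank_eq_one_iff_of_nonzero' _ hne).2 fun w => ?_
  obtain ⟨c, hc⟩ := hb ⟨w.1, fun a => w.2 a⟩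
  refine ⟨c, ?_⟩
  apply Subtype.ext
  funext i
  ext x
  exact (hc i x).symm

/-- Closure under extensions. -/
def ExtCl (P : QuivRep K V A t h → Prop) : Prop :=
  ∀ (A' B' C' : QuivRep K V A t h) (f : RepHom A' B') (g : RepHom B' C'), SES f g →
    P A' → P C' → P B'

theorem mk_exists {n : ℕ} (B : Fin n → QuivRep K V A t h) (L : List (Fin n)) (hnd : L.Nodup)
    (hL : ∀ j, j ∈ L) (hP : L.Pairwise fun a b => ExtZ (B b) (B a)) (hS : ∀ j, ExtZ (B j) (B j))
    (hor : ∀ j k, j ≠ k → HomZ (B j) (B k)) (hb : ∀ j, Brick (B j)) (hn : ∀ j, Nz (B j)) (k : Fin n) :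
    ∃ M : QuivRep K V A t h, (∀ j, ExtZ M (B j)) ∧ (∀ j, eu M (B j) = if j = k then 1 else 0) ∧
      M.IsExceptional ∧ ∀ P : QuivRep K V A t h → Prop, (∀ j, P (B j)) → ExtCl P → P M := by
  obtain ⟨L1, L2, rfl⟩ := List.append_of_mem (hL k)
  rw [List.pairwise_append] at hP
  obtain ⟨_, hP2, hP3⟩ := hP
  rw [List.pairwise_cons] at hP2
  have hk2 : k ∉ L2 := by
    have := (List.nodup_append.1 hnd).2.1
    exact (List.nodup_cons.1 this).1
  obtain ⟨M, ⟨m1, m2, m3, m4⟩, m5⟩ := univ B hS L2 hP2.2 (fun C =>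
    (∀ j, j ∉ L2 → ExtZ C (B j)) ∧ (∀ j, homDim C (B j) = if j = k then 1 else 0) ∧
    (∀ Z : QuivRep K V A t h, (∀ j, eu Z (B j) = if j = k then 1 else 0) → eu Z C = 1) ∧
    ∀ P : QuivRep K V A t h → Prop, (∀ j, P (B j)) → ExtCl P → P C) (by
      rintro l hl C ξ ⟨c1, c2, c3, c4⟩ hξ
      have E := ses_ext C (B l) ξ
      refine ⟨fun j hj => ext_mid_left E ?_ (c1 j hj), fun j => ?_, fun Z hZ => ?_,
        fun P h1 h2 => h2 _ _ _ _ _ E (h1 l) (c4 P h1 h2)⟩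
      · rcases List.mem_append.1 (hL j) with h | h
        · exact hP3 j h l (List.mem_cons_of_mem _ hl)
        · rcases List.mem_cons.1 h with rfl | h
          · exact hP2.1 l hl
          · exact absurd h hj
      · rw [homDim_of_vanish E, c2]
        intro u i x
        by_cases hj : l = j
        · subst hj
          obtain ⟨c, hc⟩ := hb l ((extι C (B l) ξ).comp u)
          by_cases h0 : c = 0
          · have := hc i x
            rw [h0, zero_smul] at this
            exact this
          · exfalso
            apply hξ
            refine ext_retr C (B l) ξ (mk' (fun i => c⁻¹ • u.app i) (fun a y => ?_)) (fun i y => ?_)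
            · rw [LinearMap.smul_apply, LinearMap.smul_apply, hcomm, map_smul]
            · change c⁻¹ • u.app i ((extι C (B l) ξ).app i y) = y
              have := hc i y
              rw [comp_app] at this
              rw [this, smul_smul, inv_mul_cancel₀ h0, one_smul]
        · exact hor l j hj ((extι C (B l) ξ).comp u) i x
      · rw [E.eu_right, c3 Z hZ, hZ l, if_neg, zero_add]
        rintro rfl
        exact hk2 hl) (B k)
    ⟨fun j hj => by
      rcases List.mem_append.1 (hL j) with h | h
      · exact hP3 j h k List.mem_cons_self
      · rcases List.mem_cons.1 h with rfl | h
        · exact hS _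
        · exact absurd h hj, fun j => by
      split_ifs with hj
      · subst hj
        exact homDim_brick (hb j) (hn j)
      · exact homZ_iff_dim.1 (hor k j (Ne.symm hj)), fun Z hZ => by rw [hZ k, if_pos rfl],
      fun P h1 _ => h1 k⟩
  have e1 : ∀ j, ExtZ M (B j) := fun j => by
    by_cases hj : j ∈ L2
    · exact m5 j hj
    · exact m1 j hj
  have e2 : ∀ j, eu M (B j) = if j = k then 1 else 0 := fun j => by
    rw [eu_of_ext (e1 j), m2]
    split_ifs <;> rfl
  have e3 : ExtZ M M := m4 (fun Y => ExtZ M Y) e1 (fun _ _ _ _ _ T h1 h2 => ext_mid_right T h1 h2)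
  refine ⟨M, e1, e2, ⟨extZ_iff_dim.1 e3, ?_⟩, m4⟩
  have := m3 M e2
  rw [eu_of_ext e3] at this
  exact_mod_cast this

end MK

section Step

variable [Fintype V] [Fintype A]
variable {X Y Z W S S' A' B' C' : QuivRep K V A t h} {f : RepHom A' B'} {g : RepHom B' C'}
variable {σ σ' : V → ℤ}

theorem fin_from : ∀ (n : ℕ) (G : QuivRep K V A t h), tdim G ≤ n → WW σ G →
    FinIso (fun E : QuivRep K V A t h => ST σ E ∧ ¬ HomZ G E) := by
  intro n
  induction n with
  | zero =>
    intro E h0 _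
    refine finIso_false.mono ?_
    rintro W ⟨_, hW⟩
    obtain ⟨f, hf⟩ := not_homZ.1 hW
    have := tdim_pos.2 (nz_of_not_isZ hf).1
    omega
  | succ n ih =>
    intro G hn hG
    by_cases hE : ∃ E0 : QuivRep K V A t h, ST σ E0 ∧ ¬ HomZ G E0
    · obtain ⟨E0, hs, hf⟩ := hE
      obtain ⟨f, hf⟩ := not_homZ.1 hf
      have T := ses_ker' f (ww_st_sur hs hG f hf)
      have ht := T.tdim
      have hp := tdim_pos.2 hs.2.1
      refine ((ih (kerRep f) (by omega) (ww_ker T hs.1 hG)).or (finIso_iso E0)).mono ?_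
      rintro W ⟨hW, hu⟩
      obtain ⟨u, hu⟩ := not_homZ.1 hu
      by_cases hk : IsZ ((kerι f).comp u)
      · right
        obtain ⟨v, hv⟩ := T.desc u hk
        have hvn : ¬ IsZ v := fun hv0 => hu fun i x => by rw [← hv, hv0]
        obtain ⟨h1, h2⟩ := st_st hs hW v hvn
        exact iso_symm (iso_of_bij v h1 h2)
      · exact Or.inl ⟨hW, fun hz => hk (hz _)⟩
    · exact finIso_false.mono fun W hw => hE ⟨W, hw⟩

theorem fin_to : ∀ (n : ℕ) (G : QuivRep K V A t h), tdim G ≤ n → WW σ G →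
    FinIso (fun E : QuivRep K V A t h => ST σ E ∧ ¬ HomZ E G) := by
  intro n
  induction n with
  | zero =>
    intro E h0 _
    refine finIso_false.mono ?_
    rintro W ⟨_, hW⟩
    obtain ⟨f, hf⟩ := not_homZ.1 hW
    have := tdim_pos.2 (nz_of_not_isZ hf).2
    omega
  | succ n ih =>
    intro G hn hG
    by_cases hE : ∃ E0 : QuivRep K V A t h, ST σ E0 ∧ ¬ HomZ E0 G
    · obtain ⟨E0, hs, hf⟩ := hE
      obtain ⟨f, hf⟩ := not_homZ.1 hf
      have T := ses_cok' f (st_ww_inj hs hG f hf)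
      have ht := T.tdim
      have hp := tdim_pos.2 hs.2.1
      refine ((ih (cokRep f) (by omega) (ww_cok T hs.1 hG)).or (finIso_iso E0)).mono ?_
      rintro W ⟨hW, hu⟩
      obtain ⟨u, hu⟩ := not_homZ.1 hu
      by_cases hk : IsZ (u.comp (cokπ f))
      · right
        obtain ⟨v, hv⟩ := T.lift u hk
        have hvn : ¬ IsZ v := fun hv0 => hu fun i x => by rw [← hv, hv0]; simp
        obtain ⟨h1, h2⟩ := st_st hW hs v hvn
        exact iso_of_bij v h1 h2
      · exact Or.inl ⟨hW, fun hz => hk (hz _)⟩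
    · exact finIso_false.mono fun W hw => hE ⟨W, hw⟩

theorem ww_to_st : ∀ X : QuivRep K V A t h, WW σ X → ∀ (E : QuivRep K V A t h), ¬ HomZ E X →
    ∃ W : QuivRep K V A t h, ST σ W ∧ ¬ HomZ E W := by
  refine ww_ind (fun X hX E hE => ?_) (fun W0 X X2 f g T hs _ ih E hE => ?_)
  · obtain ⟨u, hu⟩ := not_homZ.1 hE
    exact absurd (nz_of_not_isZ hu).2 hX
  · obtain ⟨u, hu⟩ := not_homZ.1 hE
    by_cases hz : IsZ (u.comp g)
    · obtain ⟨v, hv⟩ := T.lift u hz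
      exact ⟨W0, hs, fun h0 => hu fun i x => by rw [← hv, h0]; simp⟩
    · exact ih E fun h0 => hz (h0 _)

/-- Data for the reduction step. -/
structure Ctx (σ σ' : V → ℤ) {n : ℕ} (B M : Fin n → QuivRep K V A t h) : Prop where
  ts : ∀ j, TS σ (B j)
  hne : ∀ X, TT σ X → Nz X → ∃ j, ¬ HomZ (B j) X
  ext : ∀ k j, ExtZ (M k) (B j)
  eu : ∀ k j, eu (M k) (B j) = if j = k then 1 else 0
  filt : ∀ k, ∀ P : QuivRep K V A t h → Prop, (∀ j, P (B j)) → ExtCl P → P (M k)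
  wt' : ∀ X : QuivRep K V A t h, wt σ' X = wt σ X - ∑ k, wt σ (B k) * QR.eu (M k) X

variable {n : ℕ} {B M : Fin n → QuivRep K V A t h}

theorem Ctx.tt (H : Ctx σ σ' B M) (k : Fin n) : TT σ (M k) :=
  H.filt k _ (fun j => (H.ts j).1) (fun _ _ _ _ _ T h1 h2 => TT.ext T h1 h2)

theorem Ctx.ext_of (H : Ctx σ σ' B M) (hY : ∀ j, ExtZ (B j) Y) (k : Fin n) : ExtZ (M k) Y :=
  H.filt k (fun Z => ExtZ Z Y) hY (fun _ _ _ _ _ T h1 h2 => ext_mid_left T h1 h2)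

theorem Ctx.ext_to (H : Ctx σ σ' B M) (hY : ∀ j, ExtZ Y (B j)) (k : Fin n) : ExtZ Y (M k) :=
  H.filt k (fun Z => ExtZ Y Z) hY (fun _ _ _ _ _ T h1 h2 => ext_mid_right T h1 h2)

theorem Ctx.wtB (H : Ctx σ σ' B M) (j : Fin n) : wt σ' (B j) = 0 := by
  rw [H.wt', Finset.sum_eq_single j]
  · rw [H.eu, if_pos rfl]; ring
  · intro k _ hk
    rw [H.eu, if_neg hk.symm, mul_zero]
  · simp

theorem Ctx.wt_ext (H : Ctx σ σ' B M) (hY : FF σ Y) (hE : ∀ j, ExtZ (B j) Y) :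
    wt σ' Y = wt σ Y := by
  rw [H.wt', Finset.sum_eq_zero, sub_zero]
  intro k _
  rw [eu_of_ext (H.ext_of hE k), homZ_iff_dim.1 (homZ_tt_ff (H.tt k) hY)]
  simp

theorem Ctx.env (H : Ctx σ σ' B M) : ∀ (N : ℕ) (Y : QuivRep K V A t h), FF σ Y → - wt σ Y ≤ N →
    ∃ (C : QuivRep K V A t h) (u : RepHom Y C), Inj u ∧ FF σ C ∧ wt σ' C = wt σ' Y ∧
      wt σ' C = wt σ C := by
  intro N
  induction N with
  | zero =>
    intro Y hY hN
    refine ⟨Y, RepHom.idHom Y, Inj.id, hY, rfl, H.wt_ext hY fun j => ts_ext_ww (H.ts j) ⟨?_, hY⟩⟩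
    have := hY.wt_le
    push_cast at hN
    omega
  | succ N ih =>
    intro Y hY hN
    by_cases hE : ∀ j, ExtZ (B j) Y
    · exact ⟨Y, RepHom.idHom Y, Inj.id, hY, rfl, H.wt_ext hY hE⟩
    · push Not at hE
      obtain ⟨j, hj⟩ := hE
      obtain ⟨ξ, hξ⟩ := nonsplit hj
      have E := ses_ext (B j) Y ξ
      have w1 := E.wt σ
      have w2 := E.wt σ'
      have w3 := H.wtB j
      have w4 := (H.ts j).1.wt_pos (H.ts j).2.1
      push_cast at hN
      obtain ⟨C, u, h1, h2, h3, h4⟩ := ih _ (ts_ff (H.ts j) hY hξ) (by omega)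
      exact ⟨C, (extι (B j) Y ξ).comp u, E.inj.comp h1, h2, by omega, h4⟩

theorem Ctx.ff_wt (H : Ctx σ σ' B M) (hY : FF σ Y) : wt σ' Y ≤ 0 := by
  obtain ⟨C, u, _, h2, h3, h4⟩ := H.env (- wt σ Y).toNat Y hY (by omega)
  have := h2.wt_le
  omega

theorem Ctx.tt_wt (H : Ctx σ σ' B M) : ∀ (N : ℕ) (X : QuivRep K V A t h), TT σ X → wt σ X ≤ N →
    0 ≤ wt σ' X ∧ ∀ k, ExtZ (M k) X := by
  intro N
  induction N with
  | zero =>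
    intro X hX hN
    have hn : ¬ Nz X := fun hn => by
      have := hX.wt_pos hn
      push_cast at hN
      omega
    refine ⟨(wt_of_not_nz hn σ').ge, fun k => ?_⟩
    refine ext_post_sur (g := zeroHom (M k) X) (fun i x => ⟨0, ?_⟩)
      (H.ext_to (fun j => H.ext k j) k)
    by_contra hc
    exact hn ⟨i, x, fun h0 => hc (by rw [h0]; simp)⟩
  | succ N ih =>
    intro X hX hN
    by_cases hn : Nz X
    · obtain ⟨j, hj⟩ := H.hne X hX hn
      obtain ⟨f, hf⟩ := not_homZ.1 hj
      have hk := ts_hom (H.ts j) f hf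
      have w1 := (ses_ker f).wt σ
      have w2 := (ses_cok f).wt σ
      have w1' := (ses_ker f).wt σ'
      have w2' := (ses_cok f).wt σ'
      have w3 := (H.ts j).1.wt_pos (H.ts j).2.1
      have w4 := hk.wt_le
      have w5 := H.ff_wt hk
      have w6 := H.wtB j
      push_cast at hN
      obtain ⟨i1, i2⟩ := ih (cokRep f) (hX.sur (cokπ_sur f)) (by omega)
      exact ⟨by omega, fun k => ext_mid_right (ses_cok f)
        (ext_post_sur (imπ_sur f) (H.ext k j)) (i2 k)⟩
    · exact ih X hX (by rw [wt_of_not_nz hn]; positivity)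

theorem Ctx.wt_tt (H : Ctx σ σ' B M) (hX : TT σ X) : 0 ≤ wt σ' X :=
  (H.tt_wt (wt σ X).toNat X hX (Int.self_le_toNat _)).1

theorem Ctx.ext_tt (H : Ctx σ σ' B M) (hX : TT σ X) (k : Fin n) : ExtZ (M k) X :=
  (H.tt_wt (wt σ X).toNat X hX (Int.self_le_toNat _)).2 k

theorem Ctx.tt_tt (H : Ctx σ σ' B M) (hX : TT σ' X) : TT σ X := by
  obtain ⟨T, F, f, g, E, hT, hF⟩ := torsion σ X
  have hn : ¬ Nz F := fun hn => by
    have := (hX.sur E.sur).wt_pos hn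
    have := H.ff_wt hF
    omega
  refine hT.iso (iso_of_bij f E.inj fun i x => E.ex i x ?_)
  by_contra hc
  exact hn ⟨i, _, hc⟩

theorem Ctx.ff_ff (H : Ctx σ σ' B M) (hX : FF σ X) : FF σ' X :=
  fun _ _ hf => H.ff_wt (hX.inj hf)

theorem Ctx.ww_ww (H : Ctx σ σ' B M) (hX : WW σ X) : WW σ' X :=
  ⟨by rw [H.wt_ext hX.2 fun j => ts_ext_ww (H.ts j) hX, hX.1], H.ff_ff hX.2⟩

theorem Ctx.wwB (H : Ctx σ σ' B M) (j : Fin n) : WW σ' (B j) := by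
  refine ⟨H.wtB j, fun Y f hf => ?_⟩
  have w1 := (ses_cok' f hf).wt σ'
  have w2 := H.wtB j
  have w3 := H.wt_tt ((H.ts j).1.sur (cokπ_sur f))
  omega

theorem Ctx.fin (H : Ctx σ σ' B M) (hf : FinIso (fun W : QuivRep K V A t h => ST σ W)) :
    FinIso (fun W : QuivRep K V A t h => ST σ' W) := by
  obtain ⟨m, D, d1, _, d3⟩ := hf.reps
  refine ((finIso_ex fun j : Fin n => fin_from (tdim (B j)) (B j) le_rfl (H.wwB j)).or
    (finIso_ex fun j : Fin m => fin_to (tdim (D j)) (D j) le_rfl (H.ww_ww (d1 j).ww))).mono ?_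
  intro E hE
  obtain ⟨T, F, f, g, T', hT, hF⟩ := torsion σ E
  by_cases hs : Sur f
  · left
    obtain ⟨j, hj⟩ := H.hne E (hT.iso (iso_of_bij f T'.inj hs)) hE.2.1
    exact ⟨j, hE, hj⟩
  · right
    have hTz : ¬ Nz T := fun hn => by
      have := hE.2.2 T f T'.inj hn hs
      have := H.wt_tt hT
      omega
    have hgi : Inj g := (inj_iff g).2 fun i x hx => by
      obtain ⟨y, rfl⟩ := T'.ex i x hx
      have : y = 0 := by
        by_contra hy
        exact hTz ⟨i, y, hy⟩
      rw [this, map_zero]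
    have hEF := hF.inj hgi
    obtain ⟨C, u, h1, h2, h3, h4⟩ := H.env (- wt σ E).toNat E hEF (by omega)
    have hw := hE.1
    obtain ⟨W, hW, hn⟩ := ww_to_st C ⟨by omega, h2⟩ E (fun h0 => by
      obtain ⟨i, x, hx⟩ := hE.2.1
      exact hx (h1 i (by rw [h0 u, map_zero])))
    obtain ⟨j, hj⟩ := d3 W hW
    obtain ⟨a, _, ha, _⟩ := iso_hom hj
    obtain ⟨v, hv⟩ := not_homZ.1 hn
    exact ⟨j, hE, fun h0 => hv fun i x => ha i (by
      rw [map_zero]; exact h0 (v.comp a) i x)⟩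

end Step

section Forward

variable [Fintype V] [Fintype A] [DecidableEq V]

theorem eulerZ_sum {ι : Type} (s : Finset ι) (f : ι → ℤ) (x : ι → V → ℤ) (y : V → ℤ) :
    eulerForm t h (∑ c ∈ s, f c • x c) y = ∑ c ∈ s, f c * eulerForm t h (x c) y := by
  classical
  induction s using Finset.induction_on with
  | empty => simp [eulerForm]
  | insert a s ha ih =>
    rw [Finset.sum_insert ha, Finset.sum_insert ha, eulerForm_add, eulerForm_smul, ih]

/-- The conclusion of the main induction. -/
def Good (K : Type) [Field K] (t h : A → V) (α : V → ℤ) : Prop :=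
  ∃ (ι : Type) (_ : Fintype ι) (N : ι → QuivRep K V A t h) (c : ι → ℤ) (m : V → ℤ),
    (∀ p, 0 ≤ c p) ∧ (∀ p, (N p).IsExceptional) ∧ (∀ p, TT (weightL t h α) (N p)) ∧
    (∀ p W, WW (weightL t h α) W → ExtZ (N p) W) ∧ (∀ p q, ExtZ (N p) (N q)) ∧ (∀ i, 0 ≤ m i) ∧
    (∀ i, m i ≠ 0 → (∀ p, (N p).dimVec i = 0) ∧
      ∀ W : QuivRep K V A t h, WW (weightL t h α) W → W.dimVec i = 0) ∧
    α = ∑ p, c p • natZ (N p).dimVec - ∑ i, m i • natZ (gammaRoot t h i)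

/-- The span of dimension vectors of semistable representations. -/
def Dsp (K : Type) [Field K] (t h : A → V) (σ : V → ℤ) : Submodule ℚ (V → ℚ) :=
  Submodule.span ℚ {x | ∃ W : QuivRep K V A t h, WW σ W ∧ x = natQ W.dimVec}

theorem good_base (hQ : Acyclic t h) (α : V → ℤ)
    (H : ∀ X : QuivRep K V A t h, TT (weightL t h α) X → ¬ Nz X) : Good K t h α := by
  have hσ : ∀ i, weightL t h α i ≤ 0 := fun i => by
    by_contra hc
    exact H _ (simple_tt (K := K) (not_le.1 hc)) (simple_nz i)
  refine ⟨Empty, inferInstance, Empty.elim, Empty.elim, fun i => - weightL t h α i, ?_, ?_, ?_, ?_,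
    ?_, fun i => neg_nonneg.2 (hσ i), fun i hi => ⟨fun p => p.elim, fun W hW => ?_⟩, ?_⟩
  · rintro ⟨⟩
  · rintro ⟨⟩
  · rintro ⟨⟩
  · rintro ⟨⟩
  · rintro ⟨⟩
  · have h1 := hW.1
    unfold wt at h1
    have h2 := (Finset.sum_eq_zero_iff_of_nonpos (fun j _ =>
      mul_nonpos_of_nonpos_of_nonneg (hσ j) (Int.natCast_nonneg _))).1 h1 i (Finset.mem_univ i)
    rcases mul_eq_zero.1 h2 with h3 | h3
    · exact absurd (neg_eq_zero.2 h3) hi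
    · exact_mod_cast h3
  · apply weightL_inj hQ
    funext i
    have : (∑ p : Empty, (Empty.elim p : ℤ) • natZ (QuivRep.dimVec (Empty.elim p :
        QuivRep K V A t h)) - ∑ i, (- weightL t h α i) • natZ (gammaRoot t h i)) =
        ∑ i, (weightL t h α i) • natZ (gammaRoot t h i) := by
      simp
    rw [this]
    conv_rhs => unfold weightL
    rw [eulerZ_sum]
    simp only [euler_gamma hQ]
    simp [weightL]

theorem good_step [IsAlgClosed K] (hQ : Acyclic t h) (α : V → ℤ)
    (hf : FinIso (fun W : QuivRep K V A t h => ST (weightL t h α) W))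
    {X : QuivRep K V A t h} (hX : TT (weightL t h α) X) (hn : Nz X)
    (IH : ∀ α' : V → ℤ, Dsp K t h (weightL t h α) < Dsp K t h (weightL t h α') →
      FinIso (fun W : QuivRep K V A t h => ST (weightL t h α') W) → Good K t h α') :
    Good K t h α := by
  obtain ⟨n, B, L, b1, b2, b3, b4, b5, b6, b7, b8⟩ := ts_order hQ hf
  choose M m1 m2 m3 m4 using fun k => mk_exists B L b5 b6 b7 b8 b3 (fun j => (b1 j).brick)
    (fun j => (b1 j).2.1) k
  set σ := weightL t h α with hσ
  set α' : V → ℤ := α - ∑ k, wt σ (B k) • natZ (M k).dimVec with hα'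
  have hαα : α = α' + ∑ k, wt σ (B k) • natZ (M k).dimVec := by rw [hα']; abel
  have H : Ctx σ (weightL t h α') B M := by
    refine ⟨b1, b4, m1, m2, m4, fun Y => ?_⟩
    have h1 : wt σ Y = eulerForm t h α' (natZ Y.dimVec) + ∑ k, wt σ (B k) * eu (M k) Y := by
      conv_lhs => rw [hσ, wt_weightL, hαα, eulerForm_add, eulerZ_sum]
      rfl
    rw [wt_weightL, h1]
    ring
  obtain ⟨j0, _⟩ := b4 X hX hn
  have hlt : Dsp K t h σ < Dsp K t h (weightL t h α') := by
    refine lt_of_le_of_ne ?_ fun he => ?_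
    · refine Submodule.span_mono ?_
      rintro x ⟨W, hW, rfl⟩
      exact ⟨W, H.ww_ww hW, rfl⟩
    · have h1 : natQ (B j0).dimVec ∈ Dsp K t h σ := by
        rw [he]
        exact Submodule.subset_span ⟨_, H.wwB j0, rfl⟩
      let φ : (V → ℚ) →ₗ[ℚ] ℚ := ∑ i, (σ i : ℚ) • LinearMap.proj i
      have hφ : ∀ Y : QuivRep K V A t h, φ (natQ Y.dimVec) = (wt σ Y : ℚ) := by
        intro Y
        simp [φ, wt, natQ, LinearMap.sum_apply]
      have h2 : Dsp K t h σ ≤ LinearMap.ker φ := by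
        refine Submodule.span_le.2 ?_
        rintro x ⟨W, hW, rfl⟩
        change φ _ = 0
        rw [hφ, hW.1]; rfl
      have h3 : φ (natQ (B j0).dimVec) = 0 := h2 h1
      rw [hφ] at h3
      have h4 := (b1 j0).1.wt_pos (b1 j0).2.1
      have h5 : wt σ (B j0) = 0 := by exact_mod_cast h3
      omega
  obtain ⟨ι, _, N, c, m, g1, g2, g3, g4, g5, g6, g7, g8⟩ := IH α' hlt (H.fin hf)
  refine ⟨ι ⊕ Fin n, inferInstance, Sum.elim N M, Sum.elim c (fun k => wt σ (B k)), m, ?_, ?_, ?_,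
    ?_, ?_, g6, fun i hi => ⟨?_, fun W hW => (g7 i hi).2 W (H.ww_ww hW)⟩, ?_⟩
  · rintro (p | k)
    · exact g1 p
    · exact (b1 k).1.wt_nonneg
  · rintro (p | k)
    · exact g2 p
    · exact m3 k
  · rintro (p | k)
    · exact H.tt_tt (g3 p)
    · exact H.tt k
  · rintro (p | k) W hW
    · exact g4 p W (H.ww_ww hW)
    · exact H.ext_of (fun j => ts_ext_ww (b1 j) hW) k
  · rintro (p | k) (q | l)
    · exact g5 p q
    · exact H.ext_to (fun j => g4 p _ (H.wwB j)) l
    · exact H.ext_tt (H.tt_tt (g3 q)) k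
    · exact H.ext_tt (H.tt l) k
  · rintro (p | k)
    · exact (g7 i hi).1 p
    · refine m4 k (fun Y => Y.dimVec i = 0) (fun j => (g7 i hi).2 _ (H.wwB j)) ?_
      intro _ _ _ _ _ T h1 h2
      rw [T.dimVec, h1, h2]
  · rw [Fintype.sum_sum_type]
    simp only [Sum.elim_inl, Sum.elim_inr]
    conv_lhs => rw [hαα, g8]
    abel

theorem good_all [IsAlgClosed K] (hQ : Acyclic t h) : ∀ (D : Submodule ℚ (V → ℚ)) (α : V → ℤ),
    Dsp K t h (weightL t h α) = D →
    FinIso (fun W : QuivRep K V A t h => ST (weightL t h α) W) → Good K t h α := by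
  intro D
  induction D using WellFoundedGT.induction with
  | ind D ih =>
    intro α hD hf
    by_cases H : ∀ X : QuivRep K V A t h, TT (weightL t h α) X → ¬ Nz X
    · exact good_base hQ α H
    · push Not at H
      obtain ⟨X, hX, hn⟩ := H
      exact good_step hQ α hf hX hn fun α' hlt hf' => ih _ (hD ▸ hlt) α' rfl hf'

theorem cone_add {C : Finset (V → ℤ)} {x y : V → ℚ} (hx : x ∈ coneOf C) (hy : y ∈ coneOf C) :
    x + y ∈ coneOf C := by
  obtain ⟨l, h1, rfl⟩ := hx
  obtain ⟨l', h2, rfl⟩ := hy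
  refine ⟨fun c => l c + l' c, fun c => add_nonneg (h1 c) (h2 c), ?_⟩
  rw [← Finset.sum_add_distrib]
  exact Finset.sum_congr rfl fun c _ => (add_smul _ _ _).symm

theorem cone_zero (C : Finset (V → ℤ)) : (0 : V → ℚ) ∈ coneOf C :=
  ⟨0, fun _ => le_rfl, by simp⟩

theorem cone_single {C : Finset (V → ℤ)} {c : V → ℤ} (hc : c ∈ C) {q : ℚ} (hq : 0 ≤ q) :
    q • intQ c ∈ coneOf C := by
  classical
  refine ⟨fun d => if d = c then q else 0, fun d => ?_, ?_⟩
  · dsimp only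
    split_ifs
    · exact hq
    · exact le_rfl
  · rw [Finset.sum_eq_single c]
    · simp
    · intro d _ hd
      simp only [if_neg hd, zero_smul]
    · intro h; exact absurd hc h

theorem cone_sum {C : Finset (V → ℤ)} {ι : Type} (s : Finset ι) (x : ι → V → ℚ)
    (H : ∀ i ∈ s, x i ∈ coneOf C) : ∑ i ∈ s, x i ∈ coneOf C :=
  Finset.sum_induction x (fun y => y ∈ coneOf C) (fun _ _ => cone_add) (cone_zero C) H

theorem gamma_self (hQ : Acyclic t h) (i : V) : 0 < gammaRoot t h i i := by
  rw [gamma_rec hQ, if_pos rfl]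
  omega

theorem gamma_inj (hQ : Acyclic t h) {i j : V} (H : gammaRoot t h i = gammaRoot t h j) : i = j := by
  have h1 := euler_gamma hQ i (fun k => if k = j then 1 else 0)
  have h2 := euler_gamma hQ j (fun k => if k = j then 1 else 0)
  rw [H, h2] at h1
  by_contra hc
  simp [hc] at h1

theorem good_cone (hQ : Acyclic t h) (α : V → ℤ) (H : Good K t h α) :
    ∃ C : Finset (V → ℤ), IsCompatible K t h C ∧ intQ α ∈ coneOf C := by
  classical
  obtain ⟨ι, _, N, c, m, g1, g2, _, _, g5, g6, g7, g8⟩ := H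
  let C : Finset (V → ℤ) := Finset.univ.image (fun p => natZ (N p).dimVec) ∪
    (Finset.univ.filter fun i => m i ≠ 0).image (fun i j => -(gammaRoot t h i j : ℤ))
  have hC : ∀ x, x ∈ C ↔ (∃ p, x = natZ (N p).dimVec) ∨
      ∃ i, m i ≠ 0 ∧ x = fun j => -(gammaRoot t h i j : ℤ) := by
    intro x
    simp only [C, Finset.mem_union, Finset.mem_image, Finset.mem_filter, Finset.mem_univ, true_and]
    constructor
    · rintro (⟨p, h⟩ | ⟨i, hi, h⟩)
      · exact Or.inl ⟨p, h.symm⟩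
      · exact Or.inr ⟨i, hi, h.symm⟩
    · rintro (⟨p, h⟩ | ⟨i, hi, h⟩)
      · exact Or.inl ⟨p, h.symm⟩
      · exact Or.inr ⟨i, hi, h.symm⟩
  have hne : ∀ (β : V → ℕ) (i : V), natZ β ≠ fun j => -(gammaRoot t h i j : ℤ) := by
    intro β i he
    have h1 := congrFun he i
    have h2 := gamma_self hQ i
    simp only [natZ] at h1
    omega
  have hnz : ∀ β β' : V → ℕ, natZ β = natZ β' → β = β' := by
    intro β β' he
    funext i
    have := congrFun he i
    simp only [natZ] at this
    omega
  have hC1 : ∀ β : V → ℕ, natZ β ∈ C → ∃ p, β = (N p).dimVec := by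
    intro β hβ
    rcases (hC _).1 hβ with ⟨p, hp⟩ | ⟨i, _, hi⟩
    · exact ⟨p, hnz _ _ hp⟩
    · exact absurd hi (hne β i)
  refine ⟨C, ⟨fun x hx => ?_, fun x hx y hy _ => ⟨fun β₁ β₂ _ _ e1 e2 => ?_,
    fun β i _ e1 e2 => ?_⟩⟩, ?_⟩
  · rcases (hC x).1 hx with ⟨p, rfl⟩ | ⟨i, _, hi⟩
    · exact Or.inl ⟨_, ⟨N p, rfl, g2 p⟩, rfl⟩
    · exact Or.inr ⟨i, hi⟩
  · obtain ⟨p, rfl⟩ := hC1 β₁ (e1 ▸ hx)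
    obtain ⟨q, rfl⟩ := hC1 β₂ (e2 ▸ hy)
    exact Nat.le_zero.1 (Nat.sInf_le ⟨N p, N q, rfl, rfl, extZ_iff_dim.1 (g5 p q)⟩)
  · obtain ⟨p, rfl⟩ := hC1 β (e1 ▸ hx)
    rcases (hC y).1 hy with ⟨q, hq⟩ | ⟨i', hi', hy'⟩
    · exact absurd (hq.symm.trans e2) (hne _ i)
    · have : i = i' := gamma_inj hQ (by
        funext j
        have := congrFun (e2.symm.trans hy') j
        omega)
      subst this
      exact (g7 i hi').1 p
  · have h1 : intQ α = ∑ p, (c p : ℚ) • intQ (natZ (N p).dimVec) +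
        ∑ i, (m i : ℚ) • intQ (fun j => -(gammaRoot t h i j : ℤ)) := by
      conv_lhs => rw [g8]
      funext v
      simp [intQ, natZ, Finset.sum_apply, sub_eq_add_neg]
    rw [h1]
    refine cone_add (cone_sum _ _ fun p _ => cone_single ((hC _).2 (Or.inl ⟨p, rfl⟩))
      (by exact_mod_cast g1 p)) (cone_sum _ _ fun i _ => ?_)
    by_cases hi : m i = 0
    · rw [hi]
      simpa using cone_zero C
    · exact cone_single ((hC _).2 (Or.inr ⟨i, hi, rfl⟩)) (by exact_mod_cast g6 i)

theorem final [IsAlgClosed K] (hQ : Acyclic t h) (α : V → ℤ) :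
    (∃ (n : ℕ) (E : Fin n → QuivRep K V A t h),
      ∀ W, IsStable K (weightL t h α) W → ∃ j, RepIso K W (E j)) ↔
    (∃ C : Finset (V → ℤ), IsCompatible K t h C ∧ intQ α ∈ coneOf C) := by
  rw [finIso_iff]
  constructor
  · intro hf
    exact good_cone hQ α (good_all hQ _ α rfl hf)
  · rintro ⟨C, hC, hα⟩
    exact back hQ α C hC hα

end Forward

end Main

end QR

/-- For `σ = ⟨α,·⟩` there are finitely many isomorphism classes of
`σ`-stable representations iff `α ∈ Cone(C)` for some compatible subset `C` of
`Ψ(Q)_{≥ −1}`. -/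
theorem stmt10 [IsAlgClosed K] [CharZero K] (t h : A → V) (hQ : Acyclic t h)
    (α : V → ℤ) :
    (∃ (n : ℕ) (E : Fin n → QuivRep K V A t h),
        ∀ W : QuivRep K V A t h, IsStable K (weightL t h α) W → ∃ j, RepIso K W (E j)) ↔
      (∃ C : Finset (V → ℤ), IsCompatible K t h C ∧ intQ α ∈ coneOf C) := by
  exact QR.final hQ α

end
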